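/- arXiv:1610.07680 — 3 statements merged into one kernel-verified Lean document; each statement's English description precedes it below -/
import Mathlib

section
/- Let $R \subseteq \mathbb{Q}$ be finite and let $N, d, t \in \mathbb{N}$ with $N > |R|^d + 3d$. Let $x \in R^N$ be a sequence whose space of $d$-windows $V$ satisfies $\dim(V) = t < d$. Then the restricted sequence $x' = (x(n))_{n=d}^{N-d}$ can be written as $x' = x_1 + \cdots + x_t$ where each $x_i \in \mathbb{C}^{[d, N-d]}$ is periodic with period at most $16 t \log\log(t+3)$. -/
lemma aux_pow_dvd (p k : ℕ) (hp : 1 ≤ p) : p ^ k ∣ (p * k).factorial := by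
  induction k with
  | zero => simp
  | succ k ih =>
    obtain ⟨m, hm⟩ : ∃ m, p * (k + 1) = m + 1 := ⟨p * (k+1) - 1, by
      have : 1 ≤ p * (k+1) := Nat.mul_pos hp (by omega)
      omega⟩
    have h1 : p * k ≤ m := by nlinarith
    have h2 := ih.trans (Nat.factorial_dvd_factorial h1)
    rw [hm, Nat.factorial_succ, ← hm, pow_succ, mul_comm (p ^ k)]
    exact mul_dvd_mul (dvd_mul_right _ _) h2

lemma aux_mertens (n : ℕ) (hn : 1 ≤ n) :
    ∑ p ∈ Nat.primesLE n, Real.log p / p ≤ Real.log n + Real.log 4 := by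
  have hpr : ∀ p ∈ Nat.primesLE n, p.Prime := fun p hp => (Nat.mem_primesLE.1 hp).2
  have hdvd : ∏ p ∈ Nat.primesLE n, p ^ (n / p) ∣ n.factorial := by
    apply Finset.prod_dvd_of_isRelPrime
    · intro p hp q hq hpq
      rw [Function.onFun, ← Nat.coprime_iff_isRelPrime]
      exact Nat.Coprime.pow _ _ ((Nat.coprime_primes (hpr p hp) (hpr q hq)).2 hpq)
    · intro p hp
      exact (aux_pow_dvd p (n / p) (hpr p hp).one_le).trans
        (Nat.factorial_dvd_factorial (Nat.mul_div_le n p))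
  have hle : (∏ p ∈ Nat.primesLE n, p ^ (n / p)) ≤ n ^ n :=
    (Nat.le_of_dvd (Nat.factorial_pos n) hdvd).trans (Nat.factorial_le_pow n)
  have hlog : ∑ p ∈ Nat.primesLE n, ((n / p : ℕ) : ℝ) * Real.log p ≤ n * Real.log n := by
    have h1 : Real.log ((∏ p ∈ Nat.primesLE n, p ^ (n / p) : ℕ) : ℝ) ≤ Real.log ((n ^ n : ℕ) : ℝ) := by
      apply Real.log_le_log
      · exact_mod_cast Finset.prod_pos fun p hp => pow_pos (hpr p hp).pos _
      · exact_mod_cast hle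
    push_cast at h1
    rw [Real.log_pow, Real.log_prod (fun p hp => by
      have := (hpr p hp).ne_zero
      positivity)] at h1
    simpa [Real.log_pow] using h1
  have hth := Chebyshev.theta_le_log4_mul_x (x := n) (by positivity)
  rw [Chebyshev.theta_eq_sum_primesLE_log] at hth
  have hkey : (n : ℝ) * ∑ p ∈ Nat.primesLE n, Real.log p / p ≤
      ∑ p ∈ Nat.primesLE n, ((n / p : ℕ) : ℝ) * Real.log p + ∑ p ∈ Nat.primesLE n, Real.log p := by
    rw [Finset.mul_sum, ← Finset.sum_add_distrib]
    apply Finset.sum_le_sum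
    intro p hp
    have h0 : 0 ≤ Real.log p := Real.log_natCast_nonneg p
    have h1 : (n : ℝ) / p ≤ ((n / p : ℕ) : ℝ) + 1 := by
      have := Nat.lt_floor_add_one ((n : ℝ) / p)
      rw [Nat.floor_div_eq_div] at this
      exact this.le
    calc (n : ℝ) * (Real.log p / p) = (n / p) * Real.log p := by ring
      _ ≤ (((n / p : ℕ) : ℝ) + 1) * Real.log p := by gcongr
      _ = _ := by ring
  have hn' : (0 : ℝ) < n := by exact_mod_cast hn
  nlinarith

lemma aux_zeta (s : ℝ) (hs : 1 < s) (P : Finset ℕ) (hP : ∀ p ∈ P, p.Prime) :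
    ∏ p ∈ P, (1 - (p : ℝ) ^ (-s))⁻¹ ≤ 1 + 1 / (s - 1) := by
  let f : ℕ →* ℝ :=
    { toFun := fun n => (n : ℝ) ^ (-s)
      map_one' := by simp
      map_mul' := fun a b => by
        push_cast
        exact Real.mul_rpow (by positivity) (by positivity) }
  have hsum : Summable f := by
    have := (Real.summable_nat_rpow (p := -s)).2 (by linarith)
    exact this
  have h := EulerProduct.prod_filter_prime_geometric_eq_tsum_factoredNumbers hsum P
  rw [Finset.filter_true_of_mem hP] at h
  have hf : ∀ p, f p = (p : ℝ) ^ (-s) := fun p => rfl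
  simp only [hf] at h
  rw [h]
  have h2 : ∑' m : Nat.factoredNumbers P, ((m : ℕ) : ℝ) ^ (-s) ≤ ∑' n : ℕ, 1 / ((n : ℝ) + 1) ^ s := by
    have hsum2 : Summable fun n : ℕ => 1 / ((n : ℝ) + 1) ^ s := by
      have := (summable_nat_add_iff 1).2 hsum
      refine this.congr fun n => ?_
      rw [hf, Real.rpow_neg (by positivity)]
      push_cast
      rw [one_div]
    refine Summable.tsum_le_tsum_of_inj (fun m => (m : ℕ) - 1) ?_ ?_ ?_ ?_ hsum2
    · intro a b hab
      have h1 := Nat.pos_of_ne_zero (Nat.ne_zero_of_mem_factoredNumbers a.2)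
      have h2 := Nat.pos_of_ne_zero (Nat.ne_zero_of_mem_factoredNumbers b.2)
      simp only at hab
      apply Subtype.ext
      omega
    · intro c _
      positivity
    · intro a
      have h1 := Nat.pos_of_ne_zero (Nat.ne_zero_of_mem_factoredNumbers a.2)
      rw [Nat.cast_sub h1, Real.rpow_neg (by positivity), one_div]
      simp
    · exact hsum.subtype _
  have h3 := ZetaAsymptotics.zeta_limit_aux1 hs
  have h4 : 0 ≤ ZetaAsymptotics.termTSum s := by
    rw [ZetaAsymptotics.termTSum]
    exact tsum_nonneg fun n => ZetaAsymptotics.term_nonneg _ _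
  nlinarith

lemma aux_totient_sq (m : ℕ) (hm : m ≠ 0) : m ≤ 2 * m.totient ^ 2 ∧ (Odd m → m ≤ m.totient ^ 2) := by
  induction m using Nat.recOnPosPrimePosCoprime with
  | zero => simp at hm
  | one => simp
  | prime_pow p n hp hn =>
    rw [Nat.totient_prime_pow hp hn]
    obtain ⟨k, rfl⟩ : ∃ k, n = k + 1 := ⟨n - 1, by omega⟩
    have h1 : 1 ≤ p ^ k := Nat.one_le_pow _ _ hp.pos
    have h4 : p ^ k ≤ (p ^ k) ^ 2 := by nlinarith
    simp only [Nat.add_sub_cancel]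
    rcases hp.eq_two_or_odd with rfl | hodd
    · constructor
      · rw [pow_succ]; norm_num; nlinarith
      · intro h
        rw [Nat.odd_pow_iff (by omega)] at h
        exact absurd h (by decide)
    · have h3 : 3 ≤ p := by have := hp.two_le; omega
      obtain ⟨q, rfl⟩ : ∃ q, p = q + 1 := ⟨p - 1, by omega⟩
      have h5 : (q + 1) ^ (k + 1) ≤ ((q + 1) ^ k * (q + 1 - 1)) ^ 2 := by
        rw [pow_succ, mul_pow]
        simp only [Nat.add_sub_cancel]
        exact Nat.mul_le_mul h4 (by nlinarith)
      exact ⟨h5.trans (Nat.le_mul_of_pos_left _ (by norm_num)), fun _ => h5⟩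
  | coprime a b ha hb hab iha ihb =>
    obtain ⟨a1, a2⟩ := iha (by omega)
    obtain ⟨b1, b2⟩ := ihb (by omega)
    rw [Nat.totient_mul hab, mul_pow]
    refine ⟨?_, fun h => ?_⟩
    · rcases Nat.even_or_odd a with hae | hao
      · have hbo : Odd b := by
          by_contra hbe
          rw [Nat.not_odd_iff_even] at hbe
          have := Nat.dvd_gcd hae.two_dvd hbe.two_dvd
          rw [hab] at this
          omega
        have := Nat.mul_le_mul a1 (b2 hbo)
        linarith
      · have := Nat.mul_le_mul (a2 hao) b1
        linarith
    · rw [Nat.odd_mul] at h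
      exact Nat.mul_le_mul (a2 h.1) (b2 h.2)

lemma aux_ratio (m n : ℕ) (hm : m ≠ 0) (hn : 1 ≤ n) (hmn : Real.log m ≤ n) :
    (m : ℝ) ≤ m.totient * (Real.exp 1 * (1 + (2 * (Real.log n + Real.log 4) + 1))) := by
  set A : ℝ := 2 * (Real.log n + Real.log 4) + 1 with hA
  have hlogn : 0 ≤ Real.log n := Real.log_natCast_nonneg n
  have hlog4 : 0 ≤ Real.log 4 := Real.log_nonneg (by norm_num)
  have hApos : 0 < A := by positivity
  have hpr : ∀ p ∈ m.primeFactors, p.Prime := fun p hp => Nat.prime_of_mem_primeFactors hp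
  -- sum bound
  have hS : ∑ p ∈ m.primeFactors, Real.log p / ((p : ℝ) - 1) ≤ A := by
    rw [← Finset.sum_filter_add_sum_filter_not _ (fun p => p ≤ n)]
    have h1 : ∑ p ∈ m.primeFactors with p ≤ n, Real.log p / ((p : ℝ) - 1) ≤
        2 * (Real.log n + Real.log 4) := by
      calc _ ≤ ∑ p ∈ m.primeFactors with p ≤ n, 2 * (Real.log p / p) := by
            apply Finset.sum_le_sum
            intro p hp
            have h2 : (2 : ℝ) ≤ p := by exact_mod_cast (hpr p (Finset.mem_filter.1 hp).1).two_le
            have h0 : 0 ≤ Real.log p := Real.log_natCast_nonneg p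
            rw [← mul_div_assoc, div_le_div_iff₀ (by linarith) (by linarith)]
            nlinarith
        _ ≤ ∑ p ∈ Nat.primesLE n, 2 * (Real.log p / p) := by
            apply Finset.sum_le_sum_of_subset_of_nonneg
            · intro p hp
              rw [Finset.mem_filter] at hp
              exact Nat.mem_primesLE.2 ⟨hp.2, hpr p hp.1⟩
            · intro p _ _
              have h0 : 0 ≤ Real.log p := Real.log_natCast_nonneg p
              positivity
        _ ≤ _ := by
            rw [← Finset.mul_sum]
            linarith [aux_mertens n hn]
    have hn' : (0 : ℝ) < n := by exact_mod_cast hn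
    have h2 : ∑ p ∈ m.primeFactors with ¬ p ≤ n, Real.log p / ((p : ℝ) - 1) ≤ 1 := by
      calc _ ≤ ∑ p ∈ m.primeFactors with ¬ p ≤ n, Real.log p / n := by
            apply Finset.sum_le_sum
            intro p hp
            have h2 : (n : ℝ) + 1 ≤ p := by
              have := (Finset.mem_filter.1 hp).2
              exact_mod_cast (by omega : n + 1 ≤ p)
            have h0 : 0 ≤ Real.log p := Real.log_natCast_nonneg p
            gcongr
            linarith
        _ ≤ ∑ p ∈ m.primeFactors, Real.log p / n := by
            apply Finset.sum_le_sum_of_subset_of_nonneg (Finset.filter_subset _ _)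
            intro p _ _
            have h0 : 0 ≤ Real.log p := Real.log_natCast_nonneg p
            positivity
        _ ≤ Real.log m / n := by
            rw [← Finset.sum_div]
            gcongr
            rw [← Real.log_prod (fun p hp => by
              have := (hpr p hp).ne_zero
              positivity)]
            apply Real.log_le_log
            · exact Finset.prod_pos fun p hp => by exact_mod_cast (hpr p hp).pos
            · have h5 := Nat.le_of_dvd (Nat.pos_of_ne_zero hm) (Nat.prod_primeFactors_dvd m)
              rw [← Nat.cast_prod]
              exact Nat.cast_le.2 h5
        _ ≤ 1 := by rw [div_le_one hn']; exact hmn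
    linarith
  set s : ℝ := 1 + 1 / A with hs
  have hs1 : 1 < s := by
    have : 0 < 1 / A := by positivity
    linarith
  have hz := aux_zeta s hs1 m.primeFactors hpr
  have hterm : ∀ p ∈ m.primeFactors, (1 - (p : ℝ)⁻¹)⁻¹ ≤
      (1 - (p : ℝ) ^ (-s))⁻¹ * Real.exp (1 / A * (Real.log p / ((p : ℝ) - 1))) := by
    intro p hp
    have h2 : (2 : ℝ) ≤ p := by exact_mod_cast (hpr p hp).two_le
    have hp0 : (0 : ℝ) < p := by linarith
    have hp1 : (0 : ℝ) < p - 1 := by linarith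
    have hlt : (p : ℝ) ^ (-s) < 1 := Real.rpow_lt_one_of_one_lt_of_neg (by linarith) (by linarith)
    have hpos : 0 < 1 - (p : ℝ) ^ (-s) := by linarith
    rw [inv_mul_eq_div, le_div_iff₀ hpos]
    have e1 : (p : ℝ) ^ (-s) = (p : ℝ)⁻¹ * Real.exp (-(1 / A * Real.log p)) := by
      rw [hs, neg_add, Real.rpow_add hp0, Real.rpow_neg_one, Real.rpow_def_of_pos hp0]
      congr 2
      ring
    have e2 := Real.add_one_le_exp (-(1 / A * Real.log p))
    have e3 := Real.add_one_le_exp (1 / A * (Real.log p / ((p : ℝ) - 1)))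
    refine le_trans ?_ e3
    have e4 : (1 - (p : ℝ)⁻¹)⁻¹ = p / (p - 1) := by
      field_simp
    rw [e4, e1]
    have e5 : (p : ℝ) / (p - 1) * (1 - (p : ℝ)⁻¹ * Real.exp (-(1 / A * Real.log p))) =
      (p - Real.exp (-(1 / A * Real.log p))) / (p - 1) := by
      field_simp
    have e6 : 1 / A * (Real.log p / ((p : ℝ) - 1)) + 1 = (1 / A * Real.log p + (p - 1)) / (p - 1) := by
      field_simp
    rw [e5, e6]
    gcongr ?_ / _
    linarith
  have hprod : ∏ p ∈ m.primeFactors, (1 - (p : ℝ)⁻¹)⁻¹ ≤ Real.exp 1 * (1 + A) := by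
    calc _ ≤ ∏ p ∈ m.primeFactors, ((1 - (p : ℝ) ^ (-s))⁻¹ *
            Real.exp (1 / A * (Real.log p / ((p : ℝ) - 1)))) := by
          apply Finset.prod_le_prod _ hterm
          intro p hp
          have h2 : (2 : ℝ) ≤ p := by exact_mod_cast (hpr p hp).two_le
          have : (p : ℝ)⁻¹ ≤ 1 := inv_le_one_of_one_le₀ (by linarith)
          exact inv_nonneg.2 (by linarith)
      _ = (∏ p ∈ m.primeFactors, (1 - (p : ℝ) ^ (-s))⁻¹) *
            Real.exp (1 / A * ∑ p ∈ m.primeFactors, Real.log p / ((p : ℝ) - 1)) := by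
          rw [Finset.prod_mul_distrib, ← Real.exp_sum, Finset.mul_sum]
      _ ≤ (1 + A) * Real.exp 1 := by
          have h1 : 1 + 1 / (s - 1) = 1 + A := by rw [hs]; simp
          rw [h1] at hz
          have h2 : 1 / A * ∑ p ∈ m.primeFactors, Real.log p / ((p : ℝ) - 1) ≤ 1 := by
            rw [one_div, inv_mul_le_iff₀ hApos]; linarith
          gcongr
      _ = _ := by ring
  have htot : (m.totient : ℝ) = m * ∏ p ∈ m.primeFactors, (1 - (p : ℝ)⁻¹) := by
    have := Nat.totient_eq_mul_prod_factors m
    have h6 := congrArg (fun q : ℚ => (q : ℝ)) this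
    simp only [Rat.cast_mul, Rat.cast_prod, Rat.cast_sub, Rat.cast_inv, Rat.cast_natCast,
      Rat.cast_one] at h6
    exact h6
  have hne : ∏ p ∈ m.primeFactors, (1 - (p : ℝ)⁻¹) ≠ 0 := by
    rw [Finset.prod_ne_zero_iff]
    intro p hp
    have h2 : (2 : ℝ) ≤ p := by exact_mod_cast (hpr p hp).two_le
    have : (p : ℝ)⁻¹ < 1 := inv_lt_one_of_one_lt₀ (by linarith)
    linarith
  rw [Finset.prod_inv_distrib] at hprod
  calc (m : ℝ) = m.totient * (∏ p ∈ m.primeFactors, (1 - (p : ℝ)⁻¹))⁻¹ := by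
        rw [htot, mul_assoc, mul_inv_cancel₀ hne, mul_one]
    _ ≤ _ := by gcongr

lemma aux_bound (m t : ℕ) (hm : m ≠ 0) (ht : m.totient ≤ t) :
    (m : ℝ) ≤ 16 * t * Real.logb 2 (Real.logb 2 (t + 3)) := by
  have hphi : 1 ≤ m.totient := Nat.totient_pos.2 (Nat.pos_of_ne_zero hm)
  have hsq := (aux_totient_sq m hm).1
  set f := m.totient with hf
  have hmono : 16 * (f : ℝ) * Real.logb 2 (Real.logb 2 (f + 3)) ≤
      16 * t * Real.logb 2 (Real.logb 2 (t + 3)) := by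
    have hft : (f : ℝ) ≤ t := by exact_mod_cast ht
    have hf1 : (1 : ℝ) ≤ f := by exact_mod_cast hphi
    have h2 : (2 : ℝ) ≤ Real.logb 2 (f + 3) := by
      rw [Real.le_logb_iff_rpow_le (by norm_num) (by linarith)]
      norm_num; linarith
    have h3 : Real.logb 2 (f + 3) ≤ Real.logb 2 (t + 3) :=
      Real.logb_le_logb_of_le (by norm_num) (by linarith) (by linarith)
    have h4 : 0 ≤ Real.logb 2 (Real.logb 2 (f + 3)) :=
      Real.logb_nonneg (by norm_num) (by linarith)
    have h5 : Real.logb 2 (Real.logb 2 (f + 3)) ≤ Real.logb 2 (Real.logb 2 (t + 3)) :=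
      Real.logb_le_logb_of_le (by norm_num) (by linarith) h3
    gcongr
  refine le_trans ?_ hmono
  have hf1 : (1 : ℝ) ≤ f := by exact_mod_cast hphi
  have hsq' : (m : ℝ) ≤ 2 * f ^ 2 := by exact_mod_cast hsq
  by_cases h8 : f ≤ 8
  · have h2 : (2 : ℝ) ≤ Real.logb 2 (f + 3) := by
      rw [Real.le_logb_iff_rpow_le (by norm_num) (by linarith)]
      norm_num; linarith
    have h3 : 1 ≤ Real.logb 2 (Real.logb 2 (f + 3)) := by
      rw [Real.le_logb_iff_rpow_le (by norm_num) (by linarith)]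
      norm_num; linarith
    have h8' : (f : ℝ) ≤ 8 := by exact_mod_cast h8
    nlinarith
  · have h9 : (9 : ℝ) ≤ f := by exact_mod_cast (by omega : 9 ≤ f)
    set u := Real.logb 2 (f + 3) with hu
    have hu3 : (3.5 : ℝ) ≤ u := by
      rw [hu, Real.le_logb_iff_rpow_le (by norm_num) (by linarith)]
      have : (2 : ℝ) ^ (3.5 : ℝ) ≤ 12 := by
        have h1 : ((2 : ℝ) ^ (3.5 : ℝ)) ^ 2 = 128 := by
          rw [← Real.rpow_natCast, ← Real.rpow_mul (by norm_num)]; norm_num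
        have h0 : 0 ≤ (2 : ℝ) ^ (3.5 : ℝ) := by positivity
        nlinarith
      linarith
    have hlog2 := Real.log_two_lt_d9
    have hlog2' := Real.log_two_gt_d9
    have hl2 : Real.log (f + 3) = u * Real.log 2 := by
      rw [hu, Real.logb, div_mul_cancel₀ _ (by linarith)]
    have hm0 : (0 : ℝ) < m := by exact_mod_cast Nat.pos_of_ne_zero hm
    have hlogm : Real.log m ≤ Real.log 2 + 2 * Real.log (f + 3) := by
      calc Real.log m ≤ Real.log (2 * (f + 3) ^ 2) := by
            apply Real.log_le_log hm0
            nlinarith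
        _ = _ := by
          rw [Real.log_mul (by norm_num) (by positivity), Real.log_pow]; norm_num
    set n := ⌈Real.log m⌉₊ with hn
    have hm81 : 2 ≤ m := by
      by_contra h
      have : m = 1 := by omega
      subst this
      simp at hf
      omega
    have hlm : 0 < Real.log m := Real.log_pos (by exact_mod_cast hm81)
    have hn1 : 1 ≤ n := Nat.ceil_pos.2 hlm
    have hn2 : (n : ℝ) ≤ 2 * u := by
      have := Nat.ceil_lt_add_one hlm.le
      rw [← hn] at this
      nlinarith
    have hr := aux_ratio m n hm hn1 (Nat.le_ceil _)
    rw [← hf] at hr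
    refine hr.trans ?_
    rw [mul_comm (16 : ℝ), mul_assoc]
    refine mul_le_mul_of_nonneg_left ?_ (by positivity)
    have hln : Real.log n ≤ Real.log 2 + Real.log u := by
      rw [← Real.log_mul (by norm_num) (by linarith)]
      exact Real.log_le_log (by exact_mod_cast hn1) hn2
    have hlog4 : Real.log 4 = 2 * Real.log 2 := by
      rw [show (4 : ℝ) = 2 ^ 2 by norm_num, Real.log_pow]; norm_num
    have hlu : 1 ≤ Real.log u := by
      rw [Real.le_log_iff_exp_le (by linarith)]
      linarith [Real.exp_one_lt_d9]
    have hlb : Real.logb 2 u * Real.log 2 = Real.log u := by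
      rw [Real.logb, div_mul_cancel₀ _ (by linarith)]
    have he := Real.exp_one_lt_d9
    have hX : 1 + (2 * (Real.log n + Real.log 4) + 1) ≤ 6.16 + 2 * Real.log u := by
      rw [hlog4]; linarith
    have hE : Real.exp 1 * (1 + (2 * (Real.log n + Real.log 4) + 1)) ≤ 2.72 * (6.16 + 2 * Real.log u) := by
      have hnn : 0 ≤ 1 + (2 * (Real.log n + Real.log 4) + 1) := by
        have := Real.log_natCast_nonneg n
        rw [hlog4]; linarith
      have : Real.exp 1 ≤ 2.72 := by linarith
      gcongr
    have hLB : Real.log u / 0.6932 ≤ Real.logb 2 u := by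
      rw [div_le_iff₀ (by norm_num), ← hlb]
      have : 0 ≤ Real.logb 2 u := Real.logb_nonneg (by norm_num) (by linarith)
      gcongr
      linarith
    have : Real.log u / 0.6932 ≥ 1.44 * Real.log u := by
      rw [ge_iff_le, le_div_iff₀ (by norm_num)]; linarith
    linarith

lemma aux_rel (N d t : ℕ) (htd : t < d) (x : ℕ → ℂ) (xq : ℕ → ℚ)
    (hxq : ∀ n, 1 ≤ n → n ≤ N → x n = (xq n : ℂ))
    (hdim : Module.finrank ℂ (Submodule.span ℂ
      {w : Fin d → ℂ | ∃ r, r + d ≤ N ∧ w = fun j : Fin d => x (1 + r + (j : ℕ))}) = t) :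
    ∃ c : ℕ → ℚ, (∃ j, c j ≠ 0) ∧ (∀ j, t < j → c j = 0) ∧
      ∀ n, 1 ≤ n → n + d ≤ N + 1 → ∑ j ∈ Finset.range (t + 1), c j * xq (n + j) = 0 := by
  set V := Submodule.span ℂ
      {w : Fin d → ℂ | ∃ r, r + d ≤ N ∧ w = fun j : Fin d => x (1 + r + (j : ℕ))} with hV
  let emb : Fin (t + 1) → Fin d := fun j => ⟨j, by omega⟩
  let g : (Fin (t + 1) → ℂ) →ₗ[ℂ] Module.Dual ℂ V :=
    { toFun := fun c =>
        { toFun := fun w => ∑ j, c j * (w : Fin d → ℂ) (emb j)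
          map_add' := fun a b => by simp [mul_add, Finset.sum_add_distrib]
          map_smul' := fun a b => by simp [Finset.mul_sum, mul_left_comm] }
      map_add' := fun a b => by ext w; simp [add_mul, Finset.sum_add_distrib]
      map_smul' := fun a b => by ext w; simp [Finset.mul_sum, mul_assoc] }
  have hker : LinearMap.ker g ≠ ⊥ := by
    apply LinearMap.ker_ne_bot_of_finrank_lt
    rw [Subspace.dual_finrank_eq, hdim]
    simp
  obtain ⟨c, hc, hc0⟩ := (Submodule.ne_bot_iff _).1 hker
  obtain ⟨k, hk⟩ := Function.ne_iff.1 hc0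
  obtain ⟨l, hl⟩ := Module.Projective.exists_dual_ne_zero ℚ hk
  refine ⟨fun j => if h : j < t + 1 then l (c ⟨j, h⟩) else 0, ⟨k, ?_⟩, ?_, ?_⟩
  · simp only [k.2, dif_pos]
    exact hl
  · intro j hj
    simp [show ¬ j < t + 1 by omega]
  · intro n hn1 hnN
    have hmem : (fun j : Fin d => x (1 + (n - 1) + (j : ℕ))) ∈ V :=
      Submodule.subset_span ⟨n - 1, by omega, rfl⟩
    have h1 := LinearMap.congr_fun (LinearMap.mem_ker.1 hc) ⟨_, hmem⟩
    have h2 : ∑ j : Fin (t + 1), c j * x (1 + (n - 1) + (j : ℕ)) = 0 := h1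
    have h3 : ∑ j : Fin (t + 1), xq (n + j) • c j = 0 := by
      rw [← h2]
      refine Finset.sum_congr rfl fun j _ => ?_
      have := j.2
      rw [hxq _ (by omega) (by omega), Rat.smul_def, mul_comm, show 1 + (n - 1) = n by omega]
    have h4 := congrArg l h3
    rw [map_sum, map_zero] at h4
    rw [Finset.sum_range]
    refine Eq.trans (Finset.sum_congr rfl fun j _ => ?_) h4
    simp only [j.2, dif_pos, map_smul, smul_eq_mul, Fin.eta]
    ring

/-- strip leading zeros -/
lemma aux_strip (N d t : ℕ) (htd : t < d) (xq : ℕ → ℚ) (c : ℕ → ℚ)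
    (hc : ∃ j, c j ≠ 0) (hct : ∀ j, t < j → c j = 0)
    (hrec : ∀ n, 1 ≤ n → n + d ≤ N + 1 → ∑ j ∈ Finset.range (t + 1), c j * xq (n + j) = 0) :
    ∃ b : ℕ → ℚ, b 0 ≠ 0 ∧ (∀ j, t < j → b j = 0) ∧
      ∀ n, d ≤ n → n + d ≤ N + 1 → ∑ j ∈ Finset.range (t + 1), b j * xq (n + j) = 0 := by
  classical
  set a := Nat.find hc with ha
  have ha0 : c a ≠ 0 := Nat.find_spec hc
  have hat : a ≤ t := by
    by_contra h
    exact ha0 (hct a (by omega))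
  refine ⟨fun j => c (a + j), ha0, fun j hj => hct _ (by omega), fun n hn hnN => ?_⟩
  have h := hrec (n - a) (by omega) (by omega)
  have e1 : ∑ j ∈ Finset.range (a + (t + 1)), c j * xq (n - a + j) =
      ∑ j ∈ Finset.range (t + 1), c j * xq (n - a + j) := by
    symm
    apply Finset.sum_subset
    · intro j; simp only [Finset.mem_range]; omega
    · intro j _ hj
      simp only [Finset.mem_range] at hj
      rw [hct j (by omega), zero_mul]
  rw [Finset.sum_range_add, h] at e1
  rw [Finset.sum_eq_zero (s := Finset.range a), zero_add] at e1
  · rw [← e1]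
    refine Finset.sum_congr rfl fun j _ => ?_
    congr 2
    omega
  · intro j hj
    have : c j = 0 := by
      by_contra hne
      exact Nat.find_min hc (Finset.mem_range.1 hj) hne
    rw [this, zero_mul]

lemma aux_period (N d t n1 P : ℕ) (htd : t < d) (xq : ℕ → ℚ) (b : ℕ → ℚ)
    (hb0 : b 0 ≠ 0) (hbt : ∀ j, t < j → b j = 0)
    (hrec : ∀ n, d ≤ n → n + d ≤ N + 1 → ∑ j ∈ Finset.range (t + 1), b j * xq (n + j) = 0)
    (hn1 : d ≤ n1) (hN : n1 + P + 2 * d ≤ N + 1) (hwin : ∀ j, j < d → xq (n1 + P + j) = xq (n1 + j)) :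
    ∀ n, d ≤ n → n + P + d ≤ N → xq (n + P) = xq n := by
  classical
  have hw : ∀ n, d ≤ n → n + P + d ≤ N + 1 →
      ∑ j ∈ Finset.range (t + 1), b j * (xq (n + j + P) - xq (n + j)) = 0 := by
    intro n h1 h2
    have e1 := hrec n h1 (by omega)
    have e2 := hrec (n + P) (by omega) (by omega)
    simp only [mul_sub, Finset.sum_sub_distrib, e1, sub_zero]
    rw [← e2]
    refine Finset.sum_congr rfl fun j _ => ?_
    congr 2
    omega
  -- forward
  have hfwd : ∀ n, n1 ≤ n → n + P + d ≤ N → xq (n + P) = xq n := by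
    obtain ⟨k, hkt, hk, hkmax⟩ : ∃ k, k ≤ t ∧ b k ≠ 0 ∧ ∀ j, k < j → b j = 0 := by
      refine ⟨Nat.findGreatest (fun j => b j ≠ 0) t, Nat.findGreatest_le t,
        Nat.findGreatest_spec (P := fun j => b j ≠ 0) (Nat.zero_le t) hb0, fun j hj => ?_⟩
      by_cases hjt : j ≤ t
      · have := Nat.findGreatest_is_greatest hj hjt
        simpa using this
      · exact hbt j (by omega)
    intro n
    induction n using Nat.strong_induction_on with
    | _ n ih =>
      intro h1 h2
      by_cases hlt : n < n1 + d
      · have := hwin (n - n1) (by omega)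
        rwa [show n1 + P + (n - n1) = n + P by omega, show n1 + (n - n1) = n by omega] at this
      · have e := hw (n - k) (by omega) (by omega)
        rw [Finset.sum_eq_single k] at e
        · rw [show n - k + k = n by omega] at e
          have := (mul_eq_zero.1 e).resolve_left hk
          linarith
        · intro j _ hjk
          rcases lt_or_gt_of_ne hjk with h | h
          · rw [ih (n - k + j) (by omega) (by omega) (by omega), sub_self, mul_zero]
          · rw [hkmax j h, zero_mul]
        · intro h
          exact absurd (Finset.mem_range.2 (by omega)) h
  have hbwd : ∀ i n, n + i = n1 → d ≤ n → xq (n + P) = xq n := by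
    intro i
    induction i using Nat.strong_induction_on with
    | _ i ih =>
      intro n hni hdn
      by_cases hi : i = 0
      · exact hfwd n (by omega) (by omega)
      have e := hw n hdn (by omega)
      rw [Finset.sum_eq_single 0] at e
      · have := (mul_eq_zero.1 e).resolve_left hb0
        simp only [add_zero] at this
        linarith
      · intro j hj hj0
        rw [Finset.mem_range] at hj
        have : xq (n + j + P) = xq (n + j) := by
          by_cases h : n1 ≤ n + j
          · exact hfwd _ h (by omega)
          · exact ih (i - j) (by omega) (n + j) (by omega) (by omega)
        rw [this, sub_self, mul_zero]
      · simp
  intro n h1 h2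
  by_cases h : n1 ≤ n
  · exact hfwd n h h2
  · exact hbwd (n1 - n) n (by omega) h1

open Polynomial in
noncomputable def auxShift : (ℕ → ℚ) →ₗ[ℚ] (ℕ → ℚ) where
  toFun := fun f n => f (n + 1)
  map_add' := fun _ _ => rfl
  map_smul' := fun _ _ => rfl

lemma auxShift_pow (k : ℕ) (f : ℕ → ℚ) (n : ℕ) : (auxShift ^ k) f n = f (n + k) := by
  induction k generalizing f n with
  | zero => simp
  | succ k ih =>
    rw [pow_succ, Module.End.mul_apply, ih]
    simp [auxShift, add_assoc]

open Polynomial in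
lemma aux_decomp (z : ℕ → ℚ) (D : Finset ℕ)
    (h : aeval auxShift (∏ m ∈ D, cyclotomic m ℚ) z = 0) :
    ∃ y : ℕ → ℕ → ℚ, (∀ m ∈ D, ∀ n, y m (n + m) = y m n) ∧ ∀ n, z n = ∑ m ∈ D, y m n := by
  classical
  induction D using Finset.induction_on generalizing z with
  | empty =>
    simp at h
    exact ⟨0, by simp, by simp [h]⟩
  | insert a D ha ih =>
    rw [Finset.prod_insert ha] at h
    have hcop : IsCoprime (cyclotomic a ℚ) (∏ m ∈ D, cyclotomic m ℚ) := by
      apply IsCoprime.prod_right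
      intro m hm
      exact cyclotomic.isCoprime_rat (fun e => ha (e ▸ hm))
    have hmem : z ∈ LinearMap.ker (aeval auxShift (cyclotomic a ℚ * ∏ m ∈ D, cyclotomic m ℚ)) := h
    rw [← sup_ker_aeval_eq_ker_aeval_mul_of_coprime _ hcop, Submodule.mem_sup] at hmem
    obtain ⟨u, hu, v, hv, huv⟩ := hmem
    obtain ⟨y, hy1, hy2⟩ := ih v hv
    refine ⟨Function.update y a u, ?_, ?_⟩
    · intro m hm n
      rcases Finset.mem_insert.1 hm with rfl | hm
      · simp only [Function.update_self]
        obtain ⟨q, hq⟩ := cyclotomic.dvd_X_pow_sub_one m ℚ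
        have h0 : aeval auxShift (X ^ m - 1 : ℚ[X]) u = 0 := by
          rw [hq, mul_comm, aeval_mul, Module.End.mul_apply, LinearMap.mem_ker.1 hu, map_zero]
        have h1 := congrFun h0 n
        simp only [map_sub, map_pow, aeval_X, map_one, LinearMap.sub_apply, Pi.sub_apply,
          auxShift_pow, Module.End.one_apply, Pi.zero_apply] at h1
        linarith
      · have : m ≠ a := fun e => ha (e ▸ hm)
        simp only [Function.update_of_ne this]
        exact hy1 m hm n
    · intro n
      rw [Finset.sum_insert ha, Function.update_self, ← huv, Pi.add_apply, hy2 n]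
      congr 1
      refine Finset.sum_congr rfl fun m hm => ?_
      have : m ≠ a := fun e => ha (e ▸ hm)
      rw [Function.update_of_ne this]

open Polynomial in
lemma aux_main (t P : ℕ) (hP : 0 < P) (z : ℕ → ℚ) (hz : ∀ n, z (n + P) = z n)
    (b : ℕ → ℚ) (hb0 : b 0 ≠ 0)
    (hrec : ∀ n, ∑ j ∈ Finset.range (t + 1), b j * z (n + j) = 0) :
    ∃ D : Finset ℕ, D.card ≤ t ∧ (∀ m ∈ D, m ≠ 0 ∧ m.totient ≤ t) ∧
    ∃ y : ℕ → ℕ → ℚ, (∀ m ∈ D, ∀ n, y m (n + m) = y m n) ∧ ∀ n, z n = ∑ m ∈ D, y m n := by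
  classical
  set p : ℚ[X] := ∑ j ∈ Finset.range (t + 1), C (b j) * X ^ j with hp
  have hpz : aeval auxShift p z = 0 := by
    ext n
    rw [hp]
    simp only [map_sum, map_mul, aeval_C, map_pow, aeval_X, LinearMap.sum_apply,
      Module.End.mul_apply, Module.algebraMap_end_apply, Finset.sum_apply, Pi.smul_apply,
      auxShift_pow, smul_eq_mul, Pi.zero_apply]
    exact hrec n
  have hp0 : p ≠ 0 := by
    intro h
    have := congrArg (fun q => coeff q 0) h
    simp [hp, coeff_X_pow] at this
    exact hb0 this
  have hdeg : p.natDegree ≤ t := by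
    apply natDegree_sum_le_of_forall_le
    intro j hj
    exact (natDegree_C_mul_X_pow_le _ _).trans (by simpa [Nat.lt_succ_iff] using hj)
  set D := P.divisors.filter (fun m => cyclotomic m ℚ ∣ p) with hD
  set E := P.divisors.filter (fun m => ¬ cyclotomic m ℚ ∣ p) with hE
  have hDpos : ∀ m ∈ D, 0 < m := fun m hm => Nat.pos_of_mem_divisors (Finset.mem_filter.1 hm).1
  have hEpos : ∀ m ∈ E, 0 < m := fun m hm => Nat.pos_of_mem_divisors (Finset.mem_filter.1 hm).1
  have hprod : (∏ m ∈ D, cyclotomic m ℚ) * (∏ m ∈ E, cyclotomic m ℚ) = X ^ P - 1 := by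
    rw [← prod_cyclotomic_eq_X_pow_sub_one hP ℚ, hD, hE, Finset.prod_filter_mul_prod_filter_not]
  have hcop : IsCoprime p (∏ m ∈ E, cyclotomic m ℚ) := by
    apply IsCoprime.prod_right
    intro m hm
    exact ((cyclotomic.irreducible_rat (hEpos m hm)).coprime_iff_not_dvd.2
      (Finset.mem_filter.1 hm).2).symm
  have hQz : aeval auxShift (∏ m ∈ D, cyclotomic m ℚ) z = 0 := by
    obtain ⟨u, v, huv⟩ := hcop
    have hX : aeval auxShift (X ^ P - 1 : ℚ[X]) z = 0 := by
      ext n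
      simp [auxShift_pow, hz]
    have e : (∏ m ∈ D, cyclotomic m ℚ) =
        ((∏ m ∈ D, cyclotomic m ℚ) * u) * p + v * (X ^ P - 1) := by
      rw [← hprod]
      linear_combination (-(∏ m ∈ D, cyclotomic m ℚ)) * huv
    rw [e, map_add, map_mul _ _ p, map_mul _ v, LinearMap.add_apply, Module.End.mul_apply,
      Module.End.mul_apply, hpz, hX, map_zero, map_zero, add_zero]
  have hdvd : (∏ m ∈ D, cyclotomic m ℚ) ∣ p := by
    apply Finset.prod_dvd_of_coprime
    · intro i _ j _ hij
      exact cyclotomic.isCoprime_rat hij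
    · intro m hm
      exact (Finset.mem_filter.1 hm).2
  have hsum : ∑ m ∈ D, m.totient ≤ t := by
    have h1 := natDegree_le_of_dvd hdvd hp0
    rw [natDegree_prod _ _ (fun m _ => cyclotomic_ne_zero m ℚ)] at h1
    simp only [natDegree_cyclotomic] at h1
    omega
  refine ⟨D, ?_, ?_, aux_decomp z D hQz⟩
  · refine le_trans ?_ hsum
    rw [Finset.card_eq_sum_ones]
    exact Finset.sum_le_sum fun m hm => Nat.totient_pos.2 (hDpos m hm)
  · intro m hm
    exact ⟨(hDpos m hm).ne', (Finset.single_le_sum (f := Nat.totient) (fun _ _ => Nat.zero_le _) hm).trans hsum⟩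

lemma aux_distribute (t : ℕ) (D : Finset ℕ) (hD : D.card ≤ t) (Q : ℕ → (ℕ → ℚ) → Prop)
    (y : ℕ → ℕ → ℚ) (hy : ∀ m ∈ D, Q m (y m)) (z : ℕ → ℚ)
    (hz : ∀ n, z n = ∑ m ∈ D, y m n) :
    ∃ w : Fin t → ℕ → ℚ, (∀ i, (∃ m ∈ D, Q m (w i)) ∨ w i = 0) ∧ ∀ n, z n = ∑ i, w i n := by
  classical
  let F : ℕ → ℕ → ℚ := fun i => if h : i < D.card then y (D.equivFin.symm ⟨i, h⟩) else 0
  refine ⟨fun i => F i, ?_, ?_⟩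
  · intro i
    by_cases h : (i : ℕ) < D.card
    · left
      refine ⟨D.equivFin.symm ⟨i, h⟩, Subtype.coe_prop _, ?_⟩
      simp only [F, h, dif_pos]
      exact hy _ (Subtype.coe_prop _)
    · right
      simp only [F, h, dif_neg, not_false_iff]
  · intro n
    rw [hz n, Fin.sum_univ_eq_sum_range (fun i => F i n) t]
    have e1 : ∑ i ∈ Finset.range D.card, F i n = ∑ i ∈ Finset.range t, F i n := by
      apply Finset.sum_subset
      · intro i; simp only [Finset.mem_range]; omega
      · intro i _ hi
        simp only [Finset.mem_range] at hi
        simp [F, hi]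
    rw [← e1, Finset.sum_range, ← Finset.sum_coe_sort D, ← Equiv.sum_comp D.equivFin.symm]
    refine Finset.sum_congr rfl fun i _ => ?_
    simp [F]

theorem stmt10 (N d t : ℕ) (hd : 1 ≤ d) (htd : t < d)
    (R : Finset ℂ) (hRrat : ∀ z ∈ R, ∃ q : ℚ, z = (q : ℂ))
    (x : ℕ → ℂ) (hx : ∀ n, 1 ≤ n → n ≤ N → x n ∈ R)
    (hN : R.card ^ d + 3 * d < N)
    (hdim : Module.finrank ℂ (Submodule.span ℂ
      {w : Fin d → ℂ | ∃ r, r + d ≤ N ∧ w = fun j : Fin d => x (1 + r + (j : ℕ))}) = t) :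
    ∃ y : Fin t → ℕ → ℂ,
      (∀ i, ∃ q : ℕ, 1 ≤ q ∧ (q : ℝ) ≤ 16 * t * Real.logb 2 (Real.logb 2 (t + 3)) ∧
        ∀ n, d ≤ n → n + q ≤ N - d → y i (n + q) = y i n) ∧
      (∀ n, d ≤ n → n ≤ N - d → x n = ∑ i, y i n) := by
  classical
  have hex : ∀ n, ∃ q : ℚ, 1 ≤ n → n ≤ N → x n = (q : ℂ) := by
    intro n
    by_cases h : 1 ≤ n ∧ n ≤ N
    · obtain ⟨q, hq⟩ := hRrat _ (hx n h.1 h.2)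
      exact ⟨q, fun _ _ => hq⟩
    · exact ⟨0, fun h1 h2 => absurd ⟨h1, h2⟩ h⟩
  choose xq hxq using hex
  obtain ⟨c, hc, hct, hcrec⟩ := aux_rel N d t htd x xq hxq hdim
  obtain ⟨b, hb0, hbt, hrec⟩ := aux_strip N d t htd xq c hc hct hcrec
  -- pigeonhole
  let W : Fin (R.card ^ d + 1) → (Fin d → R) := fun i j =>
    ⟨x (d + i + j), hx _ (by omega) (by have := i.2; have := j.2; omega)⟩
  have hcard : Fintype.card (Fin d → R) < Fintype.card (Fin (R.card ^ d + 1)) := by simp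
  obtain ⟨i1, i2, hlt, hW⟩ : ∃ i1 i2, i1 < i2 ∧ W i1 = W i2 := by
    obtain ⟨i1, i2, hne, hW⟩ := Fintype.exists_ne_map_eq_of_card_lt W hcard
    rcases lt_or_gt_of_ne hne with h | h
    · exact ⟨i1, i2, h, hW⟩
    · exact ⟨i2, i1, h, hW.symm⟩
  have hlt' : (i1 : ℕ) < i2 := hlt
  have hi2 := i2.2
  set P : ℕ := (i2 : ℕ) - i1 with hP
  have hper : ∀ n, d ≤ n → n + P + d ≤ N → xq (n + P) = xq n := by
    apply aux_period N d t (d + i1) P htd xq b hb0 hbt hrec (by omega) (by omega)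
    intro j hj
    have h1 := congrArg Subtype.val (congrFun hW ⟨j, hj⟩)
    simp only [W] at h1
    rw [hxq _ (by omega) (by omega), hxq _ (by omega) (by omega)] at h1
    have h2 : xq (d + i1 + j) = xq (d + i2 + j) := by exact_mod_cast h1
    rw [h2]
    congr 1
    omega
  have hPpos : 0 < P := by omega
  let z : ℕ → ℚ := fun n => xq (d + n % P)
  have hzx : ∀ n, n + 2 * d ≤ N → z n = xq (d + n) := by
    intro n
    induction n using Nat.strong_induction_on with
    | _ n ih =>
      intro h
      by_cases hn : n < P
      · simp [z, Nat.mod_eq_of_lt hn]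
      · have h1 := ih (n - P) (by omega) (by omega)
        have h2 := hper (d + (n - P)) (by omega) (by omega)
        rw [show d + (n - P) + P = d + n by omega] at h2
        rw [h2, ← h1]
        simp only [z]
        rw [Nat.mod_eq_sub_mod (by omega)]
  have hzrec : ∀ n, ∑ j ∈ Finset.range (t + 1), b j * z (n + j) = 0 := by
    intro n
    have hmod := Nat.mod_lt n hPpos
    rw [← hrec (d + n % P) (by omega) (by omega)]
    refine Finset.sum_congr rfl fun j hj => ?_
    rw [Finset.mem_range] at hj
    have h1 : z (n + j) = z (n % P + j) := by simp [z]
    rw [h1, hzx _ (by omega), add_assoc]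
  obtain ⟨D, hDc, hDt, y, hy, hzy⟩ := aux_main t P hPpos z (fun n => by simp [z]) b hb0 hzrec
  obtain ⟨w, hw, hzw⟩ := aux_distribute t D hDc (fun m f => ∀ n, f (n + m) = f n) y hy z hzy
  refine ⟨fun i n => (w i (n - d) : ℂ), ?_, ?_⟩
  · intro i
    rcases hw i with ⟨m, hm, hper⟩ | h0
    · refine ⟨m, Nat.pos_of_ne_zero (hDt m hm).1, aux_bound m t (hDt m hm).1 (hDt m hm).2, ?_⟩
      intro n hn _
      have := hper (n - d)
      rw [show n - d + m = n + m - d by omega] at this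
      simp only [this]
    · refine ⟨1, le_rfl, ?_, ?_⟩
      · have hi := i.2
        exact aux_bound 1 t one_ne_zero (by rw [Nat.totient_one]; omega)
      · intro n _ _
        simp [h0]
  · intro n hn hnN
    have h1 := hzx (n - d) (by omega)
    rw [show d + (n - d) = n by omega] at h1
    rw [hxq n (by omega) (by omega), ← h1, hzw]
    push_cast
    rfl
end

section
/- For every finite set $A \subseteq \mathbb{N} \cup \{0\}$ with $|A|$ sufficiently large, the cosine polynomial $f_A(\theta) = \sum_{a \in A} \cos(a\theta)$ has at least $(\log\log\log |A|)^{1/4}$ distinct roots in $[0, 2\pi]$. -/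
open Finset



lemma linalg_adj (n : ℕ) (M : Matrix (Fin n) (Fin n) ℤ) (hM : ∀ i j, |M i j| ≤ 2) (i j : Fin n) :
    |M.adjugate i j| ≤ (n.factorial : ℤ) * 2 ^ n := by
  rw [Matrix.adjugate_apply]
  have := Matrix.det_le (abv := AbsoluteValue.abs) (A := M.updateRow j (Pi.single i 1)) (x := (2:ℤ)) (by
    intro a b
    simp only [Matrix.updateRow_apply]
    split_ifs
    · by_cases h : b = i
      · subst h; simp
      · simp [h]
    · exact hM a b)
  simpa using this

lemma linalg_det (n : ℕ) (q : Fin n → ℝ) (i0 : Fin n) (hq : q i0 = 1)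
    (M : Matrix (Fin n) (Fin n) ℤ) (hM : ∀ i j, |M i j| ≤ 2)
    (hs : ∀ i, |∑ j, q j * (M i j : ℝ)| < 1 / (n * n.factorial * 2 ^ n)) : M.det = 0 := by
  by_contra hd
  have hn : 0 < n := i0.pos
  have h1 : (1 : ℝ) ≤ |(M.det : ℝ)| := by exact_mod_cast Int.one_le_abs hd
  have h2 : (M.det : ℝ) = ∑ j, (M.adjugate i0 j : ℝ) * ∑ l, q l * (M j l : ℝ) := by
    have : ∀ l, ∑ j, (M.adjugate i0 j : ℝ) * (M j l : ℝ) = if i0 = l then (M.det : ℝ) else 0 := by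
      intro l
      have := congrFun (congrFun (Matrix.adjugate_mul M) i0) l
      simp only [Matrix.mul_apply, Matrix.smul_apply, Matrix.one_apply, smul_eq_mul, mul_ite, mul_one, mul_zero] at this
      exact_mod_cast this
    simp_rw [mul_sum]
    rw [sum_comm]
    have h3 : ∀ l, ∑ j, (M.adjugate i0 j : ℝ) * (q l * (M j l : ℝ)) = q l * (if i0 = l then (M.det : ℝ) else 0) := by
      intro l
      rw [← this, mul_sum]
      exact sum_congr rfl fun j _ => by ring
    simp_rw [h3]
    simp [hq]
  have hpos : (0:ℝ) < n * n.factorial * 2 ^ n := by positivity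
  have h4 : |(M.det : ℝ)| < 1 := by
    rw [h2]
    calc _ ≤ ∑ j, |(M.adjugate i0 j : ℝ) * ∑ l, q l * (M j l : ℝ)| := abs_sum_le_sum_abs _ _
      _ < ∑ j : Fin n, ((n.factorial : ℝ) * 2 ^ n) * (1 / (n * n.factorial * 2 ^ n)) := by
          apply sum_lt_sum_of_nonempty ⟨i0, mem_univ _⟩
          intro j _
          rw [abs_mul]
          have ha : |(M.adjugate i0 j : ℝ)| ≤ (n.factorial : ℝ) * 2 ^ n := by
            exact_mod_cast linalg_adj n M hM i0 j
          have hb := hs j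
          calc _ ≤ ((n.factorial : ℝ) * 2 ^ n) * |∑ l, q l * (M j l : ℝ)| := by gcongr
            _ < _ := by gcongr
      _ = 1 := by
          simp only [sum_const, card_univ, Fintype.card_fin, nsmul_eq_mul]
          field_simp
  linarith

lemma linalg (n : ℕ) (q : Fin n → ℝ) (i0 : Fin n) (hq : q i0 = 1) :
    ∃ Q : Fin n → ℚ, Q ≠ 0 ∧ ∀ v : Fin n → ℤ, (∀ i, |v i| ≤ 2) →
      |∑ i, q i * (v i : ℝ)| < 1 / (n * n.factorial * 2 ^ n) → ∑ i, Q i * (v i : ℚ) = 0 := by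
  classical
  set D : Set (Fin n → ℚ) := {w | ∃ v : Fin n → ℤ, (∀ i, |v i| ≤ 2) ∧
      |∑ i, q i * (v i : ℝ)| < 1 / (n * n.factorial * 2 ^ n) ∧ w = fun i => (v i : ℚ)} with hD
  by_cases hsp : Submodule.span ℚ D = ⊤
  · exfalso
    obtain ⟨b, hb, hbs, hli⟩ := exists_linearIndependent ℚ D
    rw [hsp] at hbs
    let bas := Module.Basis.mk hli (by rw [Subtype.range_coe, hbs])
    have : Fintype b := Module.Basis.fintypeIndexOfRankLtAleph0 bas (by simp)
    have hc : Fintype.card b = n := by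
      rw [← Module.finrank_eq_card_basis bas]; simp
    let e : Fin n ≃ b := (Fintype.equivFinOfCardEq hc).symm
    have hli2 := hli.comp e e.injective
    choose v hv1 hv2 hv3 using fun i => hb (e i).2
    let M : Matrix (Fin n) (Fin n) ℤ := fun i j => v i j
    have h0 := linalg_det n q i0 hq M hv1 hv2
    have hu : IsUnit (M.map (Int.cast : ℤ → ℚ)) := by
      rw [← Matrix.linearIndependent_rows_iff_isUnit]
      have hrow : (M.map (Int.cast : ℤ → ℚ)).row = Subtype.val ∘ e := by
        funext i j
        simp only [Function.comp_apply, hv3]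
        rfl
      rw [hrow]
      exact hli2
    rw [Matrix.isUnit_iff_isUnit_det] at hu
    have : (M.map (Int.cast : ℤ → ℚ)).det = (M.det : ℚ) := by
      exact (Int.cast_det M).symm
    rw [this, h0] at hu
    simp at hu
  · obtain ⟨f, hf, hle⟩ := Submodule.exists_le_ker_of_lt_top _ (lt_top_iff_ne_top.2 hsp)
    refine ⟨fun i => f (Pi.single i 1), ?_, ?_⟩
    · intro h
      apply hf
      apply LinearMap.pi_ext'
      intro i
      ext
      simpa using congrFun h i
    · intro v hv1 hv2
      have h1 : (fun i => (v i : ℚ)) ∈ D := ⟨v, hv1, hv2, rfl⟩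
      have h2 := hle (Submodule.subset_span h1)
      rw [LinearMap.mem_ker] at h2
      rw [← h2]
      have : (fun i => (v i : ℚ)) = ∑ i, (v i : ℚ) • (Pi.single i (1:ℚ) : Fin n → ℚ) := by
        ext j; simp [Finset.sum_apply, Pi.single_apply]
      rw [this, map_sum]
      exact sum_congr rfl fun i _ => by rw [map_smul, smul_eq_mul, mul_comm]


lemma cyc_dvd (k d : ℕ) (hd : 0 < d) (h : d.totient ≤ 2 * k) : d ∣ (4 * k).factorial := by
  rw [Nat.dvd_iff_prime_pow_dvd_dvd]
  intro q e hq hqe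
  rcases Nat.eq_zero_or_pos e with rfl | he
  · simp
  apply Nat.dvd_factorial (pow_pos hq.pos _)
  have h1 : (q ^ e).totient ≤ 2 * k :=
    (Nat.le_of_dvd (Nat.totient_pos.2 hd) (Nat.totient_dvd_of_dvd hqe)).trans h
  rw [Nat.totient_prime_pow hq he] at h1
  have h2 : q ≤ 2 * (q - 1) := by have := hq.two_le; omega
  calc q ^ e = q ^ (e - 1) * q := by rw [← pow_succ]; congr 1; omega
    _ ≤ q ^ (e - 1) * (2 * (q - 1)) := by gcongr
    _ = 2 * (q ^ (e - 1) * (q - 1)) := by ring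
    _ ≤ 4 * k := by omega

noncomputable def shiftE : Module.End ℚ (ℕ → ℚ) := LinearMap.funLeft ℚ ℚ (fun j => j + 1)

lemma shiftE_pow (i : ℕ) (Y : ℕ → ℚ) (j : ℕ) : (shiftE ^ i) Y j = Y (j + i) := by
  induction i generalizing j with
  | zero => simp
  | succ i ih =>
    rw [pow_succ', Module.End.mul_apply]
    change (shiftE ^ i) Y (j + 1) = _
    rw [ih]; congr 1; ring

lemma shiftE_aeval (Q : Polynomial ℚ) (Y : ℕ → ℚ) (j : ℕ) :
    (Polynomial.aeval shiftE Q) Y j = Q.sum fun i a => a * Y (j + i) := by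
  rw [Polynomial.aeval_eq_sum_range, Polynomial.sum_over_range _ (by simp)]
  simp [LinearMap.sum_apply, Finset.sum_apply, shiftE_pow]

lemma per_of_rec (k r : ℕ) (hr : 0 < r) (Q : Polynomial ℚ) (hQ : Q ≠ 0) (hdeg : Q.natDegree ≤ 2 * k)
    (Y : ℕ → ℚ) (hY : ∀ j, Y (j + r) = Y j) (hrec : ∀ j, (Q.sum fun i a => a * Y (j + i)) = 0)
    (P : ℕ) (hP : (4 * k).factorial ∣ P) (hP0 : 0 < P) :
    ∀ j, Y (j + P) = Y j := by
  classical
  have e1 : (Polynomial.aeval shiftE Q) Y = 0 := by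
    funext j; rw [shiftE_aeval]; exact hrec j
  have e2 : (Polynomial.aeval shiftE (Polynomial.X ^ r - 1 : Polynomial ℚ)) Y = 0 := by
    funext j
    simp [shiftE_pow, hY]
  set a : Polynomial ℚ := ∏ d ∈ r.divisors.filter (fun d => Polynomial.cyclotomic d ℚ ∣ Q), Polynomial.cyclotomic d ℚ with ha
  set b : Polynomial ℚ := ∏ d ∈ r.divisors.filter (fun d => ¬ Polynomial.cyclotomic d ℚ ∣ Q), Polynomial.cyclotomic d ℚ with hb
  have hab : a * b = Polynomial.X ^ r - 1 := by
    rw [ha, hb, Finset.prod_filter_mul_prod_filter_not, Polynomial.prod_cyclotomic_eq_X_pow_sub_one hr]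
  have hcop : IsCoprime b Q := by
    apply IsCoprime.prod_left
    intro d hd
    rw [Finset.mem_filter] at hd
    have hd0 : 0 < d := Nat.pos_of_mem_divisors hd.1
    exact ((Polynomial.cyclotomic.irreducible_rat hd0).coprime_iff_not_dvd).2 hd.2
  obtain ⟨s, t, hst⟩ := hcop
  have e3 : (Polynomial.aeval shiftE a) Y = 0 := by
    have : a = s * (a * b) + t * a * Q := by
      calc a = a * (s * b + t * Q) := by rw [hst, mul_one]
        _ = _ := by ring
    rw [this, hab]
    simp only [map_add, map_mul, LinearMap.add_apply, Module.End.mul_apply, e1, e2, map_zero, add_zero]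
  have hdvd : a ∣ Polynomial.X ^ P - 1 := by
    rw [← Polynomial.prod_cyclotomic_eq_X_pow_sub_one hP0]
    apply Finset.prod_dvd_prod_of_subset
    intro d hd
    rw [Finset.mem_filter] at hd
    have hd0 : 0 < d := Nat.pos_of_mem_divisors hd.1
    rw [Nat.mem_divisors]
    refine ⟨(cyc_dvd k d hd0 ?_).trans hP, hP0.ne'⟩
    have := Polynomial.natDegree_le_of_dvd hd.2 hQ
    rw [Polynomial.natDegree_cyclotomic] at this
    omega
  obtain ⟨c, hc⟩ := hdvd
  have e4 : (Polynomial.aeval shiftE (Polynomial.X ^ P - 1 : Polynomial ℚ)) Y = 0 := by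
    rw [hc, mul_comm, map_mul, Module.End.mul_apply, e3, map_zero]
  intro j
  have := congrFun e4 j
  simp [shiftE_pow] at this
  linarith

lemma per_window (k : ℕ) (Qv : ℕ → ℚ) (hQ : ∃ i ≤ 2 * k, Qv i ≠ 0) (u y : ℕ → ℤ) (p : ℕ)
    (hp : (4 * k).factorial ∣ p) (hp0 : 0 < p)
    (hu : ∀ j, 0 ≤ u j ∧ u j ≤ 2) (hy : ∀ j, y j = u (j + p) - u j)
    (hrec : ∀ j < 2 * 5 ^ (2 * k + 1) + 2 * k + 2 * p + 1,
      ∑ i ∈ range (2 * k + 1), Qv i * (y (j + i) : ℚ) = 0) :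
    ∀ i ≤ 2 * k, y (5 ^ (2 * k + 1) + i) = 0 := by
  classical
  set n := 2 * k + 1 with hn
  have hy2 : ∀ j, -2 ≤ y j ∧ y j ≤ 2 := fun j => by
    have := hu j; have := hu (j + p); rw [hy]; omega
  -- pigeonhole
  obtain ⟨n1, n2, hlt, hn2, hwin⟩ : ∃ n1 n2, n1 < n2 ∧ n2 ≤ 5 ^ n ∧ ∀ i < n, y (n1 + i) = y (n2 + i) := by
    let F : ℕ → (Fin n → Fin 5) := fun j i => ⟨(y (j + i) + 2).toNat, by have := hy2 (j + i); omega⟩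
    obtain ⟨a, ha, b, hb, hab, hF⟩ := Finset.exists_ne_map_eq_of_card_lt_of_maps_to
      (s := range (5 ^ n + 1)) (t := (univ : Finset (Fin n → Fin 5))) (by simp) (f := F) (fun _ _ => mem_univ _)
    have hw : ∀ i < n, y (a + i) = y (b + i) := by
      intro i hi
      have h1 := congrFun hF ⟨i, hi⟩
      simp only [F, Fin.mk.injEq] at h1
      have := hy2 (a + i); have := hy2 (b + i)
      omega
    rw [mem_range] at ha hb
    rcases lt_or_gt_of_ne hab with h | h
    · exact ⟨a, b, h, by omega, hw⟩
    · exact ⟨b, a, h, by omega, fun i hi => (hw i hi).symm⟩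
  set r := n2 - n1 with hr
  have hr0 : 0 < r := by omega
  let Y : ℕ → ℚ := fun j => y (n1 + j % r)
  have hYper : ∀ j, Y (j + r) = Y j := fun j => by simp [Y]
  have hYy : ∀ j, j < r + n → Y j = y (n1 + j) := by
    intro j
    induction j using Nat.strong_induction_on with
    | _ j ih =>
      intro hj
      by_cases h : j < r
      · simp [Y, Nat.mod_eq_of_lt h]
      · have h1 := ih (j - r) (by omega) (by omega)
        have h2 := hYper (j - r)
        rw [Nat.sub_add_cancel (by omega)] at h2
        rw [h2, h1, hwin (j - r) (by omega)]
        congr 2; omega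
  have hYrec : ∀ j, ∑ i ∈ range n, Qv i * Y (j + i) = 0 := by
    intro j
    have h1 : ∀ i, Y (j + i) = Y (j % r + i) := by
      intro i; simp [Y]
    rw [← hrec (n1 + j % r) (by have := Nat.mod_lt j hr0; omega)]
    apply sum_congr rfl
    intro i hi
    rw [mem_range] at hi
    rw [h1, hYy _ (by have := Nat.mod_lt j hr0; omega)]
    congr 3; ring
  let Q : Polynomial ℚ := ∑ i ∈ range n, Polynomial.monomial i (Qv i)
  have hQc : ∀ i, Q.coeff i = if i < n then Qv i else 0 := by
    intro i
    simp only [Q, Polynomial.finsetSum_coeff, Polynomial.coeff_monomial]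
    simp
  have hQ0 : Q ≠ 0 := by
    obtain ⟨i, hi, h⟩ := hQ
    intro h0
    have := hQc i
    rw [h0, if_pos (by omega)] at this
    exact h this.symm
  have hQd : Q.natDegree ≤ 2 * k := by
    rw [Polynomial.natDegree_le_iff_coeff_eq_zero]
    intro N hN
    rw [hQc, if_neg (by omega)]
  have hP := per_of_rec k r hr0 Q hQ0 hQd Y hYper (by
    intro j
    rw [Polynomial.sum_over_range' _ (by simp) n (by omega), ← hYrec j]
    apply sum_congr rfl
    intro i hi
    rw [hQc, if_pos (mem_range.1 hi)]) p hp hp0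
  -- agreement on the long range
  obtain ⟨t, ht, htmax⟩ : ∃ t, (t < n ∧ Qv t ≠ 0) ∧ ∀ i < n, t < i → Qv i = 0 := by
    obtain ⟨i, hi, h⟩ := hQ
    let s := (range n).filter (fun i => Qv i ≠ 0)
    have hs : s.Nonempty := ⟨i, by simp [s, h]; omega⟩
    refine ⟨s.max' hs, by simpa [s] using s.max'_mem hs, ?_⟩
    intro i hi hlt
    by_contra h
    exact absurd (s.le_max' i (by simp [s, h, hi])) (by omega)
  have hagree : ∀ j, j < 5 ^ n + 2 * k + 2 * p + 1 → Y j = y (n1 + j) := by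
    intro j
    induction j using Nat.strong_induction_on with
    | _ j ih =>
      intro hj
      by_cases h : j < r + n
      · exact hYy j h
      · have h1 := hYrec (j - t)
        have h2 := hrec (n1 + (j - t)) (by omega)
        have h3 : ∑ i ∈ range n, Qv i * (Y (j - t + i) - y (n1 + (j - t) + i)) = 0 := by
          simp_rw [mul_sub]
          rw [sum_sub_distrib, h1, h2, sub_zero]
        rw [sum_eq_single t] at h3
        · have h4 := (mul_eq_zero.1 h3).resolve_left ht.2
          have e1 : j - t + t = j := by omega
          have e2 : n1 + (j - t) + t = n1 + j := by omega
          rw [e1, e2] at h4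
          linarith
        · intro i hi hit
          rw [mem_range] at hi
          rcases lt_or_gt_of_ne hit with hlt' | hgt
          · rw [ih (j - t + i) (by omega) (by omega), ← add_assoc]; simp
          · rw [htmax i hi hgt, zero_mul]
        · intro hh; exact absurd (mem_range.2 ht.1) hh
  have hyP : ∀ j, j < 5 ^ n + 2 * k + p + 1 → y (n1 + j + p) = y (n1 + j) := by
    intro j hj
    have h1 := hagree j (by omega)
    have h2 := hagree (j + p) (by omega)
    rw [hP j, h1, ← add_assoc] at h2
    exact_mod_cast h2.symm
  intro i hi
  have key : ∀ j, j ≤ 5 ^ n + 2 * k → y (n1 + j) = 0 := by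
    intro j hj
    have a0 := hy (n1 + j)
    have a1 := hy (n1 + j + p)
    have a2 := hy (n1 + j + p + p)
    have b1 := hyP j (by omega)
    have b2 := hyP (j + p) (by omega)
    rw [← add_assoc] at b2
    have := hu (n1 + j); have := hu (n1 + j + p + p + p)
    omega
  have := key (5 ^ n + i - n1) (by omega)
  rwa [Nat.add_sub_of_le (by omega)] at this


noncomputable def ee (n : ℤ) (θ : ℝ) : ℂ := Complex.exp ((n : ℂ) * θ * Complex.I)

lemma ee_add (m n : ℤ) (θ : ℝ) : ee (m + n) θ = ee m θ * ee n θ := by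
  unfold ee; rw [← Complex.exp_add]; congr 1; push_cast; ring

lemma ee_zero (θ : ℝ) : ee 0 θ = 1 := by simp [ee]

lemma ee_norm (n : ℤ) (θ : ℝ) : ‖ee n θ‖ = 1 := by
  unfold ee
  have : (n : ℂ) * θ * Complex.I = ((n * θ : ℝ) : ℂ) * Complex.I := by push_cast; ring
  rw [this, Complex.norm_exp_ofReal_mul_I]

lemma ee_re (n : ℤ) (θ : ℝ) : (ee n θ).re = Real.cos (n * θ) := by
  unfold ee
  have : (n : ℂ) * θ * Complex.I = ((n * θ : ℝ) : ℂ) * Complex.I := by push_cast; ring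
  rw [this, Complex.exp_ofReal_mul_I_re]

lemma ee_im (n : ℤ) (θ : ℝ) : (ee n θ).im = Real.sin (n * θ) := by
  unfold ee
  have : (n : ℂ) * θ * Complex.I = ((n * θ : ℝ) : ℂ) * Complex.I := by push_cast; ring
  rw [this, Complex.exp_ofReal_mul_I_im]

lemma ee_conj (n : ℤ) (θ : ℝ) : (starRingEnd ℂ) (ee n θ) = ee (-n) θ := by
  apply Complex.ext
  · simp [ee_re]
  · simp [ee_im]

lemma ee_pow (n : ℕ) (θ : ℝ) : ee 1 θ ^ n = ee n θ := by
  unfold ee; rw [← Complex.exp_nat_mul]; congr 1; push_cast; ring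

lemma ee_cont (n : ℤ) : Continuous (ee n) := by
  unfold ee; fun_prop

lemma ee_int (n : ℤ) : ∫ θ in (0:ℝ)..(2 * Real.pi), ee n θ = if n = 0 then 2 * (Real.pi : ℂ) else 0 := by
  split_ifs with h
  · subst h; simp [ee_zero]
  · have hc : ((n : ℂ) * Complex.I) ≠ 0 := by simp [h]
    have := integral_exp_mul_complex (a := 0) (b := 2 * Real.pi) hc
    have h2 : ∀ θ : ℝ, ee n θ = Complex.exp ((n : ℂ) * Complex.I * θ) := by
      intro θ; unfold ee; congr 1; ring
    simp_rw [h2, this]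
    have h3 : Complex.exp ((n : ℂ) * Complex.I * ((2 * Real.pi : ℝ) : ℂ)) = 1 := by
      rw [Complex.exp_eq_one_iff]
      exact ⟨n, by push_cast; ring⟩
    rw [h3]; simp

lemma parseval (W : Finset ℤ) (c : ℤ → ℝ) (σ : ℤ → ℤ) (hσ : Set.InjOn σ W) :
    ∫ θ in (0:ℝ)..(2 * Real.pi), ‖∑ w ∈ W, (c w : ℂ) * ee (σ w) θ‖ ^ 2 = 2 * Real.pi * ∑ w ∈ W, c w ^ 2 := by
  have h1 : ∀ θ : ℝ, ((‖∑ w ∈ W, (c w : ℂ) * ee (σ w) θ‖ ^ 2 : ℝ) : ℂ) =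
      ∑ w ∈ W, ∑ v ∈ W, ((c w * c v : ℝ) : ℂ) * ee (σ w - σ v) θ := by
    intro θ
    push_cast
    rw [← Complex.mul_conj', map_sum, Finset.sum_mul_sum]
    apply sum_congr rfl; intro w _
    apply sum_congr rfl; intro v _
    rw [map_mul, ee_conj, Complex.conj_ofReal, sub_eq_add_neg, ee_add]
    ring
  have h2 : ((∫ θ in (0:ℝ)..(2 * Real.pi), ‖∑ w ∈ W, (c w : ℂ) * ee (σ w) θ‖ ^ 2 : ℝ) : ℂ) =
      ((2 * Real.pi * ∑ w ∈ W, c w ^ 2 : ℝ) : ℂ) := by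
    rw [← intervalIntegral.integral_ofReal]
    simp_rw [h1]
    rw [intervalIntegral.integral_finsetSum]
    · push_cast
      rw [mul_sum]
      apply sum_congr rfl; intro w hw
      rw [intervalIntegral.integral_finsetSum]
      · rw [sum_eq_single w]
        · rw [intervalIntegral.integral_const_mul, ee_int]
          simp; ring
        · intro v hv hvw
          rw [intervalIntegral.integral_const_mul, ee_int, if_neg, mul_zero]
          intro h
          exact hvw (hσ hv hw (by linarith))
        · intro h; exact absurd hw h
      · intro v _
        exact ((ee_cont _).const_mul _ |>.intervalIntegrable _ _) 
    · intro v _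
      apply Continuous.intervalIntegrable
      apply continuous_finsetSum
      intro i _
      exact continuous_const.mul (ee_cont _)
  exact_mod_cast h2

lemma norm_exp_neg_sub_one (z : ℂ) (hz : 0 ≤ z.re) : ‖Complex.exp (-z) - 1‖ ≤ ‖z‖ := by
  have hs : Convex ℝ {w : ℂ | w.re ≤ 0} := convex_halfSpace_re_le 0
  have := hs.norm_image_sub_le_of_norm_deriv_le (f := Complex.exp) (C := 1) (x := 0) (y := -z)
    (fun w _ => Complex.differentiableAt_exp) (fun w hw => by
      rw [Complex.deriv_exp, Complex.norm_exp]
      exact Real.exp_le_one_iff.2 hw) (by simp) (by simpa using hz)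
  simpa using this

lemma sup_bound (J : ℕ) (f h : ℕ → ℂ) (hf : ∀ j, ‖f j‖ ≤ 1) (hh : ∀ j, (h j).re = ‖f j‖ ^ 2) :
    ‖∑ j ∈ range J, f j * Complex.exp (-∑ i ∈ Ico (j + 1) J, h i)‖ ^ 2 ≤ 3 * J := by
  induction J with
  | zero => simp
  | succ J ih =>
    have h1 : ∑ j ∈ range (J + 1), f j * Complex.exp (-∑ i ∈ Ico (j + 1) (J + 1), h i) =
        (∑ j ∈ range J, f j * Complex.exp (-∑ i ∈ Ico (j + 1) J, h i)) * Complex.exp (- h J) + f J := by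
      rw [sum_range_succ, sum_mul]
      congr 1
      · apply sum_congr rfl
        intro j hj
        rw [mem_range] at hj
        rw [sum_Ico_succ_top (by omega), neg_add, Complex.exp_add, mul_assoc]
      · simp
    rw [h1]
    set Φ := ∑ j ∈ range J, f j * Complex.exp (-∑ i ∈ Ico (j + 1) J, h i)
    set a := ‖Φ‖
    set u := ‖f J‖ with hu
    have hu0 : 0 ≤ u := norm_nonneg _
    have hu1 : u ≤ 1 := hf J
    have ha0 : 0 ≤ a := norm_nonneg _
    have hE : ‖Complex.exp (- h J)‖ = Real.exp (-u ^ 2) := by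
      rw [Complex.norm_exp, Complex.neg_re, hh]
    have hE2 : Real.exp (-u ^ 2) ≤ 1 := Real.exp_le_one_iff.2 (by nlinarith)
    have hE0 := Real.exp_pos (-u ^ 2)
    have hE3 : Real.exp (-u ^ 2) ^ 2 ≤ 1 - 2 / 3 * u ^ 2 := by
      have e0 : Real.exp (-u ^ 2) ^ 2 = (Real.exp (2 * u ^ 2))⁻¹ := by
        rw [← Real.exp_nat_mul, ← Real.exp_neg]; congr 1; push_cast; ring
      have e1 : 1 + 2 * u ^ 2 ≤ Real.exp (2 * u ^ 2) := by
        have := Real.add_one_le_exp (2 * u ^ 2); linarith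
      rw [e0]
      calc (Real.exp (2 * u ^ 2))⁻¹ ≤ (1 + 2 * u ^ 2)⁻¹ := by gcongr
        _ ≤ _ := by
          rw [inv_le_iff_one_le_mul₀ (by positivity)]
          have : u ^ 2 ≤ 1 := by nlinarith
          nlinarith [sq_nonneg u]
    set E := Real.exp (-u ^ 2)
    have h2 : ‖Φ * Complex.exp (- h J) + f J‖ ≤ a * E + u := by
      refine (norm_add_le _ _).trans ?_
      rw [norm_mul, hE]
    have h3 : ‖Φ * Complex.exp (- h J) + f J‖ ^ 2 ≤ (a * E + u) ^ 2 := by gcongr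
    push_cast
    have h4 : a ^ 2 * E ^ 2 ≤ a ^ 2 * (1 - 2 / 3 * u ^ 2) := by gcongr
    have h5 : a * E * u ≤ a * u := by nlinarith [mul_nonneg ha0 hu0]
    nlinarith [sq_nonneg (a * u - 3 / 2)]


attribute [fun_prop] ee_cont

lemma cauchy_zero (E : ℂ → ℂ) (hE : Differentiable ℂ E) (k : ℤ) (hk : 0 < k) :
    ∫ θ in (0:ℝ)..(2 * Real.pi), ee k θ * E (ee 1 θ) = 0 := by
  obtain ⟨n, rfl⟩ := Int.eq_ofNat_of_zero_le hk.le
  have hn : n ≠ 0 := by rintro rfl; simp at hk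
  have h := DiffContOnCl.circleAverage (f := fun z => z ^ n * E z) (c := 0) (R := 1)
    (Differentiable.diffContOnCl (by fun_prop))
  rw [Real.circleAverage_def] at h
  simp only [zero_pow hn, zero_mul] at h
  have h2 := (smul_eq_zero.1 h).resolve_left (by positivity)
  rw [← h2]
  apply intervalIntegral.integral_congr
  intro θ _
  have : circleMap 0 1 θ = ee 1 θ := by simp [circleMap, ee]
  simp only [this, ee_pow]

/-- Bound for the leaked mass. -/
lemma leak (W : Finset ℤ) (c : ℤ → ℝ) (x : ℤ) (E : ℂ → ℂ) (hE : Differentiable ℂ E) (t : ℝ) (ht : 0 < t) :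
    ‖∫ θ in (0:ℝ)..(2 * Real.pi), (∑ w ∈ W, (c w : ℂ) * ee (-w) θ) * (ee x θ * (E (ee 1 θ) - 1))‖ ≤
      (t * (2 * Real.pi * ∑ w ∈ W.filter (fun w => x ≤ w), c w ^ 2) +
        t⁻¹ * ∫ θ in (0:ℝ)..(2 * Real.pi), ‖E (ee 1 θ) - 1‖ ^ 2) / 2 := by
  have hEc : Continuous (fun θ : ℝ => E (ee 1 θ)) := hE.continuous.comp (ee_cont 1)
  have hEc2 : Continuous E := hE.continuous
  have hterm : ∀ w, IntervalIntegrable (fun θ : ℝ => (c w : ℂ) * ee (-w) θ * (ee x θ * (E (ee 1 θ) - 1)))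
      MeasureTheory.volume 0 (2 * Real.pi) := by
    intro w
    apply Continuous.intervalIntegrable
    have := ee_cont (-w); have := ee_cont x
    fun_prop
  have hsum : ∀ V : Finset ℤ, ∫ θ in (0:ℝ)..(2 * Real.pi), (∑ w ∈ V, (c w : ℂ) * ee (-w) θ) * (ee x θ * (E (ee 1 θ) - 1))
      = ∑ w ∈ V, ∫ θ in (0:ℝ)..(2 * Real.pi), (c w : ℂ) * ee (-w) θ * (ee x θ * (E (ee 1 θ) - 1)) := by
    intro V
    simp_rw [sum_mul]
    rw [intervalIntegral.integral_finsetSum]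
    intro w _
    exact hterm w
  have hred : ∫ θ in (0:ℝ)..(2 * Real.pi), (∑ w ∈ W, (c w : ℂ) * ee (-w) θ) * (ee x θ * (E (ee 1 θ) - 1)) =
      ∫ θ in (0:ℝ)..(2 * Real.pi), (∑ w ∈ W.filter (fun w => x ≤ w), (c w : ℂ) * ee (-w) θ) * (ee x θ * (E (ee 1 θ) - 1)) := by
    rw [hsum, hsum]
    symm
    apply sum_subset (filter_subset _ _)
    intro w hw hw2
    have hlt : 0 < x - w := by
      simp only [mem_filter, hw, true_and, not_le] at hw2; omega
    have h1 : ∀ θ : ℝ, (c w : ℂ) * ee (-w) θ * (ee x θ * (E (ee 1 θ) - 1)) =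
        (c w : ℂ) * (ee (x - w) θ * (fun z => E z - 1) (ee 1 θ)) := by
      intro θ
      rw [sub_eq_add_neg x w, ee_add]; ring
    simp_rw [h1]
    have h2 := cauchy_zero (fun z => E z - 1) (by fun_prop) _ hlt
    rw [intervalIntegral.integral_const_mul, h2, mul_zero]
  rw [hred]
  set V := W.filter (fun w => x ≤ w)
  have hpi : (0:ℝ) ≤ 2 * Real.pi := by positivity
  have hGc : Continuous (fun θ : ℝ => ∑ w ∈ V, (c w : ℂ) * ee (-w) θ) := by
    apply continuous_finsetSum; intro w _; exact continuous_const.mul (ee_cont _)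
  have hx := ee_cont x
  calc _ ≤ ∫ θ in (0:ℝ)..(2 * Real.pi), ‖(∑ w ∈ V, (c w : ℂ) * ee (-w) θ) * (ee x θ * (E (ee 1 θ) - 1))‖ :=
        intervalIntegral.norm_integral_le_integral_norm hpi
    _ ≤ ∫ θ in (0:ℝ)..(2 * Real.pi), (t / 2 * ‖∑ w ∈ V, (c w : ℂ) * ee (-w) θ‖ ^ 2 + t⁻¹ / 2 * ‖E (ee 1 θ) - 1‖ ^ 2) := by
        apply intervalIntegral.integral_mono_on hpi
        · apply Continuous.intervalIntegrable; fun_prop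
        · apply Continuous.intervalIntegrable; fun_prop
        · intro θ _
          rw [norm_mul, norm_mul, ee_norm, one_mul]
          set a := ‖∑ w ∈ V, (c w : ℂ) * ee (-w) θ‖
          set b := ‖E (ee 1 θ) - 1‖
          have : t / 2 * a ^ 2 + t⁻¹ / 2 * b ^ 2 - a * b = (t * a - b) ^ 2 / (2 * t) := by
            field_simp; ring
          have h2 : 0 ≤ (t * a - b) ^ 2 / (2 * t) := by positivity
          linarith
    _ = _ := by
        rw [intervalIntegral.integral_add, intervalIntegral.integral_const_mul, intervalIntegral.integral_const_mul,
          parseval V c (fun w => -w) (fun a _ b _ h => by simpa using h)]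
        · ring
        · apply Continuous.intervalIntegrable; fun_prop
        · apply Continuous.intervalIntegrable; fun_prop

noncomputable def ff (X : Finset ℤ) (s : ℤ → ℝ) (θ : ℝ) : ℂ := (X.card : ℂ)⁻¹ * ∑ x ∈ X, (s x : ℂ) * ee x θ

noncomputable def RR (X : Finset ℤ) (s : ℤ → ℝ) (y : ℤ) (z : ℂ) : ℂ :=
  ∑ x ∈ X.filter (fun x => y ≤ x), (((if x = y then 1 else 2) * s x : ℝ) : ℂ) * z ^ (x - y).toNat

noncomputable def HH (X : Finset ℤ) (s : ℤ → ℝ) (z : ℂ) : ℂ :=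
  (X.card : ℂ)⁻¹ ^ 2 * ∑ y ∈ X, (s y : ℂ) * RR X s y z

lemma HH_diff (X : Finset ℤ) (s : ℤ → ℝ) : Differentiable ℂ (HH X s) := by
  unfold HH RR; fun_prop

lemma HH_cont (X : Finset ℤ) (s : ℤ → ℝ) : Continuous (HH X s) := (HH_diff X s).continuous

lemma RR_cont (X : Finset ℤ) (s : ℤ → ℝ) (y : ℤ) : Continuous (RR X s y) := by
  unfold RR; fun_prop

attribute [fun_prop] HH_cont RR_cont HH_diff

lemma ff_cont (X : Finset ℤ) (s : ℤ → ℝ) : Continuous (ff X s) := by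
  unfold ff; fun_prop

attribute [fun_prop] ff_cont

lemma ff_norm (X : Finset ℤ) (s : ℤ → ℝ) (hs : ∀ x, |s x| ≤ 1) (θ : ℝ) : ‖ff X s θ‖ ≤ 1 := by
  unfold ff
  rw [norm_mul, norm_inv]
  have h1 : ‖∑ x ∈ X, (s x : ℂ) * ee x θ‖ ≤ X.card := by
    refine (norm_sum_le _ _).trans ?_
    calc _ ≤ ∑ x ∈ X, (1:ℝ) := by
          apply sum_le_sum; intro x _
          rw [norm_mul, ee_norm, mul_one, Complex.norm_real]; exact hs x
      _ = _ := by simp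
  rw [Complex.norm_natCast]
  rcases Nat.eq_zero_or_pos X.card with h | h
  · simp [h]
  · rw [inv_mul_le_iff₀ (by exact_mod_cast h)]; simpa using h1

lemma RR_ee (X : Finset ℤ) (s : ℤ → ℝ) (y : ℤ) (θ : ℝ) : RR X s y (ee 1 θ) =
    ∑ x ∈ X.filter (fun x => y ≤ x), (((if x = y then 1 else 2) * s x : ℝ) : ℂ) * ee (x - y) θ := by
  unfold RR
  apply sum_congr rfl
  intro x hx
  rw [mem_filter] at hx
  rw [ee_pow, Int.toNat_of_nonneg (by omega)]

lemma sym_sum (X : Finset ℤ) (a : ℤ → ℤ → ℝ) (ha : ∀ x y, a x y = a y x) :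
    ∑ y ∈ X, ∑ x ∈ X, a x y = ∑ y ∈ X, ∑ x ∈ X.filter (fun x => y ≤ x), (if x = y then 1 else 2) * a x y := by
  have h1 : ∑ y ∈ X, ∑ x ∈ X, a x y = ∑ y ∈ X, ∑ x ∈ X, (if y ≤ x then a x y else 0) +
      ∑ y ∈ X, ∑ x ∈ X, (if x < y then a x y else 0) := by
    rw [← sum_add_distrib]
    apply sum_congr rfl; intro y _
    rw [← sum_add_distrib]
    apply sum_congr rfl; intro x _
    rcases le_or_gt y x with h | h
    · simp [h, not_lt.2 h]
    · simp [h, not_le.2 h]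
  have h2 : ∑ y ∈ X, ∑ x ∈ X, (if x < y then a x y else 0) = ∑ y ∈ X, ∑ x ∈ X, (if y < x then a x y else 0) := by
    rw [sum_comm]
    apply sum_congr rfl; intro x _
    apply sum_congr rfl; intro y _
    rw [ha]
  rw [h1, h2, ← sum_add_distrib]
  apply sum_congr rfl; intro y _
  rw [sum_filter, ← sum_add_distrib]
  apply sum_congr rfl; intro x _
  rcases lt_trichotomy y x with h | h | h
  · simp [h, h.le, h.ne']; ring
  · simp [h]
  · simp [not_lt.2 h.le, not_le.2 h]

lemma HH_re (X : Finset ℤ) (s : ℤ → ℝ) (θ : ℝ) : (HH X s (ee 1 θ)).re = ‖ff X s θ‖ ^ 2 := by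
  have h1 : (HH X s (ee 1 θ)).re = ((X.card : ℝ)⁻¹) ^ 2 *
      ∑ y ∈ X, ∑ x ∈ X.filter (fun x => y ≤ x), (if x = y then 1 else 2) * (s x * s y * Real.cos (((x - y : ℤ) : ℝ) * θ)) := by
    unfold HH
    have : ((X.card : ℂ)⁻¹ ^ 2) = ((((X.card : ℝ)⁻¹) ^ 2 : ℝ) : ℂ) := by push_cast; rfl
    rw [this, Complex.re_ofReal_mul, Complex.re_sum]
    congr 1
    apply sum_congr rfl; intro y _
    rw [Complex.re_ofReal_mul, RR_ee, Complex.re_sum, mul_sum]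
    apply sum_congr rfl; intro x _
    rw [Complex.re_ofReal_mul, ee_re]; ring
  rw [h1, ← sym_sum X (fun x y => s x * s y * Real.cos (((x - y : ℤ) : ℝ) * θ))]
  · unfold ff
    rw [norm_mul, mul_pow, norm_inv, Complex.norm_natCast]
    congr 1
    have h2 : ((‖∑ x ∈ X, (s x : ℂ) * ee x θ‖ ^ 2 : ℝ) : ℂ) =
        ∑ x ∈ X, ∑ y ∈ X, ((s x * s y : ℝ) : ℂ) * ee (x - y) θ := by
      push_cast
      rw [← Complex.mul_conj', map_sum, Finset.sum_mul_sum]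
      apply sum_congr rfl; intro w _
      apply sum_congr rfl; intro v _
      rw [map_mul, ee_conj, Complex.conj_ofReal, sub_eq_add_neg, ee_add]
      ring
    have h3 := congrArg Complex.re h2
    rw [Complex.ofReal_re, Complex.re_sum] at h3
    rw [h3, sum_comm]
    apply sum_congr rfl; intro x _
    rw [Complex.re_sum]
    apply sum_congr rfl; intro y _
    rw [Complex.re_ofReal_mul, ee_re]
  · intro x y
    rw [show ((x - y : ℤ) : ℝ) * θ = -(((y - x : ℤ) : ℝ) * θ) by push_cast; ring, Real.cos_neg]
    ring

lemma HH_L2 (X : Finset ℤ) (s : ℤ → ℝ) (hs : ∀ x, |s x| ≤ 1) :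
    ∫ θ in (0:ℝ)..(2 * Real.pi), ‖HH X s (ee 1 θ)‖ ^ 2 ≤ 2 * Real.pi * (4 * (X.card : ℝ)⁻¹) := by
  have hpi : (0:ℝ) ≤ 2 * Real.pi := by positivity
  rcases Nat.eq_zero_or_pos X.card with h0 | h0
  · simp [HH, h0]
  have hN : (0:ℝ) < X.card := by exact_mod_cast h0
  set N : ℝ := (X.card : ℝ) with hNdef
  have hRc : ∀ y, Continuous (fun θ : ℝ => RR X s y (ee 1 θ)) := by
    intro y
    have : Continuous (RR X s y) := by unfold RR; fun_prop
    exact this.comp (ee_cont 1)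
  have hHc : Continuous (fun θ : ℝ => HH X s (ee 1 θ)) := (HH_diff X s).continuous.comp (ee_cont 1)
  calc _ ≤ ∫ θ in (0:ℝ)..(2 * Real.pi), (N⁻¹) ^ 3 * ∑ y ∈ X, ‖RR X s y (ee 1 θ)‖ ^ 2 := by
        apply intervalIntegral.integral_mono_on hpi
        · apply Continuous.intervalIntegrable; fun_prop
        · apply Continuous.intervalIntegrable; fun_prop
        · intro θ _
          unfold HH
          rw [norm_mul, norm_pow, norm_inv, Complex.norm_natCast, ← hNdef, mul_pow]
          have h1 : ‖∑ y ∈ X, (s y : ℂ) * RR X s y (ee 1 θ)‖ ≤ ∑ y ∈ X, ‖RR X s y (ee 1 θ)‖ := by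
            refine (norm_sum_le _ _).trans (sum_le_sum fun y _ => ?_)
            rw [norm_mul, Complex.norm_real]
            exact mul_le_of_le_one_left (norm_nonneg _) (hs y)
          have h2 := sq_sum_le_card_mul_sum_sq (s := X) (f := fun y => ‖RR X s y (ee 1 θ)‖)
          have h3 : ‖∑ y ∈ X, (s y : ℂ) * RR X s y (ee 1 θ)‖ ^ 2 ≤ N * ∑ y ∈ X, ‖RR X s y (ee 1 θ)‖ ^ 2 :=
            (pow_le_pow_left₀ (norm_nonneg _) h1 2).trans h2
          calc _ ≤ ((N⁻¹) ^ 2) ^ 2 * (N * ∑ y ∈ X, ‖RR X s y (ee 1 θ)‖ ^ 2) := by gcongr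
            _ = _ := by field_simp
    _ = (N⁻¹) ^ 3 * ∑ y ∈ X, ∫ θ in (0:ℝ)..(2 * Real.pi), ‖RR X s y (ee 1 θ)‖ ^ 2 := by
        rw [intervalIntegral.integral_const_mul, intervalIntegral.integral_finsetSum]
        intro y _
        apply Continuous.intervalIntegrable
        have := hRc y
        fun_prop
    _ ≤ (N⁻¹) ^ 3 * ∑ y ∈ X, (2 * Real.pi * (4 * N)) := by
        gcongr with y hy
        simp_rw [RR_ee]
        rw [parseval (X.filter (fun x => y ≤ x)) (fun x => (if x = y then 1 else 2) * s x) (fun x => x - y)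
          (fun a _ b _ h => by simpa using h)]
        gcongr
        calc _ ≤ ∑ x ∈ X.filter (fun x => y ≤ x), (4:ℝ) := by
              apply sum_le_sum; intro x _
              have := hs x
              rw [abs_le] at this
              split_ifs <;> nlinarith
          _ ≤ ∑ x ∈ X, (4:ℝ) := sum_le_sum_of_subset_of_nonneg (filter_subset _ _) (by intros; norm_num)
          _ = 4 * N := by simp [hNdef]; ring
    _ = _ := by
        rw [sum_const, nsmul_eq_mul, ← hNdef]
        field_simp


lemma exists_upper (B : Finset ℤ) (s : ℕ) (hs : s ≤ B.card) :
    ∃ X ⊆ B, X.card = s ∧ ∀ x ∈ X, ∀ b ∈ B, x ≤ b → b ∈ X := by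
  induction s with
  | zero => exact ⟨∅, by simp, by simp, by simp⟩
  | succ s ih =>
    obtain ⟨X, hXB, hc, hu⟩ := ih (by omega)
    have hne : (B \ X).Nonempty := by
      rw [← card_pos, card_sdiff_of_subset hXB]; omega
    set m := (B \ X).max' hne
    have hm : m ∈ B \ X := max'_mem _ _
    rw [mem_sdiff] at hm
    refine ⟨insert m X, insert_subset hm.1 hXB, by rw [card_insert_of_notMem hm.2, hc], ?_⟩
    intro x hx b hb hxb
    by_cases hbX : b ∈ X
    · exact mem_insert_of_mem hbX
    · rcases mem_insert.1 hx with rfl | hx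
      · have : b ≤ m := le_max' _ _ (mem_sdiff.2 ⟨hb, hbX⟩)
        rw [mem_insert]; left; omega
      · exact absurd (hu x hx b hb hxb) hbX

lemma E_L2 (X : ℕ → Finset ℤ) (s : ℤ → ℝ) (hs : ∀ x, |s x| ≤ 1) (lam J j : ℕ) (hlam : 0 < lam)
    (hX : ∀ i < J, (X i).card = lam ^ i) :
    ∫ θ in (0:ℝ)..(2 * Real.pi), ‖Complex.exp (-∑ i ∈ Ico (j + 1) J, HH (X i) s (ee 1 θ)) - 1‖ ^ 2 ≤
      2 * Real.pi * (4 * J ^ 2 * ((lam : ℝ) ^ (j + 1))⁻¹) := by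
  have hpi : (0:ℝ) ≤ 2 * Real.pi := by positivity
  have hl1 : (1:ℝ) ≤ lam := by exact_mod_cast hlam
  have hcardle : ((Ico (j + 1) J).card : ℝ) ≤ J := by
    rw [Nat.card_Ico]; exact_mod_cast Nat.sub_le _ _
  calc _ ≤ ∫ θ in (0:ℝ)..(2 * Real.pi), (J : ℝ) * ∑ i ∈ Ico (j + 1) J, ‖HH (X i) s (ee 1 θ)‖ ^ 2 := by
        apply intervalIntegral.integral_mono_on hpi
        · apply Continuous.intervalIntegrable; fun_prop
        · apply Continuous.intervalIntegrable; fun_prop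
        · intro θ _
          have h1 : ‖Complex.exp (-∑ i ∈ Ico (j + 1) J, HH (X i) s (ee 1 θ)) - 1‖ ≤
              ‖∑ i ∈ Ico (j + 1) J, HH (X i) s (ee 1 θ)‖ := by
            apply norm_exp_neg_sub_one
            rw [Complex.re_sum]
            apply sum_nonneg; intro i _
            rw [HH_re]; positivity
          have h2 : ‖∑ i ∈ Ico (j + 1) J, HH (X i) s (ee 1 θ)‖ ≤ ∑ i ∈ Ico (j + 1) J, ‖HH (X i) s (ee 1 θ)‖ :=
            norm_sum_le _ _
          have h3 := sq_sum_le_card_mul_sum_sq (s := Ico (j + 1) J) (f := fun i => ‖HH (X i) s (ee 1 θ)‖)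
          calc _ ≤ (∑ i ∈ Ico (j + 1) J, ‖HH (X i) s (ee 1 θ)‖) ^ 2 := by
                gcongr; exact h1.trans h2
            _ ≤ _ := h3
            _ ≤ _ := by gcongr
    _ = (J : ℝ) * ∑ i ∈ Ico (j + 1) J, ∫ θ in (0:ℝ)..(2 * Real.pi), ‖HH (X i) s (ee 1 θ)‖ ^ 2 := by
        rw [intervalIntegral.integral_const_mul, intervalIntegral.integral_finsetSum]
        intro i _
        apply Continuous.intervalIntegrable
        fun_prop
    _ ≤ (J : ℝ) * ∑ i ∈ Ico (j + 1) J, (2 * Real.pi * (4 * ((lam : ℝ) ^ (j + 1))⁻¹)) := by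
        gcongr with i hi
        rw [mem_Ico] at hi
        refine (HH_L2 (X i) s hs).trans ?_
        rw [hX i hi.2]
        push_cast
        gcongr
        exact hi.1
    _ ≤ (J : ℝ) * (J * (2 * Real.pi * (4 * ((lam : ℝ) ^ (j + 1))⁻¹))) := by
        rw [sum_const, nsmul_eq_mul]
        gcongr
    _ = _ := by ring

lemma littlewood (W B : Finset ℤ) (c : ℤ → ℝ) (M δ K : ℝ) (J lam : ℕ) (hM : 0 < M) (hδ : 0 < δ) (hK : 0 < K)
    (hlam : 0 < lam) (hBW : B ⊆ W) (hc : ∀ w ∈ W, |c w| ≤ M) (hB : ∀ b ∈ B, δ ≤ |c b|)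
    (hcount : ∀ x ∈ B, ((W.filter (fun w => x ≤ w)).card : ℝ) ≤ K * (B.filter (fun w => x ≤ w)).card)
    (hl : 16 * J ^ 2 * M ^ 2 * K ≤ lam * δ ^ 2) (hcard : lam ^ J ≤ B.card) :
    J * δ ^ 2 * (2 * Real.pi) ^ 2 ≤
      12 * (∫ θ in (0:ℝ)..(2 * Real.pi), ‖∑ w ∈ W, (c w : ℂ) * ee (-w) θ‖) ^ 2 := by
  have hpi : (0:ℝ) ≤ 2 * Real.pi := by positivity
  have hX : ∀ j : ℕ, ∃ X ⊆ B, (j < J → X.card = lam ^ j) ∧ ∀ x ∈ X, ∀ b ∈ B, x ≤ b → b ∈ X := by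
    intro j
    by_cases hj : j < J
    · obtain ⟨X, h1, h2, h3⟩ := exists_upper B (lam ^ j) ((Nat.pow_le_pow_right hlam hj.le).trans hcard)
      exact ⟨X, h1, fun _ => h2, h3⟩
    · exact ⟨∅, by simp, fun h => absurd h hj, by simp⟩
  choose X hXB hXc hXu using hX
  set s : ℤ → ℝ := fun x => ((SignType.sign (c x) : SignType) : ℝ) with hsdef
  have hs : ∀ x, |s x| ≤ 1 := by
    intro x
    simp only [hsdef]
    rcases lt_trichotomy (c x) 0 with h | h | h
    · simp [h]
    · simp [h]
    · simp [h]
  have hsc : ∀ x, s x * c x = |c x| := by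
    intro x
    simp only [hsdef]
    exact sign_mul_self (c x)
  set G : ℝ → ℂ := fun θ => ∑ w ∈ W, (c w : ℂ) * ee (-w) θ with hG
  have hGc : Continuous G := by simp only [hG]; fun_prop
  set E : ℕ → ℂ → ℂ := fun j z => Complex.exp (-∑ i ∈ Ico (j + 1) J, HH (X i) s z) with hE
  have hEd : ∀ j, Differentiable ℂ (E j) := by
    intro j; simp only [hE]; fun_prop
  have hEc : ∀ j, Continuous (fun θ : ℝ => E j (ee 1 θ)) := fun j => (hEd j).continuous.comp (ee_cont 1)
  -- the main lower bound
  have hmain : ∀ j < J, ∀ x ∈ X j,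
      Real.pi * δ ≤ ((s x : ℂ) * ∫ θ in (0:ℝ)..(2 * Real.pi), G θ * (ee x θ * E j (ee 1 θ))).re := by
    intro j hj x hx
    have hxB := hXB j hx
    have hsplit : ∫ θ in (0:ℝ)..(2 * Real.pi), G θ * (ee x θ * E j (ee 1 θ)) =
        2 * Real.pi * c x + ∫ θ in (0:ℝ)..(2 * Real.pi), G θ * (ee x θ * (E j (ee 1 θ) - 1)) := by
      have h1 : ∫ θ in (0:ℝ)..(2 * Real.pi), G θ * ee x θ = 2 * Real.pi * c x := by
        simp only [hG, sum_mul]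
        rw [intervalIntegral.integral_finsetSum]
        · rw [sum_eq_single x]
          · have : ∀ θ, (c x : ℂ) * ee (-x) θ * ee x θ = c x := by
              intro θ; rw [mul_assoc, ← ee_add]; simp [ee_zero]
            simp_rw [this]; simp
          · intro b _ hbx
            have : ∀ θ, (c b : ℂ) * ee (-b) θ * ee x θ = c b * ee (-b + x) θ := by
              intro θ; rw [mul_assoc, ← ee_add]
            simp_rw [this]
            rw [intervalIntegral.integral_const_mul, ee_int, if_neg, mul_zero]
            omega
          · intro h; exact absurd (hBW hxB) h
        · intro w _; apply Continuous.intervalIntegrable; fun_prop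
      rw [← h1, ← intervalIntegral.integral_add]
      · congr 1; ext θ; ring
      · apply Continuous.intervalIntegrable; fun_prop
      · apply Continuous.intervalIntegrable; have := hEc j; fun_prop
    have hlamR : (0:ℝ) < lam := by exact_mod_cast hlam
    set L : ℝ := M ^ 2 * (K * lam ^ j) with hL
    have hLpos : 0 < L := by positivity
    have hleak := leak W c x (E j) (hEd j) (δ / (2 * L)) (by positivity)
    have hsq : ∑ w ∈ W.filter (fun w => x ≤ w), c w ^ 2 ≤ L := by
      calc _ ≤ ∑ w ∈ W.filter (fun w => x ≤ w), M ^ 2 := by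
            apply sum_le_sum; intro w hw
            exact sq_le_sq' (by have := (abs_le.1 (hc w (mem_filter.1 hw).1)).1; linarith) (abs_le.1 (hc w (mem_filter.1 hw).1)).2
        _ = M ^ 2 * (W.filter (fun w => x ≤ w)).card := by rw [sum_const, nsmul_eq_mul]; ring
        _ ≤ M ^ 2 * (K * (B.filter (fun w => x ≤ w)).card) := by gcongr; exact hcount x hxB
        _ ≤ M ^ 2 * (K * (X j).card) := by
            gcongr
            intro b hb
            rw [mem_filter] at hb
            exact hXu j x hx b hb.1 hb.2
        _ = L := by rw [hXc j hj, hL]; push_cast; rfl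
    have hE2 := E_L2 X s hs lam J j hlam hXc
    have hleak2 : ‖∫ θ in (0:ℝ)..(2 * Real.pi), G θ * (ee x θ * (E j (ee 1 θ) - 1))‖ ≤ Real.pi * δ := by
      refine hleak.trans ?_
      have hstep : (δ / (2 * L) * (2 * Real.pi * ∑ w ∈ W with x ≤ w, c w ^ 2) +
          (δ / (2 * L))⁻¹ * ∫ θ in (0:ℝ)..(2 * Real.pi), ‖E j (ee 1 θ) - 1‖ ^ 2) / 2 ≤
          (δ / (2 * L) * (2 * Real.pi * L) +
          (δ / (2 * L))⁻¹ * (2 * Real.pi * (4 * J ^ 2 * ((lam : ℝ) ^ (j + 1))⁻¹))) / 2 := by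
        gcongr
      refine hstep.trans ?_
      have h1 : δ / (2 * L) * (2 * Real.pi * L) = Real.pi * δ := by field_simp
      have h2 : (δ / (2 * L))⁻¹ * (2 * Real.pi * (4 * J ^ 2 * ((lam : ℝ) ^ (j + 1))⁻¹)) =
          Real.pi * (16 * J ^ 2 * M ^ 2 * K) / (lam * δ) := by
        rw [hL, pow_succ]; field_simp; ring
      have h3 : Real.pi * (16 * J ^ 2 * M ^ 2 * K) / (lam * δ) ≤ Real.pi * δ := by
        rw [div_le_iff₀ (by positivity)]
        calc _ ≤ Real.pi * (lam * δ ^ 2) := by gcongr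
          _ = _ := by ring
      rw [h1, h2]; linarith
    rw [hsplit, mul_add, Complex.add_re]
    have h1 : ((s x : ℂ) * (2 * Real.pi * c x)).re = 2 * Real.pi * |c x| := by
      rw [← hsc]
      have : (s x : ℂ) * (2 * Real.pi * c x) = ((2 * Real.pi * (s x * c x) : ℝ) : ℂ) := by push_cast; ring
      rw [this, Complex.ofReal_re]
    rw [h1]
    have h2 : |((s x : ℂ) * ∫ θ in (0:ℝ)..(2 * Real.pi), G θ * (ee x θ * (E j (ee 1 θ) - 1))).re| ≤ Real.pi * δ := by
      refine (Complex.abs_re_le_norm _).trans ?_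
      rw [norm_mul, Complex.norm_real]
      exact (mul_le_of_le_one_left (norm_nonneg _) (hs x)).trans hleak2
    have h3 := (abs_le.1 h2).1
    have h4 : 2 * Real.pi * δ ≤ 2 * Real.pi * |c x| := by gcongr; exact hB x hxB
    linarith
  set φ : ℝ → ℂ := fun θ => ∑ j ∈ range J, ff (X j) s θ * E j (ee 1 θ) with hφ
  have hφc : Continuous φ := by
    simp only [hφ]
    apply continuous_finsetSum; intro j _
    exact (ff_cont _ _).mul (hEc j)
  have hφb : ∀ θ, ‖φ θ‖ ^ 2 ≤ 3 * J := by
    intro θ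
    exact sup_bound J (fun j => ff (X j) s θ) (fun j => HH (X j) s (ee 1 θ)) (fun j => ff_norm _ _ hs _)
      (fun j => HH_re _ _ _)
  have hI : ∫ θ in (0:ℝ)..(2 * Real.pi), G θ * φ θ = ∑ j ∈ range J, ((X j).card : ℂ)⁻¹ *
      ∑ x ∈ X j, (s x : ℂ) * ∫ θ in (0:ℝ)..(2 * Real.pi), G θ * (ee x θ * E j (ee 1 θ)) := by
    simp only [hφ, mul_sum]
    rw [intervalIntegral.integral_finsetSum]
    · apply sum_congr rfl; intro j _
      have h1 : ∀ θ, G θ * (ff (X j) s θ * E j (ee 1 θ)) =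
          ∑ x ∈ X j, ((X j).card : ℂ)⁻¹ * ((s x : ℂ) * (G θ * (ee x θ * E j (ee 1 θ)))) := by
        intro θ
        unfold ff
        generalize G θ = g
        rw [mul_sum, sum_mul, mul_sum]
        apply sum_congr rfl; intro x _; ring
      simp_rw [h1]
      rw [intervalIntegral.integral_finsetSum]
      · apply sum_congr rfl; intro x _
        rw [intervalIntegral.integral_const_mul, intervalIntegral.integral_const_mul]
      · intro x _; apply Continuous.intervalIntegrable; have := hEc j; fun_prop
    · intro j _; apply Continuous.intervalIntegrable; have := hEc j; fun_prop
  have hlow : J * (Real.pi * δ) ≤ (∫ θ in (0:ℝ)..(2 * Real.pi), G θ * φ θ).re := by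
    rw [hI, Complex.re_sum]
    calc (J : ℝ) * (Real.pi * δ) = ∑ j ∈ range J, (Real.pi * δ) := by simp
      _ ≤ _ := by
        apply sum_le_sum; intro j hj
        have hj := mem_range.1 hj
        have : ((X j).card : ℂ)⁻¹ = ((((X j).card : ℝ)⁻¹ : ℝ) : ℂ) := by push_cast; rfl
        rw [this, Complex.re_ofReal_mul, Complex.re_sum]
        have hpos : (0:ℝ) < (X j).card := by rw [hXc j hj]; exact_mod_cast pow_pos hlam j
        calc Real.pi * δ = ((X j).card : ℝ)⁻¹ * ∑ x ∈ X j, (Real.pi * δ) := by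
              rw [sum_const, nsmul_eq_mul]; field_simp
          _ ≤ _ := by
              gcongr with x hx
              exact hmain j hj x hx
  have hup : (∫ θ in (0:ℝ)..(2 * Real.pi), G θ * φ θ).re ≤ Real.sqrt (3 * J) * ∫ θ in (0:ℝ)..(2 * Real.pi), ‖G θ‖ := by
    refine (Complex.re_le_norm _).trans ?_
    refine (intervalIntegral.norm_integral_le_integral_norm hpi).trans ?_
    rw [← intervalIntegral.integral_const_mul]
    apply intervalIntegral.integral_mono_on hpi
    · apply Continuous.intervalIntegrable; fun_prop
    · apply Continuous.intervalIntegrable; fun_prop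
    · intro θ _
      rw [norm_mul, mul_comm]
      gcongr
      exact Real.le_sqrt_of_sq_le (hφb θ)
  set I := ∫ θ in (0:ℝ)..(2 * Real.pi), ‖G θ‖
  have hfin : (J * (Real.pi * δ)) ^ 2 ≤ 3 * J * I ^ 2 := by
    calc _ ≤ (Real.sqrt (3 * J) * I) ^ 2 := by
          have := Real.pi_pos
          exact pow_le_pow_left₀ (by positivity) (hlow.trans hup) 2
      _ = _ := by rw [mul_pow, Real.sq_sqrt (by positivity)]
  rcases Nat.eq_zero_or_pos J with h | h
  · subst h; simp; positivity
  · have hJ : (0:ℝ) < J := by exact_mod_cast h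
    have : (J:ℝ) * (J * (Real.pi * δ) ^ 2) ≤ J * (3 * I ^ 2) := by nlinarith
    have := le_of_mul_le_mul_left this hJ
    nlinarith


lemma sign_struct (n : ℕ) : ∀ P : Polynomial ℝ, P.natDegree = n → P ≠ 0 →
    ∃ T : Finset ℝ, (∀ r ∈ T, r ∈ Set.Ioo (-1:ℝ) 1 ∧ P.eval r = 0) ∧
      ∃ σ : ℝ, (σ = 1 ∨ σ = -1) ∧ ∀ x ∈ Set.Icc (-1:ℝ) 1, 0 ≤ σ * (P.eval x * ∏ r ∈ T, (x - r)) := by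
  induction n using Nat.strong_induction_on with
  | _ n ih =>
  intro P hn hP
  by_cases hroot : ∃ r ∈ Set.Ioo (-1:ℝ) 1, P.eval r = 0
  · obtain ⟨r, hr, hPr⟩ := hroot
    obtain ⟨P', hP'⟩ := Polynomial.dvd_iff_isRoot.2 hPr
    have hP'0 : P' ≠ 0 := by rintro rfl; simp at hP'; exact hP hP'
    have hdeg : P'.natDegree < n := by
      rw [← hn, hP', Polynomial.natDegree_mul (Polynomial.X_sub_C_ne_zero r) hP'0, Polynomial.natDegree_X_sub_C]
      omega
    obtain ⟨T, hT, σ, hσ, h⟩ := ih _ hdeg P' rfl hP'0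
    by_cases hrT : r ∈ T
    · refine ⟨T.erase r, ?_, σ, hσ, ?_⟩
      · intro r' hr'
        obtain ⟨h1, h2⟩ := hT r' (mem_of_mem_erase hr')
        refine ⟨h1, ?_⟩
        rw [hP']; simp [h2]
      · intro x hx
        have := h x hx
        rw [← mul_prod_erase T _ hrT] at this
        rw [hP']; simp only [Polynomial.eval_mul, Polynomial.eval_sub, Polynomial.eval_X, Polynomial.eval_C]
        convert this using 1; ring
    · refine ⟨insert r T, ?_, σ, hσ, ?_⟩
      · intro r' hr'
        rcases mem_insert.1 hr' with rfl | hr'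
        · exact ⟨hr, hPr⟩
        · obtain ⟨h1, h2⟩ := hT r' hr'
          refine ⟨h1, ?_⟩
          rw [hP']; simp [h2]
      · intro x hx
        have := h x hx
        rw [prod_insert hrT]
        rw [hP']; simp only [Polynomial.eval_mul, Polynomial.eval_sub, Polynomial.eval_X, Polynomial.eval_C]
        have h2 := mul_nonneg (sq_nonneg (x - r)) this
        linarith
  · push Not at hroot
    have hkey : ∀ x ∈ Set.Icc (-1:ℝ) 1, ¬ (P.eval 0 * P.eval x < 0) := by
      intro x hx hneg
      have hc : ContinuousOn (fun y => P.eval y) (Set.uIcc 0 x) := P.continuous.continuousOn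
      have h0 : (0:ℝ) ∈ Set.uIcc (P.eval 0) (P.eval x) := by
        rw [Set.mem_uIcc]
        rcases mul_neg_iff.1 hneg with ⟨h1, h2⟩ | ⟨h1, h2⟩
        · right; exact ⟨h2.le, h1.le⟩
        · left; exact ⟨h1.le, h2.le⟩
      obtain ⟨c, hc1, hc2⟩ := intermediate_value_uIcc hc h0
      have hcx : c ≠ x := by rintro rfl; simp only at hc2; rw [hc2] at hneg; simp at hneg
      refine hroot c ?_ hc2
      rw [Set.mem_uIcc] at hc1
      rcases hc1 with ⟨h1, h2⟩ | ⟨h1, h2⟩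
      · have := lt_of_le_of_ne h2 hcx
        exact ⟨by linarith, by linarith [hx.2]⟩
      · have := lt_of_le_of_ne h1 hcx.symm
        exact ⟨by linarith [hx.1], by linarith⟩
    have h00 := hroot 0 (by norm_num)
    rcases lt_or_gt_of_ne h00 with h | h
    · refine ⟨∅, by simp, -1, Or.inr rfl, ?_⟩
      intro x hx
      have := hkey x hx
      simp only [prod_empty, mul_one]
      by_contra hh
      exact this (mul_neg_of_neg_of_pos h (by linarith))
    · refine ⟨∅, by simp, 1, Or.inl rfl, ?_⟩
      intro x hx
      have := hkey x hx
      simp only [prod_empty, mul_one]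
      by_contra hh
      exact this (mul_neg_of_pos_of_neg h (by linarith))

lemma sum_abs_X_mul (Q : Polynomial ℝ) (n : ℕ) :
    ∑ i ∈ range (n + 1), |(Polynomial.X * Q).coeff i| = ∑ i ∈ range n, |Q.coeff i| := by
  rw [sum_range_succ']
  simp

lemma q_exists (l : List ℝ) (hl : ∀ r ∈ l, |r| ≤ 1) :
    ∃ Q : Polynomial ℝ, Q.natDegree ≤ 2 * l.length ∧ Q.coeff (2 * l.length) = 1 ∧
      ∑ i ∈ range (2 * l.length + 1), |Q.coeff i| ≤ 4 ^ l.length ∧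
      ∀ θ : ℝ, Polynomial.aeval (ee 1 θ) Q = ee l.length θ * (((l.map (fun r => 2 * (Real.cos θ - r))).prod : ℝ) : ℂ) := by
  induction l with
  | nil => exact ⟨1, by simp, by simp, by simp, by simp [ee_zero]⟩
  | cons r l ih =>
    obtain ⟨Q, hd, hc, hs, he⟩ := ih (fun x hx => hl x (List.mem_cons_of_mem _ hx))
    have hr : |r| ≤ 1 := hl r List.mem_cons_self
    set k := l.length
    have hQ1 : Q.coeff (2 * k + 1) = 0 := Polynomial.coeff_eq_zero_of_natDegree_lt (by omega)
    have hQ2 : Q.coeff (2 * k + 1 + 1) = 0 := Polynomial.coeff_eq_zero_of_natDegree_lt (by omega)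
    refine ⟨Polynomial.X * (Polynomial.X * Q) - Polynomial.C (2 * r) * (Polynomial.X * Q) + Q, ?_, ?_, ?_, ?_⟩
    · have h1 : (Polynomial.X * Q).natDegree ≤ 2 * k + 1 := by
        refine Polynomial.natDegree_mul_le.trans ?_
        rw [Polynomial.natDegree_X]; omega
      have h2 : (Polynomial.X * (Polynomial.X * Q)).natDegree ≤ 2 * k + 2 := by
        refine Polynomial.natDegree_mul_le.trans ?_
        rw [Polynomial.natDegree_X]; omega
      have h3 : (Polynomial.C (2 * r) * (Polynomial.X * Q)).natDegree ≤ 2 * k + 2 :=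
        (Polynomial.natDegree_C_mul_le _ _).trans (by omega)
      have : (r :: l).length = k + 1 := rfl
      rw [this]
      refine (Polynomial.natDegree_add_le _ _).trans (max_le ?_ (by omega))
      refine (Polynomial.natDegree_sub_le _ _).trans (max_le (by omega) (by omega))
    · have : 2 * (r :: l).length = 2 * k + 1 + 1 := by simp [k]; ring
      rw [this]
      rw [Polynomial.coeff_add, Polynomial.coeff_sub, Polynomial.coeff_C_mul, Polynomial.coeff_X_mul, Polynomial.coeff_X_mul, Polynomial.coeff_X_mul, hc, hQ1, hQ2]
      simp
    · have h0 : (r :: l).length = k + 1 := rfl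
      rw [h0, show 2 * (k + 1) + 1 = 2 * k + 1 + 1 + 1 by ring]
      have hle : ∀ i, |(Polynomial.X * (Polynomial.X * Q) - Polynomial.C (2 * r) * (Polynomial.X * Q) + Q).coeff i| ≤
          |(Polynomial.X * (Polynomial.X * Q)).coeff i| + 2 * |(Polynomial.X * Q).coeff i| + |Q.coeff i| := by
        intro i
        rw [Polynomial.coeff_add, Polynomial.coeff_sub, Polynomial.coeff_C_mul]
        refine (abs_add_le _ _).trans ?_
        gcongr
        refine (abs_sub _ _).trans ?_
        gcongr
        rw [abs_mul, abs_mul]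
        have : |(2:ℝ)| = 2 := by norm_num
        rw [this]
        gcongr
        linarith
      refine (sum_le_sum fun i _ => hle i).trans ?_
      rw [sum_add_distrib, sum_add_distrib, ← mul_sum, sum_abs_X_mul, sum_abs_X_mul]
      have e1 : ∑ i ∈ range (2 * k + 1 + 1 + 1), |(Polynomial.X * Q).coeff i| = ∑ i ∈ range (2 * k + 1), |Q.coeff i| := by
        rw [sum_range_succ, sum_abs_X_mul, Polynomial.coeff_X_mul, hQ1]; simp
      have e2 : ∑ i ∈ range (2 * k + 1 + 1 + 1), |Q.coeff i| = ∑ i ∈ range (2 * k + 1), |Q.coeff i| := by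
        rw [sum_range_succ, sum_range_succ, hQ1, hQ2]; simp
      rw [e1, e2, pow_succ]
      linarith
    · intro θ
      have h0 : (r :: l).length = k + 1 := rfl
      have hcos : (2 * Real.cos θ : ℂ) = ee 1 θ + ee (-1) θ := by
        apply Complex.ext
        · simp only [Complex.add_re, ee_re]
          rw [← Complex.ofReal_ofNat, ← Complex.ofReal_mul, Complex.ofReal_re]
          push_cast; simp; ring
        · simp only [Complex.add_im, ee_im]
          rw [← Complex.ofReal_ofNat, ← Complex.ofReal_mul, Complex.ofReal_im]
          push_cast; simp
      have hz : ee 1 θ * ee (-1) θ = 1 := by rw [← ee_add]; simp [ee_zero]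
      rw [h0]
      simp only [map_add, map_sub, map_mul, Polynomial.aeval_X, Polynomial.aeval_C, he, List.map_cons, List.prod_cons]
      push_cast
      rw [ee_add]
      have h2 : (2 * ((Real.cos θ : ℂ) - r)) = ee 1 θ + ee (-1) θ - 2 * r := by rw [← hcos]; ring
      push_cast at h2
      rw [h2]
      simp only [Complex.coe_algebraMap]
      push_cast
      linear_combination (-(ee k θ) * (List.map (fun r => 2 * (Real.cos θ - r)) l).prod) * hz

noncomputable def fA (A : Finset ℕ) (θ : ℝ) : ℝ := ∑ a ∈ A, Real.cos (a * θ)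

lemma fA_cont (A : Finset ℕ) : Continuous (fA A) := by unfold fA; fun_prop
attribute [fun_prop] fA_cont

lemma fA_int (A : Finset ℕ) (m : ℤ) : ‖∫ θ in (0:ℝ)..(2 * Real.pi), (fA A θ : ℂ) * ee m θ‖ ≤ 2 * Real.pi := by
  have h1 : ∀ θ, (fA A θ : ℂ) * ee m θ = ∑ a ∈ A, ((1/2 : ℂ) * ee (a + m) θ + (1/2 : ℂ) * ee (-a + m) θ) := by
    intro θ
    unfold fA
    push_cast
    rw [sum_mul]
    apply sum_congr rfl; intro a _
    rw [ee_add, ee_add]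
    have : (Complex.cos (a * θ)) = (1/2) * (ee a θ + ee (-a) θ) := by
      unfold ee Complex.cos
      push_cast
      ring_nf
    rw [this]; ring
  simp_rw [h1]
  rw [intervalIntegral.integral_finsetSum]
  · have h2 : ∀ a ∈ A, ∫ θ in (0:ℝ)..(2 * Real.pi), ((1/2 : ℂ) * ee (a + m) θ + (1/2 : ℂ) * ee (-a + m) θ) =
        ((Real.pi * (if (a:ℤ) = -m then 1 else 0) + Real.pi * (if (a:ℤ) = m then 1 else 0) : ℝ) : ℂ) := by
      intro a _
      rw [intervalIntegral.integral_add, intervalIntegral.integral_const_mul, intervalIntegral.integral_const_mul,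
        ee_int, ee_int]
      · have e1 : ((a:ℤ) + m = 0) ↔ ((a:ℤ) = -m) := by omega
        have e2 : (-(a:ℤ) + m = 0) ↔ ((a:ℤ) = m) := by omega
        simp only [e1, e2]
        push_cast
        congr 1
        · split_ifs <;> simp
        · split_ifs <;> simp
      · apply Continuous.intervalIntegrable; fun_prop
      · apply Continuous.intervalIntegrable; fun_prop
    rw [sum_congr rfl h2, ← Complex.ofReal_sum, Complex.norm_real, sum_add_distrib, ← mul_sum, ← mul_sum]
    have h3 : ∀ c : ℤ, 0 ≤ ∑ a ∈ A, (if (a:ℤ) = c then (1:ℝ) else 0) ∧ ∑ a ∈ A, (if (a:ℤ) = c then (1:ℝ) else 0) ≤ 1 := by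
      intro c
      refine ⟨by positivity, ?_⟩
      rw [sum_boole]
      norm_cast
      rw [card_le_one]
      intro a ha b hb
      simp at ha hb
      omega
    have hp := Real.pi_pos
    rw [Real.norm_eq_abs, abs_of_nonneg (add_nonneg (mul_nonneg hp.le (h3 _).1) (mul_nonneg hp.le (h3 _).1))]
    nlinarith [(h3 (-m)).2, (h3 m).2]
  · intro a _; apply Continuous.intervalIntegrable; fun_prop

lemma step0 (A : Finset ℕ) (hA : A.Nonempty) : ∃ R : Finset ℝ,
    (∀ r ∈ R, r ∈ Set.Ioo (-1:ℝ) 1 ∧ fA A (Real.arccos r) = 0) ∧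
    (∀ θ ∈ Set.Ioo 0 Real.pi, fA A θ = 0 → Real.cos θ ∈ R) ∧
    ∀ k, k = R.card + 1 → ∃ q : ℕ → ℝ, q (2 * k) = 1 ∧ ∑ i ∈ range (2 * k + 1), |q i| ≤ 4 ^ k ∧
      ∫ θ in (0:ℝ)..(2 * Real.pi), |fA A θ| * ‖∑ i ∈ range (2 * k + 1), (q i : ℂ) * ee i θ‖ ≤ 2 * Real.pi * 4 ^ k := by
  set P : Polynomial ℝ := ∑ a ∈ A, Polynomial.Chebyshev.T ℝ (a : ℤ) with hP
  have hPcos : ∀ θ, P.eval (Real.cos θ) = fA A θ := by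
    intro θ
    simp only [hP, Polynomial.eval_finsetSum, fA]
    apply sum_congr rfl; intro a _
    rw [Polynomial.Chebyshev.T_real_cos]; push_cast; rfl
  have hP0 : P ≠ 0 := by
    intro h
    have h1 : P.eval 1 = A.card := by
      simp only [hP, Polynomial.eval_finsetSum, Polynomial.Chebyshev.T_eval_one]; simp
    rw [h] at h1
    simp at h1
    have := hA.card_pos
    have h2 : A.card = 0 := by exact_mod_cast h1.symm
    omega
  classical
  refine ⟨P.roots.toFinset.filter (fun r => r ∈ Set.Ioo (-1:ℝ) 1), ?_, ?_, ?_⟩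
  · intro r hr
    rw [mem_filter, Multiset.mem_toFinset, Polynomial.mem_roots hP0] at hr
    refine ⟨hr.2, ?_⟩
    rw [← hPcos, Real.cos_arccos hr.2.1.le hr.2.2.le]
    exact hr.1
  · intro θ hθ h0
    rw [mem_filter, Multiset.mem_toFinset, Polynomial.mem_roots hP0]
    refine ⟨by rw [Polynomial.IsRoot, hPcos, h0], ?_, ?_⟩
    · rw [← Real.cos_pi]
      exact Real.cos_lt_cos_of_nonneg_of_le_pi hθ.1.le le_rfl hθ.2
    · rw [← Real.cos_zero]
      exact Real.cos_lt_cos_of_nonneg_of_le_pi le_rfl hθ.2.le hθ.1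
  · intro k hk
    obtain ⟨T, hT, σ, hσ, hsign⟩ := sign_struct _ P rfl hP0
    have hTR : T ⊆ P.roots.toFinset.filter (fun r => r ∈ Set.Ioo (-1:ℝ) 1) := by
      intro r hr
      rw [mem_filter, Multiset.mem_toFinset, Polynomial.mem_roots hP0]
      exact ⟨(hT r hr).2, (hT r hr).1⟩
    have hcard := card_le_card hTR
    set l : List ℝ := T.toList ++ List.replicate (k - T.card) (-1) with hl
    have hlen : l.length = k := by simp [hl]; omega
    obtain ⟨Q, hd, hc, hs, he⟩ := q_exists l (by
      intro r hr
      rw [hl, List.mem_append] at hr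
      rcases hr with hr | hr
      · rw [mem_toList] at hr
        have := (hT r hr).1
        rw [abs_le]; exact ⟨this.1.le, this.2.le⟩
      · rw [List.eq_of_mem_replicate hr]; simp)
    rw [hlen] at hd hc hs he
    refine ⟨Q.coeff, hc, hs, ?_⟩
    have hQe : ∀ θ, ∑ i ∈ range (2 * k + 1), (Q.coeff i : ℂ) * ee i θ = Polynomial.aeval (ee 1 θ) Q := by
      intro θ
      rw [Polynomial.aeval_eq_sum_range' (n := 2 * k + 1) (by omega)]
      apply sum_congr rfl; intro i _
      rw [ee_pow, Complex.real_smul]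
    have hprod : ∀ θ, 0 ≤ σ * (fA A θ * (l.map (fun r => 2 * (Real.cos θ - r))).prod) := by
      intro θ
      have h1 : (l.map (fun r => 2 * (Real.cos θ - r))).prod =
          2 ^ T.card * (∏ r ∈ T, (Real.cos θ - r)) * (2 * (Real.cos θ + 1)) ^ (k - T.card) := by
        rw [hl, List.map_append, List.prod_append, List.map_replicate, List.prod_replicate]
        congr 1
        · rw [← prod_const, ← prod_mul_distrib]
          rw [Finset.prod_map_toList]
        · congr 1; ring
      rw [h1]
      have h2 := hsign (Real.cos θ) ⟨Real.neg_one_le_cos θ, Real.cos_le_one θ⟩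
      rw [hPcos] at h2
      have h3 : 0 ≤ (2 * (Real.cos θ + 1)) ^ (k - T.card) := by
        have := Real.neg_one_le_cos θ
        apply pow_nonneg; linarith
      have h4 : (0:ℝ) ≤ 2 ^ T.card := by positivity
      have := mul_nonneg (mul_nonneg h4 h3) h2
      linarith
    have hσ1 : |σ| = 1 := by rcases hσ with rfl | rfl <;> simp
    have hIntg : ∀ θ, ((|fA A θ| * ‖∑ i ∈ range (2 * k + 1), (Q.coeff i : ℂ) * ee i θ‖ : ℝ) : ℂ) =
        ∑ i ∈ range (2 * k + 1), (σ * Q.coeff i : ℂ) * ((fA A θ : ℂ) * ee ((i:ℤ) - k) θ) := by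
      intro θ
      have h1 : |fA A θ| * ‖∑ i ∈ range (2 * k + 1), (Q.coeff i : ℂ) * ee i θ‖ =
          σ * (fA A θ * (l.map (fun r => 2 * (Real.cos θ - r))).prod) := by
        rw [hQe, he, norm_mul, ee_norm, one_mul, Complex.norm_real, Real.norm_eq_abs, ← abs_mul]
        rw [← abs_of_nonneg (hprod θ), abs_mul σ, hσ1, one_mul]
      have h2 : ∑ i ∈ range (2 * k + 1), (σ * Q.coeff i : ℂ) * ((fA A θ : ℂ) * ee ((i:ℤ) - k) θ) =
          σ * (fA A θ) * ee (-k) θ * ∑ i ∈ range (2 * k + 1), (Q.coeff i : ℂ) * ee i θ := by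
        rw [mul_sum]
        apply sum_congr rfl; intro i _
        rw [sub_eq_add_neg, ee_add]; ring
      rw [h1, h2, hQe, he]
      have hz : ee (-k) θ * ee k θ = 1 := by rw [← ee_add]; simp [ee_zero]
      push_cast
      linear_combination (-(σ * fA A θ : ℂ) * (List.map (fun r => 2 * (Real.cos θ - r)) l).prod) * hz
    have hfin : ((∫ θ in (0:ℝ)..(2 * Real.pi), |fA A θ| * ‖∑ i ∈ range (2 * k + 1), (Q.coeff i : ℂ) * ee i θ‖ : ℝ) : ℂ) =
        ∑ i ∈ range (2 * k + 1), (σ * Q.coeff i : ℂ) * ∫ θ in (0:ℝ)..(2 * Real.pi), ((fA A θ : ℂ) * ee ((i:ℤ) - k) θ) := by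
      rw [← intervalIntegral.integral_ofReal]
      simp_rw [hIntg]
      rw [intervalIntegral.integral_finsetSum]
      · simp_rw [intervalIntegral.integral_const_mul]
      · intro i _; apply Continuous.intervalIntegrable; fun_prop
    refine (le_abs_self _).trans ?_
    rw [← Real.norm_eq_abs, ← Complex.norm_real, hfin]
    refine (norm_sum_le _ _).trans ?_
    calc _ ≤ ∑ i ∈ range (2 * k + 1), |Q.coeff i| * (2 * Real.pi) := by
          apply sum_le_sum; intro i _
          rw [norm_mul, norm_mul, Complex.norm_real, Complex.norm_real, Real.norm_eq_abs, hσ1, one_mul, Real.norm_eq_abs]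
          gcongr
          exact fA_int A _
      _ = 2 * Real.pi * ∑ i ∈ range (2 * k + 1), |Q.coeff i| := by rw [← sum_mul]; ring
      _ ≤ _ := by gcongr


def uA (A : Finset ℕ) (n : ℤ) : ℤ :=
  (if 0 ≤ n ∧ n.toNat ∈ A then 1 else 0) + (if n ≤ 0 ∧ (-n).toNat ∈ A then 1 else 0)

lemma uA_bd (A : Finset ℕ) (n : ℤ) : 0 ≤ uA A n ∧ uA A n ≤ 2 := by
  unfold uA; split_ifs <;> norm_num

lemma uA_neg (A : Finset ℕ) (n : ℤ) : uA A (-n) = uA A n := by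
  unfold uA
  rw [add_comm]
  simp

lemma uA_supp (A : Finset ℕ) : ∃ H : ℕ, ∀ n : ℤ, uA A n ≠ 0 → -(H:ℤ) ≤ n ∧ n ≤ H := by
  refine ⟨A.sup id, fun n hn => ?_⟩
  by_contra hcon
  apply hn
  unfold uA
  have hle : ∀ a ∈ A, a ≤ A.sup id := fun a ha => le_sup (f := id) ha
  rw [if_neg, if_neg]; · rfl
  · rintro ⟨h1, h2⟩
    have := hle _ h2
    omega
  · rintro ⟨h1, h2⟩
    have := hle _ h2
    omega

lemma sum_pos_part (A : Finset ℕ) (H : ℕ) (hH : ∀ a ∈ A, a ≤ H) (F : ℤ → ℂ) :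
    ∑ n ∈ Icc (-(H:ℤ)) H, (((if 0 ≤ n ∧ n.toNat ∈ A then 1 else 0 : ℤ) : ℂ)) * F n = ∑ a ∈ A, F a := by
  have h1 : ∑ a ∈ A, F a = ∑ n ∈ A.image (fun a : ℕ => (a:ℤ)), F n := by
    rw [sum_image]; intro a _ b _ h; simpa using h
  rw [h1]
  rw [← sum_subset (s₁ := A.image (fun a : ℕ => (a:ℤ))) (s₂ := Icc (-(H:ℤ)) H)]
  · apply sum_congr rfl
    intro n hn
    obtain ⟨a, ha, rfl⟩ := mem_image.1 hn
    simp [ha]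
  · intro n hn
    obtain ⟨a, ha, rfl⟩ := mem_image.1 hn
    have := hH a ha
    rw [mem_Icc]; omega
  · intro n _ hn
    rw [if_neg]; · simp
    rintro ⟨h1, h2⟩
    apply hn
    rw [mem_image]
    exact ⟨_, h2, by omega⟩

lemma sum_Icc_neg (H : ℕ) (F : ℤ → ℂ) : ∑ n ∈ Icc (-(H:ℤ)) H, F (-n) = ∑ n ∈ Icc (-(H:ℤ)) H, F n := by
  apply sum_nbij' (fun n => -n) (fun n => -n)
  · intro n hn; rw [mem_Icc] at *; omega
  · intro n hn; rw [mem_Icc] at *; omega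
  · intro n _; ring
  · intro n _; ring
  · intro n _; rfl

lemma uA_sum (A : Finset ℕ) (H : ℕ) (hH : ∀ a ∈ A, a ≤ H) (F : ℤ → ℂ) :
    ∑ n ∈ Icc (-(H:ℤ)) H, (uA A n : ℂ) * F n = ∑ a ∈ A, (F a + F (-a)) := by
  have h2 := sum_pos_part A H hH (fun n => F (-n))
  rw [← sum_Icc_neg] at h2
  simp only [neg_neg, Left.nonneg_neg_iff] at h2
  rw [sum_add_distrib, ← sum_pos_part A H hH F, ← h2, ← sum_add_distrib]
  apply sum_congr rfl; intro n _
  unfold uA; push_cast; ring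

lemma uA_fourier (A : Finset ℕ) (H : ℕ) (hH : ∀ a ∈ A, a ≤ H) (θ : ℝ) :
    ∑ n ∈ Icc (-(H:ℤ)) H, (uA A n : ℂ) * ee (-n) θ = 2 * (fA A θ : ℂ) := by
  rw [uA_sum A H hH (fun n => ee (-n) θ)]
  unfold fA
  push_cast
  rw [mul_sum]
  apply sum_congr rfl; intro a _
  unfold ee Complex.cos
  push_cast
  ring_nf

lemma uA_zero_of (A : Finset ℕ) (H : ℕ) (hH : ∀ a ∈ A, a ≤ H) (n : ℤ) (hn : n < -H ∨ H < n) : uA A n = 0 := by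
  unfold uA
  rw [if_neg, if_neg]; · rfl
  · rintro ⟨h1, h2⟩
    have := hH _ h2
    omega
  · rintro ⟨h1, h2⟩
    have := hH _ h2
    omega

lemma uA_fourier_shift (A : Finset ℕ) (H L s : ℕ) (hH : ∀ a ∈ A, a ≤ H) (hL : H + s ≤ L) (θ : ℝ) :
    ∑ n ∈ Icc (-(L:ℤ)) L, (uA A (n + s) : ℂ) * ee (-n) θ = ee s θ * (2 * (fA A θ : ℂ)) := by
  rw [← uA_fourier A H hH, mul_sum]
  have h1 : ∑ n ∈ Icc (-(H:ℤ)) H, ee s θ * ((uA A n : ℂ) * ee (-n) θ) =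
      ∑ n ∈ Icc (-(H:ℤ) - s) (H - s), (uA A (n + s) : ℂ) * ee (-n) θ := by
    apply sum_nbij' (fun n : ℤ => n - (s:ℤ)) (fun n : ℤ => n + (s:ℤ))
    · intro n hn; rw [mem_Icc] at *; omega
    · intro n hn; rw [mem_Icc] at *; omega
    · intro n _; ring
    · intro n _; ring
    · intro n _
      rw [show -(n - (s:ℤ)) = s + -n by ring, ee_add, sub_add_cancel]; ring
  rw [h1]
  symm
  apply sum_subset
  · intro n hn; rw [mem_Icc] at *; omega
  · intro n _ hn
    rw [uA_zero_of A H hH]; · simp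
    rw [mem_Icc] at hn; omega

/-- the local vanishing statement -/
lemma local_vanish (A : Finset ℕ) (k p : ℕ) (q : ℕ → ℝ) (hq : q (2 * k) = 1) (hp : (4 * k).factorial ∣ p) (hp0 : 0 < p) :
    ∀ w : ℤ, (∀ b : ℤ, w - 5 ^ (2 * k + 1) ≤ b → b ≤ w + 5 ^ (2 * k + 1) + 2 * k + 2 * p →
      |∑ i ∈ range (2 * k + 1), q i * ((uA A (b + i + p) - uA A (b + i) : ℤ) : ℝ)| <
        1 / (((2 * k + 1 : ℕ) : ℝ) * (2 * k + 1).factorial * 2 ^ (2 * k + 1))) →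
      ∀ i ≤ 2 * k, uA A (w + i + p) - uA A (w + i) = 0 := by
  obtain ⟨Q, hQ0, hQ⟩ := linalg (2 * k + 1) (fun i => q i) (Fin.last (2 * k)) (by simpa using hq)
  intro w hw
  obtain ⟨i0, hi0⟩ := Function.ne_iff.1 hQ0
  set Qv : ℕ → ℚ := fun i => if h : i < 2 * k + 1 then Q ⟨i, h⟩ else 0 with hQv
  have hQi : ∀ i : Fin (2 * k + 1), Qv i = Q i := by
    intro i; simp only [hQv, i.2, dif_pos]
  have := per_window k Qv ⟨i0, by omega, by rw [hQi]; exact hi0⟩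
    (fun j => uA A (w - 5 ^ (2 * k + 1) + j)) (fun j => uA A (w - 5 ^ (2 * k + 1) + j + p) - uA A (w - 5 ^ (2 * k + 1) + j)) p hp hp0
    (fun j => uA_bd A _) (fun j => by push_cast; rw [add_assoc]) ?_
  · intro i hi
    have h := this i hi
    rw [← h]
    push_cast
    ring_nf
  · intro j hj
    have hb := hw (w - 5 ^ (2 * k + 1) + j) (by omega) (by zify at hj; linarith)
    have h2 := hQ (fun i => uA A (w - 5 ^ (2 * k + 1) + j + i + p) - uA A (w - 5 ^ (2 * k + 1) + j + i)) ?_ ?_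
    · rw [← h2, ← Fin.sum_univ_eq_sum_range (fun i => Qv i * (((uA A (w - 5 ^ (2 * k + 1) + ((j + i : ℕ) : ℤ) + p) -
        uA A (w - 5 ^ (2 * k + 1) + ((j + i : ℕ) : ℤ)) : ℤ) : ℚ)))]
      apply sum_congr rfl
      intro i _
      rw [hQi]
      push_cast
      ring_nf
    · intro i
      have h1 := uA_bd A (w - 5 ^ (2 * k + 1) + j + i + p)
      have h2 := uA_bd A (w - 5 ^ (2 * k + 1) + j + i)
      rw [abs_le]; constructor <;> linarith
    · rw [← Fin.sum_univ_eq_sum_range (fun i => q i * (((uA A (w - 5 ^ (2 * k + 1) + j + i + p) -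
        uA A (w - 5 ^ (2 * k + 1) + j + i) : ℤ) : ℝ)))] at hb
      exact hb


lemma card_le_of_cover (S B : Finset ℤ) (lo hi : ℕ)
    (h : ∀ w ∈ S, ∃ b ∈ B, w - lo ≤ b ∧ b ≤ w + hi) : S.card ≤ B.card * (lo + hi + 1) := by
  have hsub : S ⊆ B.biUnion (fun b => Icc (b - hi) (b + lo)) := by
    intro w hw
    obtain ⟨b, hb, h1, h2⟩ := h w hw
    rw [mem_biUnion]
    exact ⟨b, hb, by rw [mem_Icc]; omega⟩
  refine (card_le_card hsub).trans ?_
  apply card_biUnion_le_card_mul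
  intro b _
  rw [Int.card_Icc]
  omega

lemma step1 (A : Finset ℕ) (k p : ℕ) (q : ℕ → ℝ) (hq : q (2 * k) = 1)
    (hq1 : ∑ i ∈ range (2 * k + 1), |q i| ≤ 4 ^ k)
    (hIntg : ∫ θ in (0:ℝ)..(2 * Real.pi), |fA A θ| * ‖∑ i ∈ range (2 * k + 1), (q i : ℂ) * ee i θ‖ ≤ 2 * Real.pi * 4 ^ k)
    (hp : (4 * k).factorial ∣ p) (hp0 : 0 < p) (D J lam Lw : ℕ)
    (hD : D = (2 * k + 1) * (2 * k + 1).factorial * 2 ^ (2 * k + 1))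
    (hLw : Lw = 2 * 5 ^ (2 * k + 1) + 2 * k + 2 * p + 1)
    (hJ : J = 12 * 16 ^ (k + 1) * D ^ 2 + 1)
    (hlam : lam = 64 * J ^ 2 * 16 ^ k * (Lw + 5 ^ (2 * k + 1)) * D ^ 2)
    (S : Finset ℤ) (hS : ∀ n ∈ S, uA A (n + p) - uA A n ≠ 0) : S.card ≤ lam ^ J * Lw := by
  obtain ⟨H, hH⟩ : ∃ H : ℕ, ∀ a ∈ A, a ≤ H := ⟨A.sup id, fun a ha => le_sup (f := id) ha⟩
  have hDpos : 0 < D := by rw [hD]; positivity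
  have hDR : (0:ℝ) < D := by exact_mod_cast hDpos
  set δ : ℝ := 1 / D with hδ
  have hδpos : 0 < δ := by positivity
  have hδ' : δ = 1 / (((2 * k + 1 : ℕ) : ℝ) * (2 * k + 1).factorial * 2 ^ (2 * k + 1)) := by
    rw [hδ, hD]; push_cast; rfl
  set g : ℤ → ℝ := fun b => ∑ i ∈ range (2 * k + 1), q i * ((uA A (b + i + p) - uA A (b + i) : ℤ) : ℝ) with hg
  have hloc := local_vanish A k p q hq hp hp0
  rw [← hδ'] at hloc
  set L : ℕ := H + 2 * k + p with hL
  have hgsupp : ∀ n : ℤ, n ∉ Icc (-(L:ℤ)) L → g n = 0 := by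
    intro n hn
    simp only [hg]
    apply sum_eq_zero
    intro i hi
    rw [mem_range] at hi
    rw [mem_Icc] at hn
    rw [uA_zero_of A H hH _ (by omega), uA_zero_of A H hH _ (by omega)]; simp
  set W := (Icc (-(L:ℤ)) L).filter (fun n => g n ≠ 0) with hW
  have hWmem : ∀ n, n ∈ W ↔ g n ≠ 0 := by
    intro n
    rw [hW, mem_filter]
    refine ⟨fun h => h.2, fun h => ⟨?_, h⟩⟩
    by_contra hn; exact h (hgsupp n hn)
  set B := W.filter (fun n => δ ≤ |g n|) with hB
  have hBmem : ∀ n, n ∈ B ↔ δ ≤ |g n| := by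
    intro n
    rw [hB, mem_filter, hWmem]
    refine ⟨fun h => h.2, fun h => ⟨?_, h⟩⟩
    intro h0; rw [h0] at h; simp at h; linarith
  -- the coverings
  have hcov : ∀ w : ℤ, (∃ i ≤ 2 * k, uA A (w + (i:ℕ) + p) - uA A (w + (i:ℕ)) ≠ 0) →
      ∃ b ∈ B, w - (5 ^ (2 * k + 1) : ℕ) ≤ b ∧ b ≤ w + (5 ^ (2 * k + 1) + 2 * k + 2 * p : ℕ) := by
    intro w ⟨i, hi, hne⟩
    by_contra hcon
    push Not at hcon
    apply hne
    refine hloc w ?_ i hi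
    intro b hb1 hb2
    by_contra hlt
    push Not at hlt
    have := hcon b ((hBmem b).2 hlt) (by push_cast; linarith)
    push_cast at this
    linarith
  have hScard : S.card ≤ B.card * Lw := by
    have := card_le_of_cover S B (5 ^ (2 * k + 1)) (5 ^ (2 * k + 1) + 2 * k + 2 * p) (by
      intro w hw
      apply hcov
      refine ⟨0, by omega, ?_⟩
      simpa using hS w hw)
    rw [hLw]
    convert this using 2; ring
  have hWcov : ∀ w ∈ W, ∃ b ∈ B, w - (5 ^ (2 * k + 1) : ℕ) ≤ b ∧ b ≤ w + (5 ^ (2 * k + 1) + 2 * k + 2 * p : ℕ) := by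
    intro w hw
    apply hcov
    by_contra hcon
    push Not at hcon
    rw [hWmem] at hw
    apply hw
    simp only [hg]
    apply sum_eq_zero
    intro i hi
    rw [mem_range] at hi
    rw [hcon i (by omega)]; simp
  have hcount : ∀ x ∈ B, ((W.filter (fun w => x ≤ w)).card : ℝ) ≤ ((Lw + 5 ^ (2 * k + 1) : ℕ) : ℝ) * (B.filter (fun w => x ≤ w)).card := by
    intro x hx
    norm_cast
    set B' := B.filter (fun w => x ≤ w)
    have hB'pos : 1 ≤ B'.card := card_pos.2 ⟨x, by simp [B', hx]⟩
    have h1 : (W.filter (fun w => x ≤ w)) ⊆ ((W.filter (fun w => x ≤ w)).filter (fun w => ∃ b ∈ B', w - (5 ^ (2 * k + 1) : ℕ) ≤ b ∧ b ≤ w + (5 ^ (2 * k + 1) + 2 * k + 2 * p : ℕ))) ∪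
        Ico x (x + (5 ^ (2 * k + 1) : ℕ)) := by
      intro w hw
      obtain ⟨hwW, hxw⟩ := mem_filter.1 hw
      obtain ⟨b, hb, hb1, hb2⟩ := hWcov w hwW
      rw [mem_union]
      by_cases hbx : x ≤ b
      · left
        rw [mem_filter]
        exact ⟨hw, b, mem_filter.2 ⟨hb, hbx⟩, hb1, hb2⟩
      · right
        rw [mem_Ico]; exact ⟨hxw, by linarith⟩
    have h2 := (card_le_card h1).trans (card_union_le _ _)
    have h3 := card_le_of_cover _ B' (5 ^ (2 * k + 1)) (5 ^ (2 * k + 1) + 2 * k + 2 * p) (fun w hw => (mem_filter.1 hw).2 :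
      ∀ w ∈ ((W.filter (fun w => x ≤ w)).filter (fun w => ∃ b ∈ B', w - (5 ^ (2 * k + 1) : ℕ) ≤ b ∧ b ≤ w + (5 ^ (2 * k + 1) + 2 * k + 2 * p : ℕ))), _)
    rw [Int.card_Ico] at h2
    have h4 : (x + ((5 ^ (2 * k + 1) : ℕ) : ℤ) - x).toNat = 5 ^ (2 * k + 1) := by
      rw [add_sub_cancel_left, Int.toNat_natCast]
    rw [h4] at h2
    have h5 : 5 ^ (2 * k + 1) + (5 ^ (2 * k + 1) + 2 * k + 2 * p) + 1 = Lw := by rw [hLw]; ring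
    rw [h5] at h3
    nlinarith [Nat.zero_le (5 ^ (2 * k + 1))]
  -- L1 norm
  have hGeq : ∀ θ, ∑ w ∈ W, (g w : ℂ) * ee (-w) θ =
      2 * (fA A θ : ℂ) * (∑ i ∈ range (2 * k + 1), (q i : ℂ) * ee i θ) * (ee p θ - 1) := by
    intro θ
    have h1 : ∑ w ∈ W, (g w : ℂ) * ee (-w) θ = ∑ w ∈ Icc (-(L:ℤ)) L, (g w : ℂ) * ee (-w) θ := by
      apply sum_subset (filter_subset _ _)
      intro n _ hn
      rw [hWmem] at hn; push Not at hn
      rw [hn]; simp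
    have h2 : ∀ w, (g w : ℂ) * ee (-w) θ = ∑ i ∈ range (2 * k + 1), (q i : ℂ) *
        ((uA A (w + ((i + p : ℕ) : ℤ)) : ℂ) * ee (-w) θ - (uA A (w + i) : ℂ) * ee (-w) θ) := by
      intro w
      simp only [hg]
      push_cast
      rw [sum_mul]
      apply sum_congr rfl; intro i _
      rw [add_assoc]; ring
    rw [h1]
    simp_rw [h2]
    rw [sum_comm, mul_sum, sum_mul]
    apply sum_congr rfl
    intro i hi
    rw [mem_range] at hi
    rw [← mul_sum, sum_sub_distrib, uA_fourier_shift A H L (i + p) hH (by omega), uA_fourier_shift A H L i hH (by omega)]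
    push_cast
    rw [ee_add]; ring
  have hpi : (0:ℝ) ≤ 2 * Real.pi := by positivity
  have hL1 : ∫ θ in (0:ℝ)..(2 * Real.pi), ‖∑ w ∈ W, (g w : ℂ) * ee (-w) θ‖ ≤ 2 * Real.pi * 4 ^ (k + 1) := by
    calc _ ≤ ∫ θ in (0:ℝ)..(2 * Real.pi), 4 * (|fA A θ| * ‖∑ i ∈ range (2 * k + 1), (q i : ℂ) * ee i θ‖) := by
          apply intervalIntegral.integral_mono_on hpi
          · apply Continuous.intervalIntegrable; fun_prop
          · apply Continuous.intervalIntegrable; fun_prop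
          · intro θ _
            rw [hGeq, norm_mul, norm_mul, norm_mul, Complex.norm_real, Real.norm_eq_abs, Complex.norm_ofNat]
            have h1 : ‖ee p θ - 1‖ ≤ 2 := by
              refine (norm_sub_le _ _).trans ?_
              rw [ee_norm, norm_one]; norm_num
            have h2 : 0 ≤ |fA A θ| * ‖∑ i ∈ range (2 * k + 1), (q i : ℂ) * ee i θ‖ := by positivity
            nlinarith
      _ = 4 * ∫ θ in (0:ℝ)..(2 * Real.pi), (|fA A θ| * ‖∑ i ∈ range (2 * k + 1), (q i : ℂ) * ee i θ‖) := by
          rw [intervalIntegral.integral_const_mul]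
      _ ≤ 4 * (2 * Real.pi * 4 ^ k) := by gcongr
      _ = _ := by ring
  have hgM : ∀ w ∈ W, |g w| ≤ 2 * 4 ^ k := by
    intro w _
    simp only [hg]
    refine (abs_sum_le_sum_abs _ _).trans ?_
    calc _ ≤ ∑ i ∈ range (2 * k + 1), |q i| * 2 := by
          apply sum_le_sum; intro i _
          rw [abs_mul]
          gcongr
          have h1 := uA_bd A (w + i + p)
          have h2 := uA_bd A (w + i)
          have h3 : |uA A (w + i + p) - uA A (w + i)| ≤ 2 := by
            rw [abs_le]; constructor <;> linarith
          exact_mod_cast h3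
      _ = 2 * ∑ i ∈ range (2 * k + 1), |q i| := by rw [← sum_mul]; ring
      _ ≤ _ := by gcongr
  have hlampos : 0 < lam := by
    rw [hlam]
    have : 0 < J := by rw [hJ]; positivity
    positivity
  by_contra hcon
  push Not at hcon
  have hBcard : lam ^ J ≤ B.card := by
    by_contra hlt
    push Not at hlt
    have : B.card * Lw ≤ lam ^ J * Lw := Nat.mul_le_mul_right _ hlt.le
    omega
  have hlw := littlewood W B g (2 * 4 ^ k) δ ((Lw + 5 ^ (2 * k + 1) : ℕ) : ℝ) J lam (by positivity) hδpos (by positivity) hlampos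
    (filter_subset _ _) hgM (fun b hb => (hBmem b).1 hb) hcount ?_ hBcard
  · have h1 : (12 : ℝ) * (∫ θ in (0:ℝ)..(2 * Real.pi), ‖∑ w ∈ W, (g w : ℂ) * ee (-w) θ‖) ^ 2 ≤ 12 * (2 * Real.pi * 4 ^ (k + 1)) ^ 2 := by
      gcongr
      apply intervalIntegral.integral_nonneg hpi
      intro θ _; positivity
    have h2 := hlw.trans h1
    have h3 : (J : ℝ) * δ ^ 2 ≤ 12 * 16 ^ (k + 1) := by
      have hpp : (0:ℝ) < (2 * Real.pi) ^ 2 := by positivity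
      have h16 : ((4:ℝ) ^ (k + 1)) ^ 2 = 16 ^ (k + 1) := by
        rw [← pow_mul, mul_comm, pow_mul]; norm_num
      rw [mul_pow (2 * Real.pi) (4 ^ (k + 1)) 2, h16] at h2
      apply le_of_mul_le_mul_right _ hpp
      linarith
    rw [hδ] at h3
    have h4 : (J : ℝ) ≤ 12 * 16 ^ (k + 1) * D ^ 2 := by
      rw [div_pow, one_pow, mul_one_div, div_le_iff₀ (by positivity)] at h3
      exact h3
    have h5 : J ≤ 12 * 16 ^ (k + 1) * D ^ 2 := by exact_mod_cast h4
    omega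
  · have e1 : (lam : ℝ) * δ ^ 2 = 64 * J ^ 2 * 16 ^ k * ((Lw + 5 ^ (2 * k + 1) : ℕ) : ℝ) := by
      rw [hδ, hlam]; push_cast; field_simp
    have h16 : ((4:ℝ) ^ k) ^ 2 = 16 ^ k := by
      rw [← pow_mul, mul_comm, pow_mul]; norm_num
    rw [e1, mul_pow, h16]
    apply le_of_eq; ring


lemma osc (d φ t1 t2 : ℝ) (hd : d ≠ 0) (h1 : 0 < t1) (h12 : t1 < t2) :
    |∫ t in t1..t2, Real.cos (d * t + φ) / t| ≤ 2 / (|d| * t1) := by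
  have hpos : ∀ t ∈ Set.uIcc t1 t2, 0 < t := by
    intro t ht; rw [Set.uIcc_of_le h12.le] at ht; linarith [ht.1]
  have hd' : 0 < |d| := abs_pos.2 hd
  have ht2 : 0 < t2 := by linarith
  have hu : ∀ t ∈ Set.uIcc t1 t2, HasDerivAt (fun t : ℝ => t⁻¹) (-(t ^ 2)⁻¹) t := fun t ht =>
    hasDerivAt_inv (hpos t ht).ne'
  have hv : ∀ t ∈ Set.uIcc t1 t2, HasDerivAt (fun t : ℝ => Real.sin (d * t + φ) / d) (Real.cos (d * t + φ)) t := by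
    intro t _
    have h := ((((hasDerivAt_id t).const_mul d).add_const φ).sin).div_const d
    refine h.congr_deriv ?_
    simp only [id_eq]; field_simp
  have hcu : ContinuousOn (fun t : ℝ => -(t ^ 2)⁻¹) (Set.uIcc t1 t2) := by
    intro t ht
    have := (hpos t ht).ne'
    apply ContinuousAt.continuousWithinAt
    have : t ^ 2 ≠ 0 := by positivity
    fun_prop (disch := assumption)
  have hiu : IntervalIntegrable (fun t : ℝ => -(t ^ 2)⁻¹) MeasureTheory.volume t1 t2 := hcu.intervalIntegrable
  have hiv : IntervalIntegrable (fun t : ℝ => Real.cos (d * t + φ)) MeasureTheory.volume t1 t2 := by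
    apply Continuous.intervalIntegrable; fun_prop
  have hp := intervalIntegral.integral_mul_deriv_eq_deriv_mul hu hv hiu hiv
  have he : ∫ t in t1..t2, Real.cos (d * t + φ) / t = ∫ t in t1..t2, t⁻¹ * Real.cos (d * t + φ) := by
    congr 1; ext t; ring
  rw [he, hp]
  have hI : |∫ t in t1..t2, -(t ^ 2)⁻¹ * (Real.sin (d * t + φ) / d)| ≤ (t1⁻¹ - t2⁻¹) / |d| := by
    have h3 : ∫ t in t1..t2, (-(t ^ 2)⁻¹) = t2⁻¹ - t1⁻¹ :=
      intervalIntegral.integral_eq_sub_of_hasDerivAt hu hiu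
    have h4 : (t1⁻¹ - t2⁻¹) / |d| = ∫ t in t1..t2, -(-(t ^ 2)⁻¹) * |d|⁻¹ := by
      rw [intervalIntegral.integral_mul_const, intervalIntegral.integral_neg, h3]; ring
    rw [h4]
    refine (intervalIntegral.abs_integral_le_integral_abs h12.le).trans ?_
    apply intervalIntegral.integral_mono_on h12.le
    · apply ContinuousOn.intervalIntegrable
      apply ContinuousOn.abs
      apply hcu.mul
      fun_prop
    · apply ContinuousOn.intervalIntegrable
      exact hcu.neg.mul continuousOn_const
    · intro t ht
      have ht0 : 0 < t := by linarith [ht.1]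
      rw [abs_mul, abs_neg, neg_neg, abs_div, abs_of_pos (by positivity : 0 < (t ^ 2)⁻¹)]
      gcongr
      rw [div_eq_mul_inv]
      exact mul_le_of_le_one_left (by positivity) (Real.abs_sin_le_one _)
  have ha : ∀ t, 0 < t → |t⁻¹ * (Real.sin (d * t + φ) / d)| ≤ t⁻¹ / |d| := by
    intro t ht
    rw [abs_mul, abs_div, abs_of_pos (by positivity : 0 < t⁻¹), ← mul_div_assoc]
    gcongr
    exact mul_le_of_le_one_right (by positivity) (Real.abs_sin_le_one _)
  have h5 := ha t1 h1
  have h6 := ha t2 ht2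
  have h7 : 2 / (|d| * t1) = t2⁻¹ / |d| + t1⁻¹ / |d| + (t1⁻¹ - t2⁻¹) / |d| := by
    field_simp; ring
  rw [h7]
  refine (abs_sub _ _).trans (add_le_add ((abs_sub _ _).trans (add_le_add h6 h5)) hI)

lemma cint (g : ℝ → ℝ) (hg : Continuous g) (t1 t2 : ℝ) (h1 : 0 < t1) (h12 : t1 < t2) :
    IntervalIntegrable (fun t => g t / t) MeasureTheory.volume t1 t2 := by
  apply ContinuousOn.intervalIntegrable
  intro t ht
  rw [Set.uIcc_of_le h12.le] at ht
  have : t ≠ 0 := by linarith [ht.1]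
  apply ContinuousAt.continuousWithinAt
  exact hg.continuousAt.div continuousAt_id this

lemma sin_est (ν t1 t2 : ℝ) (h1 : 0 < t1) (h12 : t1 < t2) (h : |2 * ν| ≤ 1 / t2 ∨ 1 / t1 ≤ |2 * ν|) :
    |∫ t in t1..t2, Real.sin (ν * t) / t| ≤ 4 := by
  have ht2 : 0 < t2 := by linarith
  rcases h with h | h
  · rw [abs_mul, abs_of_pos (by norm_num : (0:ℝ) < 2), le_div_iff₀ ht2] at h
    have hb := intervalIntegral.norm_integral_le_of_norm_le_const (a := t1) (b := t2) (C := |ν|)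
      (f := fun t => Real.sin (ν * t) / t) (by
        intro t ht
        rw [Set.uIoc_of_le h12.le] at ht
        have ht0 : 0 < t := by linarith [ht.1]
        rw [Real.norm_eq_abs, abs_div, abs_of_pos ht0, div_le_iff₀ ht0]
        refine (Real.abs_sin_le_abs).trans ?_
        rw [abs_mul, abs_of_pos ht0])
    rw [Real.norm_eq_abs, abs_of_pos (by linarith : 0 < t2 - t1)] at hb
    refine hb.trans ?_
    nlinarith [abs_nonneg ν]
  · have hν : ν ≠ 0 := by
      rintro rfl
      simp at h; linarith
    have hb := osc ν (-(Real.pi / 2)) t1 t2 hν h1 h12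
    have he : ∀ t, Real.cos (ν * t + -(Real.pi / 2)) = Real.sin (ν * t) := by
      intro t; rw [← sub_eq_add_neg, Real.cos_sub_pi_div_two]
    simp_rw [he] at hb
    refine hb.trans ?_
    rw [abs_mul, abs_of_pos (by norm_num : (0:ℝ) < 2), div_le_iff₀ h1] at h
    have : 0 < |ν| := abs_pos.2 hν
    rw [div_le_iff₀ (by positivity)]
    linarith

lemma cos_est_far (d t1 t2 : ℝ) (h1 : 0 < t1) (h12 : t1 < t2) (h : 1 / t1 ≤ |d|) :
    |∫ t in t1..t2, Real.cos (d * t) / t| ≤ 2 := by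
  have hd : d ≠ 0 := by rintro rfl; simp at h; linarith
  have hb := osc d 0 t1 t2 hd h1 h12
  simp only [add_zero] at hb
  refine hb.trans ?_
  rw [div_le_iff₀ h1] at h
  have : 0 < |d| := abs_pos.2 hd
  rw [div_le_iff₀ (by positivity)]
  linarith

lemma cos_est_near (d t1 t2 : ℝ) (h1 : 0 < t1) (h12 : t1 < t2) (h : |d| ≤ 1 / t2) :
    |(∫ t in t1..t2, Real.cos (d * t) / t) - Real.log (t2 / t1)| ≤ 2 := by
  have ht2 : 0 < t2 := by linarith
  have hl : ∫ t in t1..t2, (1:ℝ) / t = Real.log (t2 / t1) := by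
    rw [integral_one_div_of_pos h1 ht2]
  rw [← hl, ← intervalIntegral.integral_sub (cint _ (by fun_prop) _ _ h1 h12) (cint _ (by fun_prop) _ _ h1 h12)]
  have hb := intervalIntegral.norm_integral_le_of_norm_le_const (a := t1) (b := t2) (C := |d|)
      (f := fun t => Real.cos (d * t) / t - 1 / t) (by
        intro t ht
        rw [Set.uIoc_of_le h12.le] at ht
        have ht0 : 0 < t := by linarith [ht.1]
        rw [Real.norm_eq_abs, ← sub_div, abs_div, abs_of_pos ht0, div_le_iff₀ ht0]
        have h3 : |d| * t = |d * t| := by rw [abs_mul, abs_of_pos ht0]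
        rw [h3, abs_sub_comm, abs_of_nonneg (by linarith [Real.cos_le_one (d * t)])]
        have h4 : |d * t| ≤ 1 := by
          rw [← h3]
          rw [le_div_iff₀ ht2] at h
          nlinarith [abs_nonneg d, ht.2]
        have h5 := Real.one_sub_sq_div_two_le_cos (x := d * t)
        rw [← sq_abs] at h5
        nlinarith [abs_nonneg (d * t)])
  rw [Real.norm_eq_abs, abs_of_pos (by linarith : 0 < t2 - t1)] at hb
  refine hb.trans ?_
  rw [le_div_iff₀ ht2] at h
  nlinarith [abs_nonneg d]

lemma step2a (T : Finset ℤ) (Y : ℤ → ℤ) (hodd : ∀ n, Y (-n) = - Y n) (hb : ∀ n, |Y n| ≤ 2)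
    (hT : ∀ n, n ∈ T ↔ Y n ≠ 0) (t1 t2 : ℝ) (h1 : 0 < t1) (h12 : t1 < t2)
    (hgap : ∀ n ∈ T, ∀ m ∈ T, |((n - m : ℤ) : ℝ)| ≤ 1 / t2 ∨ 1 / t1 ≤ |((n - m : ℤ) : ℝ)|)
    (σ : ℝ) (hσ : |σ| = 1)
    (hsign : ∀ t ∈ Set.Icc t1 t2, 0 ≤ σ * ∑ n ∈ T, (Y n : ℝ) * Real.sin (n * t))
    (hl : 12 * (T.card : ℝ) < Real.log (t2 / t1)) :
    ∀ m ∈ T, ∑ n ∈ T.filter (fun n => |((n - m : ℤ) : ℝ)| ≤ 1 / t2), Y n = 0 := by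
  intro m hm
  have hneg : ∀ n, n ∈ T → -n ∈ T := by
    intro n hn; rw [hT] at *; rw [hodd]; simpa using hn
  have hbR : ∀ n, |(Y n : ℝ)| ≤ 2 := by intro n; exact_mod_cast hb n
  set h : ℝ → ℝ := fun t => ∑ n ∈ T, (Y n : ℝ) * Real.sin (n * t) with hh
  have hhc : Continuous h := by simp only [hh]; fun_prop
  have hA : |∫ t in t1..t2, h t / t| ≤ 8 * T.card := by
    have e : ∀ t, h t / t = ∑ n ∈ T, (Y n : ℝ) * (Real.sin (n * t) / t) := by
      intro t; simp only [hh]; rw [sum_div]; apply sum_congr rfl; intro n _; ring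
    simp_rw [e]
    rw [intervalIntegral.integral_finsetSum]
    · refine (abs_sum_le_sum_abs _ _).trans ?_
      calc _ ≤ ∑ n ∈ T, (8:ℝ) := by
            apply sum_le_sum; intro n hn
            rw [intervalIntegral.integral_const_mul, abs_mul]
            have h3 := sin_est n t1 t2 h1 h12 (by
              have := hgap n hn (-n) (hneg n hn)
              have e : ((n - -n : ℤ) : ℝ) = 2 * n := by push_cast; ring
              rw [e] at this; exact this)
            calc _ ≤ (2:ℝ) * 4 := by gcongr; exact hbR n
              _ = 8 := by norm_num
        _ = _ := by simp; ring
    · intro n _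
      exact (cint _ (by fun_prop) _ _ h1 h12).const_mul _
  have hB : ∫ t in t1..t2, |h t| / t ≤ 8 * T.card := by
    have e : ∫ t in t1..t2, |h t| / t = ∫ t in t1..t2, σ * (h t / t) := by
      apply intervalIntegral.integral_congr
      intro t ht
      rw [Set.uIcc_of_le h12.le] at ht
      have := hsign t ht
      simp only
      rw [← mul_div_assoc]
      rw [← abs_of_nonneg this, abs_mul, hσ, one_mul]
    rw [e, intervalIntegral.integral_const_mul]
    refine (le_abs_self _).trans ?_
    rw [abs_mul, hσ, one_mul]; exact hA
  have hC : |∫ t in t1..t2, h t * Real.sin (m * t) / t| ≤ 8 * T.card := by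
    refine (intervalIntegral.abs_integral_le_integral_abs h12.le).trans (le_trans ?_ hB)
    apply intervalIntegral.integral_mono_on h12.le
    · exact (cint _ (by fun_prop) _ _ h1 h12).abs
    · exact cint _ (by fun_prop) _ _ h1 h12
    · intro t ht
      have ht0 : 0 < t := by linarith [ht.1]
      rw [abs_div, abs_mul, abs_of_pos ht0]
      gcongr
      exact mul_le_of_le_one_right (abs_nonneg _) (Real.abs_sin_le_one _)
  have hprod : ∀ t, h t * Real.sin (m * t) = ∑ n ∈ T, (Y n : ℝ) * Real.cos (((n - m : ℤ) : ℝ) * t) := by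
    intro t
    have e1 : ∑ n ∈ T, (Y n : ℝ) * Real.cos (((n + m : ℤ) : ℝ) * t) = - ∑ n ∈ T, (Y n : ℝ) * Real.cos (((n - m : ℤ) : ℝ) * t) := by
      rw [← sum_neg_distrib]
      apply sum_nbij' (fun n => -n) (fun n => -n)
      · exact hneg
      · exact hneg
      · intro n _; ring
      · intro n _; ring
      · intro n _
        rw [hodd, show ((-n - m : ℤ) : ℝ) * t = -(((n + m : ℤ) : ℝ) * t) by push_cast; ring, Real.cos_neg]
        push_cast; ring
    have e2 : h t * Real.sin (m * t) = ∑ n ∈ T, ((1/2) * ((Y n : ℝ) * Real.cos (((n - m : ℤ) : ℝ) * t)) -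
        (1/2) * ((Y n : ℝ) * Real.cos (((n + m : ℤ) : ℝ) * t))) := by
      simp only [hh]
      rw [sum_mul]
      apply sum_congr rfl; intro n _
      rw [show ((n - m : ℤ) : ℝ) * t = n * t - m * t by push_cast; ring, show ((n + m : ℤ) : ℝ) * t = n * t + m * t by push_cast; ring,
        Real.cos_sub, Real.cos_add]
      ring
    rw [e2, sum_sub_distrib, ← mul_sum, ← mul_sum, e1]; ring
  have hD : |(∫ t in t1..t2, h t * Real.sin (m * t) / t) - Real.log (t2 / t1) *
      ((∑ n ∈ T.filter (fun n => |((n - m : ℤ) : ℝ)| ≤ 1 / t2), Y n : ℤ) : ℝ)| ≤ 4 * T.card := by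
    have e : ∀ t, h t * Real.sin (m * t) / t = ∑ n ∈ T, (Y n : ℝ) * (Real.cos (((n - m : ℤ) : ℝ) * t) / t) := by
      intro t; rw [hprod, sum_div]; apply sum_congr rfl; intro n _; ring
    simp_rw [e]
    rw [intervalIntegral.integral_finsetSum]
    · push_cast
      rw [sum_filter, mul_sum, ← sum_sub_distrib]
      refine (abs_sum_le_sum_abs _ _).trans ?_
      calc _ ≤ ∑ n ∈ T, (4:ℝ) := by
            apply sum_le_sum; intro n hn
            rw [intervalIntegral.integral_const_mul]
            have hg := hgap n hn m hm
            have hbn := hbR n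
            push_cast at hg
            by_cases hc : |(n:ℝ) - m| ≤ 1 / t2
            · rw [if_pos hc]
              have h3 := cos_est_near ((n:ℝ) - m) t1 t2 h1 h12 hc
              rw [mul_comm (Real.log _), ← mul_sub, abs_mul]
              calc _ ≤ (2:ℝ) * 2 := by gcongr
                _ = 4 := by norm_num
            · rw [if_neg hc, mul_zero, sub_zero]
              have h3 := cos_est_far ((n:ℝ) - m) t1 t2 h1 h12 (hg.resolve_left hc)
              rw [abs_mul]
              calc _ ≤ (2:ℝ) * 2 := by gcongr
                _ = 4 := by norm_num
        _ = _ := by simp; ring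
    · intro n _
      exact (cint _ (by fun_prop) _ _ h1 h12).const_mul _
  by_contra hne
  set s := ∑ n ∈ T.filter (fun n => |((n - m : ℤ) : ℝ)| ≤ 1 / t2), Y n
  have hs1 : (1:ℝ) ≤ |(s:ℝ)| := by
    have : 1 ≤ |s| := Int.one_le_abs hne
    exact_mod_cast this
  have hlpos : 0 < Real.log (t2 / t1) := lt_of_le_of_lt (by positivity) hl
  have h3 : |Real.log (t2 / t1) * (s:ℝ)| ≤ 12 * T.card := by
    have := abs_sub_abs_le_abs_sub (Real.log (t2 / t1) * (s:ℝ)) (∫ t in t1..t2, h t * Real.sin (m * t) / t)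
    rw [abs_sub_comm] at this
    linarith
  rw [abs_mul, abs_of_pos hlpos] at h3
  nlinarith


lemma closed_sum (T : Finset ℤ) (Y : ℤ → ℤ) (X : ℝ) (hX : 0 ≤ X)
    (htr : ∀ n ∈ T, ∀ m ∈ T, ∀ l ∈ T, |((n - m : ℤ) : ℝ)| ≤ X → |((m - l : ℤ) : ℝ)| ≤ X → |((n - l : ℤ) : ℝ)| ≤ X)
    (hz : ∀ m ∈ T, ∑ n ∈ T.filter (fun n => |((n - m : ℤ) : ℝ)| ≤ X), Y n = 0) :
    ∀ T' : Finset ℤ, T' ⊆ T → (∀ n ∈ T', ∀ m ∈ T, |((n - m : ℤ) : ℝ)| ≤ X → m ∈ T') → ∑ n ∈ T', Y n = 0 := by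
  have hsymm : ∀ n m : ℤ, |((n - m : ℤ) : ℝ)| = |((m - n : ℤ) : ℝ)| := by
    intro n m; push_cast; rw [abs_sub_comm]
  intro T'
  induction T' using Finset.strongInduction with
  | H T' ih =>
  intro hsub hcl
  rcases T'.eq_empty_or_nonempty with h | ⟨m, hm⟩
  · rw [h]; simp
  · set C := T.filter (fun n => |((n - m : ℤ) : ℝ)| ≤ X) with hC
    have hCsub : C ⊆ T' := by
      intro n hn
      rw [hC, mem_filter] at hn
      exact hcl m hm n hn.1 (by rw [hsymm]; exact hn.2)
    have hmC : m ∈ C := by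
      rw [hC, mem_filter]; exact ⟨hsub hm, by simpa using hX⟩
    have h1 := ih (T' \ C) (sdiff_ssubset hCsub ⟨m, hmC⟩) (sdiff_subset.trans hsub) (by
      intro n hn l hl hnl
      rw [mem_sdiff] at hn ⊢
      refine ⟨hcl n hn.1 l hl hnl, ?_⟩
      intro hlC
      apply hn.2
      rw [hC, mem_filter] at hlC ⊢
      exact ⟨hsub hn.1, htr n (hsub hn.1) l hl m (hsub hm) hnl hlC.2⟩)
    rw [← sum_sdiff hCsub, h1, hz m (hsub hm)]; simp

lemma step2b (A : Finset ℕ) (p' : ℕ) (hp' : 0 < p') (T : Finset ℤ)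
    (hT : ∀ n, n ∈ T ↔ uA A (n + p') - uA A (n - p') ≠ 0) (X : ℝ) (hX : 0 ≤ X)
    (htr : ∀ n ∈ T, ∀ m ∈ T, ∀ l ∈ T, |((n - m : ℤ) : ℝ)| ≤ X → |((m - l : ℤ) : ℝ)| ≤ X → |((n - l : ℤ) : ℝ)| ≤ X)
    (hz : ∀ m ∈ T, ∑ n ∈ T.filter (fun n => |((n - m : ℤ) : ℝ)| ≤ X), (uA A (n + p') - uA A (n - p')) = 0) :
    (A.card : ℝ) ≤ T.card * (2 * X + 1) := by
  obtain ⟨H, hH⟩ : ∃ H : ℕ, ∀ a ∈ A, a ≤ H := ⟨A.sup id, fun a ha => le_sup (f := id) ha⟩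
  set p := 2 * p' with hp
  set U : ℤ → ℤ := fun n => ∑ i ∈ range p, uA A (n + i) with hU
  have hUrec : ∀ n, U (n + 1) = U n + (uA A (n + p) - uA A n) := by
    intro n
    have e1 : ∑ i ∈ range (p + 1), uA A (n + i) = U n + uA A (n + p) := by
      rw [sum_range_succ]
    have e2 : ∑ i ∈ range (p + 1), uA A (n + i) = U (n + 1) + uA A n := by
      rw [sum_range_succ']
      simp only [hU]
      push_cast
      congr 1
      · apply sum_congr rfl; intro i _; congr 1; ring
      · simp
    linarith
  have hTlow : ∀ n ∈ T, -(H:ℤ) - p' ≤ n := by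
    intro n hn
    by_contra hcon
    rw [hT] at hn
    apply hn
    rw [uA_zero_of A H hH _ (by omega), uA_zero_of A H hH _ (by omega)]; rfl
  have hUsum : ∀ n : ℤ, U n = ∑ ν ∈ T.filter (fun ν => ν < n + p'), (uA A (ν + p') - uA A (ν - p')) := by
    have hlow : ∀ n : ℤ, n ≤ -(H:ℤ) - p - 1 → U n = ∑ ν ∈ T.filter (fun ν => ν < n + p'), (uA A (ν + p') - uA A (ν - p')) := by
      intro n hn
      have e1 : T.filter (fun ν => ν < n + p') = ∅ := by
        rw [filter_eq_empty_iff]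
        intro ν hν hlt
        have := hTlow ν hν
        omega
      rw [e1, sum_empty]
      simp only [hU]
      apply sum_eq_zero
      intro i hi
      rw [mem_range] at hi
      apply uA_zero_of A H hH
      omega
    intro n
    rcases le_total n (-(H:ℤ) - p - 1) with h | h
    · exact hlow n h
    · induction n, h using Int.le_induction with
      | base => exact hlow _ le_rfl
      | succ n hn ih =>
        rw [hUrec, ih]
        have e1 : ∑ ν ∈ T.filter (fun ν => ν < n + 1 + p'), (uA A (ν + p') - uA A (ν - p')) =
            ∑ ν ∈ T.filter (fun ν => ν < n + p'), (uA A (ν + p') - uA A (ν - p')) +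
            ∑ ν ∈ T.filter (fun ν => ν = n + p'), (uA A (ν + p') - uA A (ν - p')) := by
          rw [← sum_union]
          · congr 1
            ext ν
            simp only [mem_filter, mem_union]
            constructor
            · rintro ⟨h1, h2⟩
              rcases lt_or_eq_of_le (by omega : ν ≤ n + p') with h | h
              · left; exact ⟨h1, h⟩
              · right; exact ⟨h1, h⟩
            · rintro (⟨h1, h2⟩ | ⟨h1, h2⟩)
              · exact ⟨h1, by omega⟩
              · exact ⟨h1, by omega⟩
          · rw [disjoint_left]
            intro ν h1 h2
            rw [mem_filter] at h1 h2
            omega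
        rw [e1]
        congr 1
        rw [filter_eq']
        split_ifs with hmem
        · rw [sum_singleton]
          congr 2 <;> omega
        · rw [hT] at hmem
          push Not at hmem
          rw [sum_empty, ← hmem]
          congr 2 <;> omega
  have hU0 : ∀ n : ℤ, U n ≠ 0 → ∃ ν ∈ T, |((ν - (n + p') : ℤ) : ℝ)| ≤ X := by
    intro n hn
    by_contra hcon
    push Not at hcon
    apply hn
    rw [hUsum]
    apply closed_sum T _ X hX htr hz _ (filter_subset _ _)
    intro ν hν m hm hle
    rw [mem_filter] at hν ⊢
    refine ⟨hm, ?_⟩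
    by_contra hge
    push Not at hge
    have h1 := hcon m hm
    have h2 : (0:ℝ) ≤ ((m - (n + p') : ℤ) : ℝ) := by exact_mod_cast (by omega : 0 ≤ m - (n + p'))
    rw [abs_of_nonneg h2] at h1
    have h3 : ((m - (n + p') : ℤ) : ℝ) ≤ ((m - ν : ℤ) : ℝ) := by exact_mod_cast (by omega : m - (n + p') ≤ m - ν)
    have h4 : ((m - ν : ℤ) : ℝ) ≤ |((ν - m : ℤ) : ℝ)| := by
      have := neg_le_abs ((ν - m : ℤ) : ℝ)
      push_cast at *; linarith
    linarith
  have hUb : ∀ n, U n ≤ 2 * p := by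
    intro n
    simp only [hU]
    calc _ ≤ ∑ i ∈ range p, (2:ℤ) := sum_le_sum fun i _ => (uA_bd A _).2
      _ = _ := by simp; ring
  set L := H + p
  have hsumU : ∑ n ∈ Icc (-(L:ℤ)) L, U n = p * (2 * A.card) := by
    simp only [hU]
    rw [sum_comm]
    have : ∀ i ∈ range p, ∑ n ∈ Icc (-(L:ℤ)) L, uA A (n + i) = 2 * A.card := by
      intro i hi
      rw [mem_range] at hi
      have h := uA_fourier_shift A H L i hH (by omega) 0
      have e0 : ∀ n : ℤ, ee n 0 = 1 := by intro n; simp [ee]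
      simp only [e0, mul_one, one_mul, fA, mul_zero, Real.cos_zero, sum_const, nsmul_eq_mul] at h
      push_cast at h
      exact_mod_cast h
    rw [sum_congr rfl this, sum_const, card_range, nsmul_eq_mul]
  set V := (Icc (-(L:ℤ)) L).filter (fun n => U n ≠ 0) with hV
  have hVsum : ∑ n ∈ Icc (-(L:ℤ)) L, U n ≤ 2 * p * V.card := by
    rw [← sum_filter_ne_zero]
    calc _ ≤ ∑ n ∈ V, (2 * p : ℤ) := sum_le_sum fun n _ => hUb n
      _ = _ := by rw [sum_const, nsmul_eq_mul]; ring
  have hVcard : V.card ≤ T.card * (⌊X⌋₊ + ⌊X⌋₊ + 1) := by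
    have h1 : V.card = (V.image (fun n => n + (p':ℤ))).card := by
      rw [card_image_of_injective]; intro a b h; simpa using h
    rw [h1]
    apply card_le_of_cover
    intro w hw
    obtain ⟨n, hn, rfl⟩ := mem_image.1 hw
    obtain ⟨ν, hν, hle⟩ := hU0 n (mem_filter.1 hn).2
    refine ⟨ν, hν, ?_⟩
    have h2 : (ν - (n + p')).natAbs ≤ ⌊X⌋₊ := by
      apply Nat.le_floor
      rw [Nat.cast_natAbs]; push_cast; push_cast at hle; exact hle
    omega
  have h5 : (2 * p : ℤ) * A.card ≤ 2 * p * V.card := by rw [hsumU] at hVsum; linarith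
  have h6 : (A.card : ℤ) ≤ V.card := le_of_mul_le_mul_left h5 (by omega)
  have h7 : A.card ≤ T.card * (⌊X⌋₊ + ⌊X⌋₊ + 1) := by
    have : A.card ≤ V.card := by exact_mod_cast h6
    omega
  have h8 : (⌊X⌋₊ : ℝ) ≤ X := Nat.floor_le hX
  calc (A.card : ℝ) ≤ ((T.card * (⌊X⌋₊ + ⌊X⌋₊ + 1) : ℕ) : ℝ) := by exact_mod_cast h7
    _ = T.card * (⌊X⌋₊ + ⌊X⌋₊ + 1) := by push_cast; ring
    _ ≤ _ := by gcongr; linarith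

lemma gap_exists (Bd : Finset ℝ) (τ ρ : ℝ) (hτ : 0 < τ) (hρ : 1 < ρ) :
    ∃ i ≤ Bd.card, ∀ b ∈ Bd, ¬ (τ / ρ ^ (i + 1) < b ∧ b < τ / ρ ^ i) := by
  by_contra hcon
  push Not at hcon
  have : ∀ i : ℕ, ∃ b, i ≤ Bd.card → b ∈ Bd ∧ τ / ρ ^ (i + 1) < b ∧ b < τ / ρ ^ i := by
    intro i
    by_cases h : i ≤ Bd.card
    · obtain ⟨b, hb⟩ := hcon i h; exact ⟨b, fun _ => hb⟩
    · exact ⟨0, fun h' => absurd h' h⟩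
  choose b hb using this
  have hlt : ∀ i j, i < j → j ≤ Bd.card → b j < b i := by
    intro i j hij hj
    have h1 := (hb j hj).2.2
    have h2 := (hb i (by omega)).2.1
    have h3 : τ / ρ ^ j ≤ τ / ρ ^ (i + 1) := by
      gcongr
      · exact hρ.le
      · exact hij
    linarith
  obtain ⟨i, hi, j, hj, hne, heq⟩ := exists_ne_map_eq_of_card_lt_of_maps_to (s := range (Bd.card + 1)) (t := Bd) (f := b)
    (by simp) (fun i hi => (hb i (by simp at hi; omega)).1)
  simp only [mem_range] at hi hj
  rcases lt_or_gt_of_ne hne with h | h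
  · have := hlt i j h (by omega); linarith
  · have := hlt j i h (by omega); linarith

lemma sin_sum (A : Finset ℕ) (p' : ℕ) (T : Finset ℤ)
    (hT : ∀ n, n ∈ T ↔ uA A (n + p') - uA A (n - p') ≠ 0) (t : ℝ) :
    ∑ n ∈ T, ((uA A (n + p') - uA A (n - p') : ℤ) : ℝ) * Real.sin (n * t) = -(4 * fA A t * Real.sin (p' * t)) := by
  obtain ⟨H, hH⟩ : ∃ H : ℕ, ∀ a ∈ A, a ≤ H := ⟨A.sup id, fun a ha => le_sup (f := id) ha⟩
  set L := H + 2 * p'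
  have h1 := uA_fourier_shift A H L (2 * p') hH le_rfl t
  have h2 := uA_fourier_shift A H L 0 hH (by omega) t
  -- shifted sum
  have h3 : ∑ n ∈ T, ((uA A (n + p') - uA A (n - p') : ℤ) : ℂ) * ee (-n) t =
      (ee p' t - ee (-p') t) * (2 * (fA A t : ℂ)) := by
    have e1 : ∑ n ∈ T, ((uA A (n + p') - uA A (n - p') : ℤ) : ℂ) * ee (-n) t =
        ∑ n ∈ Icc (-(L:ℤ) + p') (L + p'), ((uA A (n + p') - uA A (n - p') : ℤ) : ℂ) * ee (-n) t := by
      apply sum_subset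
      · intro n hn
        rw [hT] at hn
        by_contra hcon
        apply hn
        rw [mem_Icc] at hcon
        rw [uA_zero_of A H hH _ (by omega), uA_zero_of A H hH _ (by omega)]; rfl
      · intro n _ hn
        rw [hT] at hn; push Not at hn; rw [hn]; simp
    have e2 : ∑ n ∈ Icc (-(L:ℤ) + p') (L + p'), ((uA A (n + p') - uA A (n - p') : ℤ) : ℂ) * ee (-n) t =
        ∑ n ∈ Icc (-(L:ℤ)) L, ee (-p') t * (((uA A (n + (2 * p' : ℕ)) : ℂ)) * ee (-n) t - (uA A (n + (0:ℕ)) : ℂ) * ee (-n) t) := by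
      apply sum_nbij' (fun n : ℤ => n - (p':ℤ)) (fun n : ℤ => n + (p':ℤ))
      · intro n hn; rw [mem_Icc] at *; omega
      · intro n hn; rw [mem_Icc] at *; omega
      · intro n _; ring
      · intro n _; ring
      · intro n _
        rw [show (n - (p':ℤ) + ((2 * p' : ℕ) : ℤ)) = n + p' by push_cast; ring,
          show (n - (p':ℤ) + ((0 : ℕ) : ℤ)) = n - p' by push_cast; ring,
          show -(n - (p':ℤ)) = -n + p' by ring, ee_add]
        have hz : ee (-p') t * ee p' t = 1 := by rw [← ee_add]; simp [ee_zero]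
        push_cast
        linear_combination (-((uA A (n + p') : ℂ) - uA A (n - p')) * ee (-n) t) * hz
    rw [e1, e2, ← mul_sum, sum_sub_distrib, h1, h2]
    have e3 : ee ((2 * p' : ℕ) : ℤ) t = ee p' t * ee p' t := by rw [← ee_add]; congr 1; push_cast; ring
    have hz : ee (-p') t * ee p' t = 1 := by rw [← ee_add]; simp [ee_zero]
    rw [e3, Nat.cast_zero, ee_zero]
    linear_combination (ee p' t * 2 * fA A t) * hz
  have h4 := congrArg Complex.im h3
  rw [Complex.im_sum] at h4
  have e5 : ∀ n ∈ T, (((uA A (n + p') - uA A (n - p') : ℤ) : ℂ) * ee (-n) t).im =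
      -(((uA A (n + p') - uA A (n - p') : ℤ) : ℝ) * Real.sin (n * t)) := by
    intro n _
    have : ((uA A (n + p') - uA A (n - p') : ℤ) : ℂ) = (((uA A (n + p') - uA A (n - p') : ℤ) : ℝ) : ℂ) := by push_cast; rfl
    rw [this, Complex.im_ofReal_mul, ee_im]
    push_cast
    rw [neg_mul, Real.sin_neg]; ring
  rw [sum_congr rfl e5, sum_neg_distrib] at h4
  have e6 : ((ee p' t - ee (-p') t) * (2 * (fA A t : ℂ))).im = 4 * fA A t * Real.sin (p' * t) := by
    have : (2 * (fA A t : ℂ)) = ((2 * fA A t : ℝ) : ℂ) := by push_cast; rfl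
    rw [this, Complex.im_mul_ofReal, Complex.sub_im, ee_im, ee_im]
    push_cast
    rw [neg_mul, Real.sin_neg]; ring
  rw [e6] at h4
  linarith


lemma const_sign (f : ℝ → ℝ) (hf : Continuous f) (t1 t2 : ℝ)
    (hz : ∀ θ ∈ Set.Ioo t1 t2, f θ ≠ 0) :
    (∀ t ∈ Set.Icc t1 t2, 0 ≤ f t) ∨ (∀ t ∈ Set.Icc t1 t2, f t ≤ 0) := by
  by_contra hcon
  push Not at hcon
  obtain ⟨⟨a, ha, hfa⟩, b, hb, hfb⟩ := hcon
  rw [Set.mem_Icc] at ha hb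
  rcases lt_trichotomy a b with hab | hab | hab
  · obtain ⟨c, hc, hc0⟩ := intermediate_value_Ioo hab.le hf.continuousOn (show (0:ℝ) ∈ Set.Ioo (f a) (f b) from ⟨hfa, hfb⟩)
    exact hz c ⟨by linarith [hc.1], by linarith [hc.2]⟩ hc0
  · subst hab; linarith
  · obtain ⟨c, hc, hc0⟩ := intermediate_value_Ioo' hab.le hf.continuousOn (show (0:ℝ) ∈ Set.Ioo (f a) (f b) from ⟨hfa, hfb⟩)
    exact hz c ⟨by linarith [hc.1], by linarith [hc.2]⟩ hc0

lemma step2 (A : Finset ℕ) (R : Finset ℝ)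
    (hR : ∀ θ ∈ Set.Ioo 0 Real.pi, fA A θ = 0 → Real.cos θ ∈ R) (p' : ℕ) (hp' : 0 < p') (S0 : ℕ)
    (hS0 : ∀ S : Finset ℤ, (∀ n ∈ S, uA A (n + (2 * p' : ℕ)) - uA A n ≠ 0) → S.card ≤ S0) :
    (A.card : ℝ) ≤ S0 * (2 * (p' * Real.exp ((12 * S0 + 1) * (R.card + S0 ^ 2))) + 1) := by
  classical
  have hH : ∀ a ∈ A, a ≤ A.sup id := fun a ha => Finset.le_sup (f := id) ha
  set H := A.sup id
  set T : Finset ℤ := (Icc (-((H:ℤ) + p')) (H + p')).filter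
    (fun n => uA A (n + p') - uA A (n - p') ≠ 0) with hTdef
  have hT : ∀ n, n ∈ T ↔ uA A (n + p') - uA A (n - p') ≠ 0 := by
    intro n
    rw [hTdef, mem_filter, mem_Icc]
    refine ⟨fun h => h.2, fun h => ⟨?_, h⟩⟩
    by_contra hc
    apply h
    rw [uA_zero_of A H hH (n + p') (by omega), uA_zero_of A H hH (n - p') (by omega)]
    rfl
  have hTS : T.card ≤ S0 := by
    rw [← card_image_of_injective T (f := fun n : ℤ => n - p') (fun a b h => by simpa using h)]
    apply hS0
    intro n hn
    rw [mem_image] at hn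
    obtain ⟨m, hm, rfl⟩ := hn
    rw [hT] at hm
    have : m - (p':ℤ) + (2 * p' : ℕ) = m + p' := by push_cast; ring
    rw [this]; exact hm
  set Bd : Finset ℝ := R.image Real.arccos ∪
    (T ×ˢ T).image (fun x => 1 / |((x.1 - x.2 : ℤ) : ℝ)|) with hBd
  have hBdc : Bd.card ≤ R.card + T.card ^ 2 := by
    refine (card_union_le _ _).trans (add_le_add card_image_le (card_image_le.trans ?_))
    rw [card_product, sq]
  have hp'r : (1:ℝ) ≤ p' := by exact_mod_cast hp'
  set ρ : ℝ := Real.exp (12 * T.card + 1) with hρdef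
  have hρ : 2 < ρ := by
    have h0 : (0:ℝ) ≤ T.card := Nat.cast_nonneg _
    have := Real.add_one_lt_exp (x := 12 * (T.card:ℝ) + 1) (by positivity)
    linarith
  obtain ⟨i, hi, hgap⟩ := gap_exists Bd (1 / p') ρ (by positivity) (by linarith)
  set t2 : ℝ := 1 / p' / ρ ^ i with ht2
  set t1 : ℝ := 1 / p' / ρ ^ (i + 1) with ht1
  have hρi : 1 ≤ ρ ^ i := one_le_pow₀ (by linarith)
  have ht1p : 0 < t1 := by positivity
  have ht2p : 0 < t2 := by positivity
  have ht21 : t2 = ρ * t1 := by rw [ht1, ht2, pow_succ]; field_simp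
  have h12 : t1 < t2 := by nlinarith
  have ht2le : t2 ≤ 1 / p' := div_le_self (by positivity) hρi
  have ht2one : t2 ≤ 1 := ht2le.trans (by rw [div_le_one (by positivity)]; exact hp'r)
  have hinv : 1 / t1 = ρ * (1 / t2) := by rw [ht21]; field_simp
  have hinv2 : 1 / t2 = p' * ρ ^ i := by rw [ht2]; field_simp
  have hz : ∀ θ ∈ Set.Ioo t1 t2, fA A θ ≠ 0 := by
    intro θ hθ h0
    have hpi := Real.pi_gt_three
    have hm := hR θ ⟨by linarith [hθ.1], by linarith [hθ.2]⟩ h0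
    refine hgap θ ?_ ⟨hθ.1, hθ.2⟩
    rw [hBd, mem_union]
    left
    rw [mem_image]
    exact ⟨_, hm, Real.arccos_cos (by linarith [hθ.1]) (by linarith [hθ.2])⟩
  have hsin : ∀ t ∈ Set.Icc t1 t2, 0 ≤ Real.sin (p' * t) := by
    intro t ht
    have hpi := Real.pi_gt_three
    have h1 : (p':ℝ) * t ≤ 1 := by
      have : t ≤ 1 / p' := ht.2.trans ht2le
      rw [le_div_iff₀ (by positivity)] at this; linarith
    apply Real.sin_nonneg_of_nonneg_of_le_pi
    · have : 0 ≤ t := by linarith [ht.1]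
      positivity
    · linarith
  have hsign : ∃ σ : ℝ, |σ| = 1 ∧ ∀ t ∈ Set.Icc t1 t2,
      0 ≤ σ * ∑ n ∈ T, ((uA A (n + p') - uA A (n - p') : ℤ) : ℝ) * Real.sin (n * t) := by
    rcases const_sign (fA A) (fA_cont A) t1 t2 hz with h | h
    · refine ⟨-1, by norm_num, fun t ht => ?_⟩
      rw [sin_sum A p' T hT t]
      have := mul_nonneg (h t ht) (hsin t ht)
      linarith
    · refine ⟨1, by norm_num, fun t ht => ?_⟩
      rw [sin_sum A p' T hT t]
      have := mul_nonneg (neg_nonneg.2 (h t ht)) (hsin t ht)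
      linarith
  obtain ⟨σ, hσ, hsg⟩ := hsign
  have hgap2 : ∀ n ∈ T, ∀ m ∈ T, |((n - m : ℤ) : ℝ)| ≤ 1 / t2 ∨ 1 / t1 ≤ |((n - m : ℤ) : ℝ)| := by
    intro n hn m hm
    by_contra hc
    push Not at hc
    have hpos : 0 < |((n - m : ℤ) : ℝ)| := lt_trans (by positivity) hc.1
    refine hgap (1 / |((n - m : ℤ) : ℝ)|) ?_ ⟨?_, ?_⟩
    · rw [hBd, mem_union]
      right
      rw [mem_image]
      exact ⟨(n, m), mk_mem_product hn hm, rfl⟩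
    · exact (lt_one_div hpos ht1p).1 hc.2
    · exact (one_div_lt ht2p hpos).1 hc.1
  have hz0 := step2a T (fun n => uA A (n + p') - uA A (n - p')) (by
      intro n
      have e1 : -n + (p':ℤ) = -(n - p') := by ring
      have e2 : -n - (p':ℤ) = -(n + p') := by ring
      simp only [e1, e2, uA_neg]
      ring) (by
      intro n
      have h1 := uA_bd A (n + p')
      have h2 := uA_bd A (n - p')
      rw [abs_le]; constructor <;> linarith) hT t1 t2 ht1p h12 hgap2 σ hσ hsg (by
      have : t2 / t1 = ρ := by rw [ht21]; field_simp
      rw [this, hρdef, Real.log_exp]; linarith)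
  have hfin := step2b A p' hp' T hT (1 / t2) (by positivity) (by
      intro n hn m hm l hl h1 h2
      rcases hgap2 n hn l hl with h | h
      · exact h
      · exfalso
        have h3 : |((n - l : ℤ) : ℝ)| ≤ |((n - m : ℤ) : ℝ)| + |((m - l : ℤ) : ℝ)| := by
          push_cast; exact abs_sub_le _ _ _
        have h4 : 0 < 1 / t2 := by positivity
        rw [hinv] at h
        nlinarith) hz0
  have hTr : (T.card : ℝ) ≤ S0 := by exact_mod_cast hTS
  have hir : (i : ℝ) ≤ R.card + S0 ^ 2 := by
    have h5 : (i : ℝ) ≤ R.card + T.card ^ 2 := by exact_mod_cast hi.trans hBdc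
    have h6 : (T.card : ℝ) ^ 2 ≤ S0 ^ 2 := by gcongr
    linarith
  have hX : 1 / t2 ≤ p' * Real.exp ((12 * S0 + 1) * (R.card + S0 ^ 2)) := by
    rw [hinv2, hρdef, ← Real.exp_nat_mul]
    have h7 : (i:ℝ) * (12 * T.card + 1) ≤ (12 * S0 + 1) * (R.card + S0 ^ 2) := by
      rw [mul_comm]
      gcongr
    gcongr
  refine hfin.trans ?_
  gcongr


lemma pw2 (a b : ℕ) (h : a ≤ b) : (2:ℕ) ^ a ≤ 2 ^ b := Nat.pow_le_pow_right (by norm_num) h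

lemma lt2 (a : ℕ) : a ≤ 2 ^ a := Nat.lt_two_pow_self.le

lemma fact2 (m : ℕ) : m.factorial ≤ 2 ^ (m * m) := by
  calc m.factorial ≤ m ^ m := Nat.factorial_le_pow m
    _ ≤ (2 ^ m) ^ m := Nat.pow_le_pow_left (lt2 m) m
    _ = _ := by rw [← pow_mul]

lemma numS (k : ℕ) (hk : 1 ≤ k) (D J lam Lw p p' E : ℕ) (hE : E = k ^ 2)
    (hp' : p' = (4 * k).factorial) (hp : p = 2 * p')
    (hD : D = (2*k+1)*(2*k+1).factorial*2^(2*k+1)) (hLw : Lw = 2*5^(2*k+1)+2*k+2*p+1)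
    (hJ : J = 12*16^(k+1)*D^2+1) (hlam : lam = 64*J^2*16^k*(Lw+5^(2*k+1))*D^2) :
    lam ^ J * Lw ≤ 2 ^ 2 ^ (191 * E) ∧ p' ≤ 2 ^ 2 ^ (191 * E) ∧ k ≤ 2 ^ 2 ^ (191 * E) := by
  have hkE : k ≤ E := by rw [hE]; nlinarith
  have hE1 : 1 ≤ E := by omega
  have bp' : p' ≤ 2 ^ (16 * E) := by
    rw [hp', hE]; refine (fact2 _).trans (pw2 _ _ ?_); nlinarith
  have bD : D ≤ 2 ^ (15 * E) := by
    calc D ≤ 2 ^ (2*k+1) * 2 ^ ((2*k+1)*(2*k+1)) * 2 ^ (2*k+1) := by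
          rw [hD]; gcongr; exact lt2 _; exact fact2 _
      _ = 2 ^ ((2*k+1) + (2*k+1)*(2*k+1) + (2*k+1)) := by rw [pow_add 2 (_ + _) (2*k+1), pow_add 2 (2*k+1)]
      _ ≤ _ := pw2 _ _ (by rw [hE]; nlinarith)
  have b5 : 5 ^ (2*k+1) ≤ 2 ^ (9 * E) := by
    calc 5 ^ (2*k+1) ≤ (2^3) ^ (2*k+1) := Nat.pow_le_pow_left (by norm_num) _
      _ = 2 ^ (3 * (2*k+1)) := by rw [← pow_mul]
      _ ≤ _ := pw2 _ _ (by omega)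
  have bLw : Lw ≤ 2 ^ (20 * E) := by
    have h1 : 2 ^ (9 * E) ≤ 2 ^ (16 * E) := pw2 _ _ (by omega)
    have h2 : k ≤ 2 ^ (16 * E) := (lt2 k).trans (pw2 _ _ (by omega))
    have h3 : 1 ≤ 2 ^ (16 * E) := Nat.one_le_two_pow
    calc Lw ≤ 2 ^ 4 * 2 ^ (16 * E) := by rw [hLw, hp]; omega
      _ = 2 ^ (4 + 16 * E) := by rw [pow_add]
      _ ≤ _ := pw2 _ _ (by omega)
  have bJ : J ≤ 2 ^ (43 * E) := by
    calc J ≤ 2 ^ 4 * (2 ^ 4) ^ (k+1) * (2 ^ (15 * E)) ^ 2 + 2 ^ (42 * E) := by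
          have h0 : 1 ≤ 2 ^ (42 * E) := Nat.one_le_two_pow
          rw [hJ]; gcongr <;> norm_num
      _ = 2 ^ (4 + 4 * (k+1) + 15 * E * 2) + 2 ^ (42 * E) := by
          rw [← pow_mul, ← pow_mul, pow_add, pow_add]
      _ ≤ 2 ^ (42 * E) + 2 ^ (42 * E) := by gcongr; norm_num; omega
      _ = 2 ^ (42 * E + 1) := by rw [pow_succ]; ring
      _ ≤ _ := pw2 _ _ (by omega)
  have blam : lam ≤ 2 ^ (147 * E) := by
    calc lam ≤ 2 ^ 6 * (2 ^ (43 * E)) ^ 2 * (2 ^ 4) ^ k * (2 ^ (20 * E) + 2 ^ (20 * E)) * (2 ^ (15 * E)) ^ 2 := by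
          rw [hlam]
          have := b5.trans (pw2 (9 * E) (20 * E) (by omega))
          gcongr <;> norm_num
      _ = 2 ^ (6 + 43 * E * 2 + 4 * k + (20 * E + 1) + 15 * E * 2) := by
          rw [← pow_mul, ← pow_mul, ← pow_mul, pow_add, pow_add, pow_add, pow_add, pow_succ 2 (20 * E)]; ring
      _ ≤ _ := pw2 _ _ (by omega)
  refine ⟨?_, ?_, ?_⟩
  · calc lam ^ J * Lw ≤ (2 ^ (147 * E)) ^ (2 ^ (43 * E)) * 2 ^ (20 * E) := by
          have h0 : 1 ≤ 2 ^ (147 * E) := Nat.one_le_two_pow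
          gcongr
      _ = 2 ^ (147 * E * 2 ^ (43 * E) + 20 * E) := by rw [← pow_mul, pow_add]
      _ ≤ _ := by
          apply pw2
          calc 147 * E * 2 ^ (43 * E) + 20 * E ≤ 2 ^ (147 * E) * 2 ^ (43 * E) + 2 ^ (190 * E) := by
                gcongr
                · exact lt2 _
                · exact (lt2 _).trans (pw2 _ _ (by omega))
            _ = 2 ^ (190 * E + 1) := by rw [← pow_add, pow_succ, show 147 * E + 43 * E = 190 * E by ring]; ring
            _ ≤ _ := pw2 _ _ (by omega)
  · exact bp'.trans (pw2 _ _ ((lt2 _).trans (pw2 _ _ (by omega))))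
  · exact (lt2 k).trans (pw2 _ _ ((lt2 _).trans (pw2 _ _ (by omega))))

lemma exp_le_two (x : ℝ) (n : ℕ) (h : x ≤ n) : Real.exp x ≤ 2 ^ (2 * n) := by
  calc Real.exp x ≤ Real.exp n := Real.exp_le_exp.2 h
    _ = Real.exp 1 ^ n := by rw [← Real.exp_nat_mul, mul_one]
    _ ≤ (2 ^ 2) ^ n := by
        have := Real.exp_one_lt_d9
        gcongr; linarith
    _ = _ := by rw [← pow_mul]

lemma numN (N S0 p' r k M : ℕ) (hM : 1 ≤ M) (h1 : S0 ≤ 2 ^ M) (h2 : p' ≤ 2 ^ M) (h3 : k ≤ 2 ^ M) (hr : r ≤ k)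
    (h : (N : ℝ) ≤ S0 * (2 * (p' * Real.exp ((12 * S0 + 1) * (r + S0 ^ 2))) + 1)) :
    N ≤ 2 ^ 2 ^ (16 * M) := by
  obtain ⟨Q, hQ⟩ : ∃ Q, Q = 2 ^ M := ⟨_, rfl⟩
  rw [← hQ] at h1 h2 h3
  have hQ1 : 1 ≤ Q := by rw [hQ]; exact Nat.one_le_two_pow
  have he : ((12 * S0 + 1) * (r + S0 ^ 2) : ℝ) ≤ ((26 * Q ^ 3 : ℕ) : ℝ) := by
    have : (12 * S0 + 1) * (r + S0 ^ 2) ≤ 26 * Q ^ 3 := by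
      calc (12 * S0 + 1) * (r + S0 ^ 2) ≤ (12 * Q + Q) * (Q * Q + Q ^ 2) := by
            gcongr
            nlinarith
        _ = _ := by ring
    exact_mod_cast this
  have hN : N ≤ Q * (2 * (Q * 2 ^ (2 * (26 * Q ^ 3))) + 1) := by
    have : (N : ℝ) ≤ Q * (2 * (Q * 2 ^ (2 * (26 * Q ^ 3))) + 1) := by
      refine h.trans ?_
      have a1 : (S0:ℝ) ≤ Q := by exact_mod_cast h1
      have a2 : (p':ℝ) ≤ Q := by exact_mod_cast h2
      have := exp_le_two _ _ he
      gcongr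
    exact_mod_cast this
  have hQ3 : Q ≤ Q ^ 3 := Nat.le_self_pow (by norm_num) Q
  calc N ≤ 2 ^ Q * (2 * (2 ^ Q * 2 ^ (2 * (26 * Q ^ 3))) + 2 * (2 ^ Q * 2 ^ (2 * (26 * Q ^ 3)))) := by
        refine hN.trans ?_
        have := lt2 Q
        gcongr
        have : 1 ≤ 2 ^ Q * 2 ^ (2 * (26 * Q ^ 3)) := Nat.mul_pos (by positivity) (by positivity)
        omega
    _ = 2 ^ (2 * Q + 2 + 2 * (26 * Q ^ 3)) := by rw [pow_add, pow_add, mul_comm 2 Q, pow_mul]; ring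
    _ ≤ 2 ^ 2 ^ (16 * M) := by
        apply pw2
        calc 2 * Q + 2 + 2 * (26 * Q ^ 3) ≤ 2 ^ 6 * Q ^ 3 := by omega
          _ = 2 ^ (6 + M * 3) := by rw [hQ, pow_add, pow_mul]
          _ ≤ _ := pw2 _ _ (by omega)

lemma main_bound (A : Finset ℕ) (hA : A.Nonempty) : ∃ R : Finset ℝ,
    (∀ r ∈ R, r ∈ Set.Ioo (-1:ℝ) 1 ∧ fA A (Real.arccos r) = 0) ∧
    A.card ≤ 2 ^ 2 ^ 2 ^ (195 * (R.card + 1) ^ 2) := by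
  obtain ⟨R, hR1, hR2, hR3⟩ := step0 A hA
  refine ⟨R, hR1, ?_⟩
  obtain ⟨k, hk⟩ : ∃ k, k = R.card + 1 := ⟨_, rfl⟩
  obtain ⟨q, hq, hq1, hIntg⟩ := hR3 k hk
  obtain ⟨p', hp'⟩ : ∃ p', p' = (4 * k).factorial := ⟨_, rfl⟩
  have hp'0 : 0 < p' := by rw [hp']; exact Nat.factorial_pos _
  obtain ⟨p, hp⟩ : ∃ p, p = 2 * p' := ⟨_, rfl⟩
  obtain ⟨D, hD⟩ : ∃ D, D = (2*k+1)*(2*k+1).factorial*2^(2*k+1) := ⟨_, rfl⟩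
  obtain ⟨Lw, hLw⟩ : ∃ Lw, Lw = 2*5^(2*k+1)+2*k+2*p+1 := ⟨_, rfl⟩
  obtain ⟨J, hJ⟩ : ∃ J, J = 12*16^(k+1)*D^2+1 := ⟨_, rfl⟩
  obtain ⟨lam, hlam⟩ : ∃ lam, lam = 64*J^2*16^k*(Lw+5^(2*k+1))*D^2 := ⟨_, rfl⟩
  have h1 := step1 A k p q hq hq1 hIntg (by rw [hp, hp']; exact Dvd.intro_left _ rfl) (by omega) D J lam Lw hD hLw hJ hlam
  have h2 := step2 A R hR2 p' hp'0 (lam ^ J * Lw) (by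
    intro S hS
    apply h1 S
    rw [hp]; exact hS)
  obtain ⟨E, hE⟩ : ∃ E, E = k ^ 2 := ⟨_, rfl⟩
  obtain ⟨b1, b2, b3⟩ := numS k (by omega) D J lam Lw p p' E hE hp' hp hD hLw hJ hlam
  have hE1 : 1 ≤ E := by rw [hE]; exact Nat.one_le_pow _ _ (by omega)
  have h3 := numN A.card (lam ^ J * Lw) p' R.card k (2 ^ (191 * E)) Nat.one_le_two_pow b1 b2 b3 (by omega) h2
  refine h3.trans (pw2 _ _ (pw2 _ _ ?_))
  rw [← hk, ← hE]
  calc 16 * 2 ^ (191 * E) = 2 ^ (4 + 191 * E) := by rw [pow_add]; norm_num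
    _ ≤ _ := pw2 _ _ (by omega)

theorem stmt18 : ∃ N₀ : ℕ, ∀ A : Finset ℕ, N₀ ≤ A.card →
    ∃ S : Finset ℝ,
      (Real.logb 2 (Real.logb 2 (Real.logb 2 (A.card : ℝ)))) ^ ((1 : ℝ) / 4) ≤ S.card ∧
      ∀ θ ∈ S, θ ∈ Set.Icc 0 (2 * Real.pi) ∧ ∑ a ∈ A, Real.cos (a * θ) = 0 := by
  have hcast : Filter.Tendsto (fun n : ℕ => (n : ℝ)) Filter.atTop Filter.atTop := tendsto_natCast_atTop_atTop
  have hl : Filter.Tendsto (Real.logb 2) Filter.atTop Filter.atTop := Real.tendsto_logb_atTop (by norm_num)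
  have h3 := (hl.comp (hl.comp (hl.comp hcast))).eventually_ge_atTop (1000 ^ 4)
  have h2 := (hl.comp (hl.comp hcast)).eventually_gt_atTop 0
  have h1 := (hl.comp hcast).eventually_gt_atTop 0
  have h0 := Filter.eventually_gt_atTop (0:ℕ)
  obtain ⟨N₀, hN⟩ := Filter.eventually_atTop.1 (h0.and (h1.and (h2.and h3)))
  refine ⟨N₀, fun A hA => ?_⟩
  obtain ⟨g0, g1, g2, g3⟩ := hN A.card hA
  simp only [Function.comp] at g1 g2 g3
  obtain ⟨R, hR, hb⟩ := main_bound A (card_pos.1 g0)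
  classical
  refine ⟨R.image Real.arccos, ?_, ?_⟩
  · rw [card_image_of_injOn]
    · set x := Real.logb 2 (Real.logb 2 (Real.logb 2 (A.card : ℝ))) with hx
      have hN0 : (0:ℝ) < A.card := by exact_mod_cast g0
      have hx1 : x ≤ 195 * ((R.card:ℝ) + 1) ^ 2 := by
        have e : (A.card:ℝ) ≤ 2 ^ ((2:ℝ) ^ ((2:ℝ) ^ (195 * ((R.card:ℝ) + 1) ^ 2))) := by
          have : (A.card:ℝ) ≤ ((2 ^ 2 ^ 2 ^ (195 * (R.card + 1) ^ 2) : ℕ) : ℝ) := Nat.cast_le.2 hb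
          refine this.trans (le_of_eq ?_)
          rw [Nat.cast_pow, ← Real.rpow_natCast, Nat.cast_pow, ← Real.rpow_natCast, Nat.cast_pow, ← Real.rpow_natCast]
          push_cast
          rfl
        rw [hx, Real.logb_le_iff_le_rpow (by norm_num) g2, Real.logb_le_iff_le_rpow (by norm_num) g1,
          Real.logb_le_iff_le_rpow (by norm_num) hN0]
        exact e
      clear hb
      have hx0 : 0 ≤ x := le_trans (by norm_num) g3
      by_contra hc
      push Not at hc
      set y := x ^ ((1:ℝ)/4) with hy
      have hy4 : y ^ 4 = x := by
        rw [hy, ← Real.rpow_natCast, ← Real.rpow_mul hx0]; norm_num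
      have hy0 : 0 ≤ y := by positivity
      have hy1 : 1000 ≤ y := by
        by_contra hlt
        push Not at hlt
        have h7 : y ^ 4 < 1000 ^ 4 := pow_lt_pow_left₀ hlt hy0 (by norm_num)
        rw [hy4] at h7
        linarith
      have hr0 : (0:ℝ) ≤ R.card := Nat.cast_nonneg _
      have : ((R.card:ℝ) + 1) ^ 2 ≤ (2 * y) ^ 2 := by gcongr; linarith
      have h5 : y ^ 4 = y ^ 2 * y ^ 2 := by ring
      have h6 : 1000000 ≤ y ^ 2 := by nlinarith
      nlinarith
    · intro a ha b hb h
      have h1 := (hR a ha).1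
      have h2 := (hR b hb).1
      exact Real.arccos_injOn ⟨h1.1.le, h1.2.le⟩ ⟨h2.1.le, h2.2.le⟩ h
  · intro θ hθ
    rw [mem_image] at hθ
    obtain ⟨r, hr, rfl⟩ := hθ
    have := Real.arccos_nonneg r
    have := Real.arccos_le_pi r
    exact ⟨⟨by linarith, by linarith [Real.pi_pos]⟩, (hR r hr).2⟩
end

section
/- Let $R \subseteq \mathbb{Z}$ be a finite set containing the coefficients of a trigonometric polynomial $f$ (so $\hat{f}(r) \in R$ for all $r$), and suppose there exists a non-zero trigonometric polynomial $P$ of degree at most $k$ with $|\int_0^{2\pi} P f| \geq \varepsilon \int_0^{2\pi} |P f|$ for some $\varepsilon > 0$. If additionally the space of $(2k+1)$-windows of $(\widehat{Sf}(r))_{r \in [N,M]}$ has full dimension $2k+1$ for some integer interval $[N,M]$, where $S$ is any fixed trigonometric polynomial with integer coefficients, then it is not the case that $|\widehat{PSf}(r)| < I \cdot ((2k+1) M(R) G)^{-1}$ for all $r \in [N, M]$, where $I = \frac{1}{2\pi}|\int P f|$, $M(R') \leq 2^{\deg S}M(R)$ bounds the coefficients of $Sf$, and $G = M(R')^{2k}(2k+1)^{k+1/2}$.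 -/
instance : Fact (0 < 2 * Real.pi) := ⟨by positivity⟩

lemma aux_hadamard (n : ℕ) (B : Matrix (Fin n) (Fin n) ℝ) (c : Fin n → ℝ)
    (hc : ∀ i j, |B i j| ≤ c j) : |B.det| ≤ (Real.sqrt n) ^ n * ∏ j, c j := by
  have : Fact (Module.finrank ℝ (EuclideanSpace ℝ (Fin n)) = n) := ⟨by simp⟩
  let b := EuclideanSpace.basisFun (Fin n) ℝ
  let v : Fin n → EuclideanSpace ℝ (Fin n) := fun j => WithLp.toLp 2 (fun i => B i j)
  have h1 := b.toBasis.orientation.abs_volumeForm_apply_le v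
  rw [b.toBasis.orientation.volumeForm_robust' b v] at h1
  have h2 : b.toBasis.det v = B.det := by
    rw [Module.Basis.det_apply]
    rfl
  rw [h2] at h1
  refine h1.trans ?_
  have h3 : (Real.sqrt n) ^ n * ∏ j, c j = ∏ j : Fin n, (Real.sqrt n * c j) := by
    rw [Finset.prod_mul_distrib]; simp
  rw [h3]
  refine Finset.prod_le_prod (fun _ _ => norm_nonneg _) fun j _ => ?_
  have hcj : 0 ≤ c j := (abs_nonneg _).trans (hc j j)
  rw [EuclideanSpace.norm_eq]
  apply Real.sqrt_le_iff.2
  refine ⟨by positivity, ?_⟩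
  rw [mul_pow, Real.sq_sqrt (by positivity)]
  calc ∑ i, ‖v j i‖ ^ 2 ≤ ∑ i : Fin n, (c j) ^ 2 := by
        refine Finset.sum_le_sum fun i _ => ?_
        have : ‖v j i‖ ≤ c j := hc i j
        gcongr
    _ = _ := by simp

lemma aux_cramer_real (n : ℕ) (A : Matrix (Fin n) (Fin n) ℤ) (hA : A.det ≠ 0) (m β : ℝ)
    (hm : ∀ i j, |(A i j : ℝ)| ≤ m) (x b : Fin n → ℝ)
    (hx : (A.map (Int.cast : ℤ → ℝ)).mulVec x = b) (hb : ∀ i, |b i| ≤ β) (i : Fin n) :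
    |x i| ≤ (Real.sqrt n) ^ n * (m ^ (n - 1) * β) := by
  set B := A.map (Int.cast : ℤ → ℝ) with hB
  have hdet : B.det = (A.det : ℝ) := by
    rw [hB]; exact (RingHom.map_det (Int.castRingHom ℝ) A).symm
  have h1 : Matrix.cramer B b = B.det • x := by
    rw [Matrix.cramer_eq_adjugate_mulVec, ← hx, Matrix.mulVec_mulVec, Matrix.adjugate_mul,
      Matrix.smul_mulVec, Matrix.one_mulVec]
  have h2 : (B.updateCol i b).det = B.det * x i := by
    rw [← Matrix.cramer_apply, h1]; rfl
  have h3 := aux_hadamard n (B.updateCol i b) (Function.update (fun _ => m) i β) (by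
    intro p q
    by_cases h : q = i
    · subst h; simpa using hb p
    · simp [h, Function.update_of_ne, hB, hm])
  rw [Finset.prod_update_of_mem (Finset.mem_univ i), h2, abs_mul] at h3
  have h4 : (1 : ℝ) ≤ |B.det| := by
    rw [hdet]; exact_mod_cast Int.one_le_abs hA
  have h5 : ∏ x ∈ Finset.univ \ {i}, m = m ^ (n - 1) := by
    rw [Finset.prod_const]; congr 1
    rw [Finset.card_sdiff]; simp
  rw [h5] at h3
  nlinarith [abs_nonneg (x i)]

lemma aux_cramer (n : ℕ) (A : Matrix (Fin n) (Fin n) ℤ) (hA : A.det ≠ 0) (m β : ℝ)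
    (hm : ∀ i j, |(A i j : ℝ)| ≤ m) (x b : Fin n → ℂ)
    (hx : ∀ i, ∑ j, (A i j : ℂ) * x j = b i) (hb : ∀ i, ‖b i‖ ≤ β) (i : Fin n) :
    ‖x i‖ ≤ (Real.sqrt n) ^ n * (m ^ (n - 1) * β) := by
  obtain ⟨u, hu, hux⟩ : ∃ u : ℂ, ‖u‖ = 1 ∧ u * x i = ‖x i‖ := by
    by_cases h : x i = 0
    · exact ⟨1, by simp, by simp [h]⟩
    · have : (‖x i‖ : ℂ) ≠ 0 := by simpa using h
      refine ⟨‖x i‖ / x i, by simp [h], by field_simp⟩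
  have := aux_cramer_real n A hA m β hm (fun j => (u * x j).re) (fun j => (u * b j).re) (by
    ext p
    simp only [Matrix.mulVec, dotProduct, Matrix.map_apply]
    rw [← hx p, Finset.mul_sum, Complex.re_sum]
    refine Finset.sum_congr rfl fun j _ => ?_
    rw [mul_left_comm, ← Complex.ofReal_intCast, Complex.re_ofReal_mul]) (by
    intro p
    refine (Complex.abs_re_le_norm _).trans ?_
    rw [norm_mul, hu, one_mul]; exact hb p) i
  simp only [hux, Complex.ofReal_re] at this
  rwa [abs_of_nonneg (norm_nonneg _)] at this

lemma aux_shift (g : AddCircle (2 * Real.pi) → ℂ) (j r : ℤ) :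
    fourierCoeff (fun x => fourier j x * g x) r = fourierCoeff g (r - j) := by
  unfold fourierCoeff
  congr 1
  ext t
  rw [smul_eq_mul, smul_eq_mul, ← mul_assoc, ← fourier_add]
  congr 3
  ring

lemma aux_conv (g : AddCircle (2 * Real.pi) → ℂ) (hg : Continuous g) (s : Finset ℤ) (c : ℤ → ℂ)
    (Q : AddCircle (2 * Real.pi) → ℂ) (hQ : ∀ x, Q x = ∑ j ∈ s, c j * fourier j x) (r : ℤ) :
    fourierCoeff (fun x => Q x * g x) r = ∑ j ∈ s, c j * fourierCoeff g (r - j) := by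
  have h : (fun x => Q x * g x) = ∑ j ∈ s, (fun x => c j * (fourier j x * g x)) := by
    ext x
    rw [hQ, Finset.sum_apply, Finset.sum_mul]
    exact Finset.sum_congr rfl fun j _ => mul_assoc _ _ _
  rw [h, fourierCoeff.sum]
  · rw [Finset.sum_apply]
    refine Finset.sum_congr rfl fun j _ => ?_
    rw [fourierCoeff.const_mul, aux_shift]
  · intro j _
    have : Continuous (fun x => c j * (fourier j x * g x)) :=
      continuous_const.mul ((map_continuous (fourier j)).mul hg)
    exact this.integrable_of_hasCompactSupport (HasCompactSupport.of_compactSpace _)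

theorem stmt19 (k : ℕ) (hk : 1 ≤ k) (ε : ℝ) (hε : 0 < ε)
    (R : Finset ℤ)
    (f : AddCircle (2 * Real.pi) → ℂ) (sf : Finset ℤ) (cf : ℤ → ℤ)
    (hf : ∀ x, f x = ∑ r ∈ sf, (cf r : ℂ) * fourier r x)
    (hfR : ∀ r : ℤ, ∃ z ∈ R, fourierCoeff f r = (z : ℂ))
    (P : AddCircle (2 * Real.pi) → ℂ) (cP : ℤ → ℂ)
    (hP : ∀ x, P x = ∑ r ∈ Finset.Icc (-(k : ℤ)) (k : ℤ), cP r * fourier r x)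
    (hPne : P ≠ 0)
    (hcor : ε * ∫ θ in (0 : ℝ)..(2 * Real.pi),
          ‖P (θ : AddCircle (2 * Real.pi)) * f (θ : AddCircle (2 * Real.pi))‖
        ≤ ‖∫ θ in (0 : ℝ)..(2 * Real.pi),
          P (θ : AddCircle (2 * Real.pi)) * f (θ : AddCircle (2 * Real.pi))‖)
    (S : AddCircle (2 * Real.pi) → ℂ) (sS : Finset ℤ) (cS : ℤ → ℤ)
    (hS : ∀ x, S x = ∑ r ∈ sS, (cS r : ℂ) * fourier r x)
    (N M : ℤ) (hNM : N + 2 * (k : ℤ) ≤ M)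
    (hrank : Submodule.span ℂ
        {w : Fin (2 * k + 1) → ℂ | ∃ r : ℤ, N ≤ r ∧ r + 2 * (k : ℤ) ≤ M ∧
          w = fun j : Fin (2 * k + 1) =>
            fourierCoeff (fun x => S x * f x) (r + ((j : ℕ) : ℤ))} = ⊤)
    (MR : ℝ) (hMR : ∀ z ∈ R, |(z : ℝ)| ≤ MR)
    (M' : ℝ) (hM' : ∀ r : ℤ, ‖fourierCoeff (fun x => S x * f x) r‖ ≤ M')
    (I : ℝ)
    (hI : I = (1 / (2 * Real.pi)) * ‖∫ θ in (0 : ℝ)..(2 * Real.pi),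
          P (θ : AddCircle (2 * Real.pi)) * f (θ : AddCircle (2 * Real.pi))‖)
    (G : ℝ) (hG : G = M' ^ (2 * k) * (2 * (k : ℝ) + 1) ^ ((k : ℝ) + 1 / 2)) :
    ¬ ∀ r : ℤ, N ≤ r → r ≤ M →
      ‖fourierCoeff (fun x => P x * (S x * f x)) r‖ < I / ((2 * (k : ℝ) + 1) * MR * G) := by
  intro hall
  have hfc : Continuous f := by
    rw [funext hf]
    exact continuous_finsetSum _ fun j _ => continuous_const.mul (map_continuous (fourier j))
  have hSc : Continuous S := by
    rw [funext hS]
    exact continuous_finsetSum _ fun j _ => continuous_const.mul (map_continuous (fourier j))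
  set g : AddCircle (2 * Real.pi) → ℂ := fun x => S x * f x with hg
  have hgc : Continuous g := hSc.mul hfc
  choose z hzR hz using hfR
  -- integrality
  have hinteg : ∀ r, ∃ a : ℤ, fourierCoeff g r = (a : ℂ) := by
    intro r
    refine ⟨∑ j ∈ sS, cS j * z (r - j), ?_⟩
    rw [hg, aux_conv f hfc sS (fun j => (cS j : ℂ)) S hS r]
    push_cast
    exact Finset.sum_congr rfl fun j _ => by rw [hz]
  choose a ha using hinteg
  -- the independent windows
  obtain ⟨w, hw, -, hwi⟩ := Submodule.exists_fun_fin_finrank_span_eq ℂ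
    {w : Fin (2 * k + 1) → ℂ | ∃ r : ℤ, N ≤ r ∧ r + 2 * (k : ℤ) ≤ M ∧
          w = fun j : Fin (2 * k + 1) => fourierCoeff g (r + ((j : ℕ) : ℤ))}
  have hfin : Module.finrank ℂ (Submodule.span ℂ
    {w : Fin (2 * k + 1) → ℂ | ∃ r : ℤ, N ≤ r ∧ r + 2 * (k : ℤ) ≤ M ∧
          w = fun j : Fin (2 * k + 1) => fourierCoeff g (r + ((j : ℕ) : ℤ))}) = 2 * k + 1 := by
    rw [hrank]; simp
  have hex : ∃ ρ : Fin (2 * k + 1) → ℤ, (∀ i, N ≤ ρ i ∧ ρ i + 2 * (k : ℤ) ≤ M) ∧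
      LinearIndependent ℂ (fun i => (fun j : Fin (2 * k + 1) =>
        fourierCoeff g (ρ i + ((j : ℕ) : ℤ)))) := by
    choose ρ h1 h2 h3 using hw
    refine ⟨fun i => ρ (Fin.cast hfin.symm i), fun i => ⟨h1 _, h2 _⟩, ?_⟩
    have h4 := hwi.comp (Fin.cast hfin.symm) (Fin.cast_injective _)
    have h5 : (w ∘ Fin.cast hfin.symm) = (fun i => (fun j : Fin (2 * k + 1) =>
        fourierCoeff g (ρ (Fin.cast hfin.symm i) + ((j : ℕ) : ℤ)))) := by
      funext i
      exact h3 _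
    rw [h5] at h4
    exact h4
  obtain ⟨ρ, hρ, hli⟩ := hex
  let A : Matrix (Fin (2 * k + 1)) (Fin (2 * k + 1)) ℤ :=
    Matrix.of fun i j => a (ρ i + ((j : ℕ) : ℤ))
  have hA : A.det ≠ 0 := by
    have h1 : IsUnit (A.map (Int.cast : ℤ → ℂ)) := by
      rw [← Matrix.linearIndependent_rows_iff_isUnit]
      have h5 : (A.map (Int.cast : ℤ → ℂ)).row = (fun i => (fun j : Fin (2 * k + 1) =>
          fourierCoeff g (ρ i + ((j : ℕ) : ℤ)))) := by
        ext i j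
        simp [A, ha]
      rw [h5]
      exact hli
    rw [Matrix.isUnit_iff_isUnit_det] at h1
    have h2 : (A.map (Int.cast : ℤ → ℂ)).det = (A.det : ℂ) :=
      (RingHom.map_det (Int.castRingHom ℂ) A).symm
    rw [h2] at h1
    intro h0
    simp [h0] at h1
  have hm : ∀ i j, |(A i j : ℝ)| ≤ M' := by
    intro i j
    have := hM' (ρ i + ((j : ℕ) : ℤ))
    rw [ha, Complex.norm_intCast] at this
    exact this
  have hMp_nonneg : 0 ≤ M' := (norm_nonneg _).trans (hM' 0)
  have hMR0 : 0 ≤ MR := (abs_nonneg _).trans (hMR _ (hzR 0))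
  -- the linear system
  let x : Fin (2 * k + 1) → ℂ := fun j => cP ((k : ℤ) - ((j : ℕ) : ℤ))
  let b : Fin (2 * k + 1) → ℂ := fun i => fourierCoeff (fun x => P x * g x) (ρ i + k)
  have hreidx : ∀ F : ℤ → ℂ, ∑ j ∈ Finset.Icc (-(k : ℤ)) (k : ℤ), F j
      = ∑ j : Fin (2 * k + 1), F ((k : ℤ) - ((j : ℕ) : ℤ)) := by
    intro F
    symm
    refine Finset.sum_bij (fun (j : Fin (2 * k + 1)) _ => (k : ℤ) - ((j : ℕ) : ℤ)) ?_ ?_ ?_ ?_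
    · intro j _
      have := j.2
      rw [Finset.mem_Icc]; constructor <;> omega
    · intro i _ j _ h
      ext; omega
    · intro q hq
      rw [Finset.mem_Icc] at hq
      exact ⟨⟨((k : ℤ) - q).toNat, by omega⟩, Finset.mem_univ _, by simp; omega⟩
    · intro _ _; rfl
  have hx : ∀ i, ∑ j, (A i j : ℂ) * x j = b i := by
    intro i
    simp only [b]
    rw [aux_conv g hgc _ cP P hP, hreidx]
    refine Finset.sum_congr rfl fun j _ => ?_
    simp only [A, x, Matrix.of_apply]
    rw [← ha, mul_comm]
    congr 2
    ring
  obtain ⟨i0, -, hi0⟩ := Finset.exists_max_image Finset.univ (fun i => ‖b i‖)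
    Finset.univ_nonempty
  have hb0 : ‖b i0‖ < I / ((2 * (k : ℝ) + 1) * MR * G) := by
    have := hρ i0
    exact hall _ (by omega) (by omega)
  have hxb := aux_cramer (2 * k + 1) A hA M' ‖b i0‖ hm x b hx
    (fun i => hi0 i (Finset.mem_univ i))
  have hGe : G = (Real.sqrt ((2 * k + 1 : ℕ) : ℝ)) ^ (2 * k + 1) * M' ^ (2 * k) := by
    rw [hG, mul_comm, Real.sqrt_eq_rpow, ← Real.rpow_natCast _ (2 * k + 1),
      ← Real.rpow_mul (by positivity)]
    push_cast
    congr 2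
    ring
  have hG0 : 0 ≤ G := by rw [hGe]; positivity
  have hxG : ∀ i, ‖x i‖ ≤ G * ‖b i0‖ := by
    intro i
    have := hxb i
    rw [Nat.add_sub_cancel] at this
    rw [hGe, mul_assoc]; exact this
  have hIle : I ≤ (2 * (k : ℝ) + 1) * MR * (G * ‖b i0‖) := by
    have h1 : I = ‖fourierCoeff (fun x => P x * f x) 0‖ := by
      rw [hI, fourierCoeff_eq_intervalIntegral _ 0 0]
      simp only [neg_zero, fourier_zero, one_smul, zero_add]
      rw [norm_smul, Real.norm_of_nonneg (by positivity)]
    rw [h1, aux_conv f hfc _ cP P hP, hreidx]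
    refine (norm_sum_le _ _).trans ?_
    calc _ ≤ ∑ j : Fin (2 * k + 1), (G * ‖b i0‖) * MR := by
          refine Finset.sum_le_sum fun j _ => ?_
          rw [norm_mul]
          refine mul_le_mul (hxG j) ?_ (norm_nonneg _) (by positivity)
          rw [hz, Complex.norm_intCast]
          exact hMR _ (hzR _)
      _ = _ := by
          simp; ring
  have hD0 : 0 ≤ (2 * (k : ℝ) + 1) * MR * G := by positivity
  have hD : 0 < (2 * (k : ℝ) + 1) * MR * G := by
    refine lt_of_le_of_ne hD0 fun h => ?_
    rw [← h, div_zero] at hb0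
    exact absurd hb0 (not_lt.2 (norm_nonneg _))
  rw [lt_div_iff₀ hD] at hb0
  linarith
end
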